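/- Let (A, 𝔪) be a two-dimensional excellent normal local domain over an algebraically closed field and let I₁, …, I_r ⊆ A be 𝔪-primary ideals such that each Rees algebra 𝓡(I_i) = A[I_i t] is a Cohen–Macaulay normal domain. Then the multi-Rees algebra 𝓡(I₁,…,I_r) = A[I₁t₁, …, I_r t_r] is a Cohen–Macaulay normal domain. -/

import Mathlib

/-! Auxiliary definitions.

Mathlib does not yet know about excellent rings; the excellence hypothesis of the paper
is used only to guarantee the existence of resolutions and of the normal Hilbert
polynomial, which we hypothesize directly where needed. -/

/-- The length `ℓ_R(M)` of a module, defined as the Krull dimension of its lattice of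
submodules (for modules of finite length this is the usual Jordan–Hölder length). -/
noncomputable def moduleLength (R M : Type*) [CommRing R] [AddCommGroup M] [Module R M] :
    WithBot ℕ∞ :=
  Order.krullDim (Submodule R M)

/-- `x` is integral over the ideal `I`: it satisfies an equation of integral dependence
`x ^ n + c 1 * x ^ (n-1) + ⋯ + c n = 0` with `c i ∈ I ^ i`. -/
def IsIntegralOverIdeal {A : Type*} [CommRing A] (I : Ideal A) (x : A) : Prop :=
  ∃ n : ℕ, 0 < n ∧ ∃ c : ℕ → A, (∀ i, 1 ≤ i → i ≤ n → c i ∈ I ^ i) ∧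
    x ^ n + ∑ i ∈ Finset.Icc 1 n, c i * x ^ (n - i) = 0

/-- The integral closure `J̄` of an ideal `J`: the set of elements integral over `J`
(this set is an ideal; we take the ideal it generates). -/
noncomputable def idealIntegralClosure {A : Type*} [CommRing A] (I : Ideal A) : Ideal A :=
  Ideal.span {x | IsIntegralOverIdeal I x}

/-- An ideal is integrally closed if it contains every element integral over it. -/
def IdealIsIntegrallyClosed {A : Type*} [CommRing A] (I : Ideal A) : Prop :=
  ∀ x, IsIntegralOverIdeal I x → x ∈ I

/-- A Noetherian local ring is Cohen–Macaulay if some regular sequence contained in the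
maximal ideal has length equal to the Krull dimension of the ring. -/
def IsCohenMacaulayLocalRing (R : Type*) [CommRing R] : Prop :=
  IsNoetherianRing R ∧ ∃ h : IsLocalRing R,
    letI := h
    ∃ rs : List R, (∀ x ∈ rs, x ∈ IsLocalRing.maximalIdeal R) ∧
      RingTheory.Sequence.IsRegular R rs ∧ (rs.length : WithBot ℕ∞) = ringKrullDim R

/-- A Noetherian ring is Cohen–Macaulay if all its localizations at primes are
Cohen–Macaulay local rings. -/
def IsCohenMacaulayRing (R : Type*) [CommRing R] : Prop :=
  IsNoetherianRing R ∧ ∀ (P : Ideal R) (hP : P.IsPrime),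
    letI := hP
    IsCohenMacaulayLocalRing (Localization.AtPrime P)

/-- A Cohen–Macaulay normal domain. -/
def IsCMNormalDomain (R : Type*) [CommRing R] : Prop :=
  IsCohenMacaulayRing R ∧ IsDomain R ∧ IsIntegrallyClosed R

/-- The multi-Rees algebra `A[I₁t₁, …, I_r t_r]`: the `A`-subalgebra of the polynomial
ring `A[t₁, …, t_r]` generated by the elements `a·tᵢ` with `a ∈ Iᵢ`. -/
noncomputable def multiReesAlgebra {A : Type*} [CommRing A] {r : ℕ} (I : Fin r → Ideal A) :
    Subalgebra A (MvPolynomial (Fin r) A) :=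
  Algebra.adjoin A (⋃ i, (fun a => MvPolynomial.C a * MvPolynomial.X i) '' ((I i : Set A)))

/-! Over an infinite field, general elements `aᵢ, bᵢ ∈ Iᵢ` are such that over every valuation ring
containing `A` either all the `aᵢ` generate their ideals or all the `bᵢ` do, and `∏ aᵢ`, `∏ bᵢ`
have no common prime but `𝔪`. Since `𝓡(Iᵢ)` is Cohen–Macaulay, `Iᵢ² = (aᵢ, bᵢ) Iᵢ`; since it is
normal, the powers of `Iᵢ` are complete. If `J` is a complete product of powers of the `Iⱼ` and
`b` the corresponding product of the `bⱼ`, then a comparison on the locus where `aᵢ` does not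
generate `Iᵢ` shows that every `f` with `f ∈ Iᵢ J V` for all valuation rings `V` lies in
`aᵢ J + b Iᵢ`. Hence all products of powers of the `Iᵢ` are complete, which gives normality of the
multi-Rees algebra, and `I₁ I₂` together with `a₁ a₂`, `b₁ b₂` satisfies the same conditions as
the `Iᵢ`. The latter gives `𝓡(I₁, I₂, I₃, …) / (a₁ t₁ - b₂ t₂) ≃ 𝓡(I₁ I₂, I₃, …)`, so by induction
on `r` the graded maximal ideal has grade at least `r + 2`, the dimension of the ring; being
Cohen–Macaulay spreads from the graded maximal ideal to all primes. -/

section Depth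

open RingTheory.Sequence IsLocalRing CategoryTheory Abelian Pointwise

universe u v

variable {R : Type u} [CommRing R]

lemma ringKrullDim_quotient_add_one_le {p q : Ideal R} [p.IsPrime] (hpq : p ≤ q) {x : R}
    (hxq : x ∈ q) (hxp : x ∉ p) : ringKrullDim (R ⧸ q) + 1 ≤ ringKrullDim (R ⧸ p) := by
  refine ringKrullDim_succ_le_of_surjective (Ideal.Quotient.factor hpq)
    (Ideal.Quotient.factor_surjective hpq) (r := Ideal.Quotient.mk p x) ?_ ?_
  · rwa [mem_nonZeroDivisors_iff_ne_zero, Ne, Ideal.Quotient.eq_zero_iff_mem]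
  · rwa [Ideal.Quotient.factor_mk, Ideal.Quotient.eq_zero_iff_mem]

lemma height_add_ringKrullDim_quotient_le (p : Ideal R) [hp : p.IsPrime] :
    p.height + ringKrullDim (R ⧸ p) ≤ ringKrullDim R := by
  let P : PrimeSpectrum R := ⟨p, hp⟩
  have : Nonempty (PrimeSpectrum R) := ⟨P⟩
  have hcoheight : ringKrullDim (R ⧸ p) = (Order.coheight P : WithBot ℕ∞) := by
    rw [Order.coheight_eq_krullDim_Ici, ringKrullDim_quotient]
    rfl
  rw [hcoheight, PrimeSpectrum.height_eq_orderHeight P, ringKrullDim,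
    Order.krullDim_eq_iSup_height_add_coheight_of_nonempty]
  exact_mod_cast le_iSup (fun a : PrimeSpectrum R ↦ Order.height a + Order.coheight a) P

lemma annihilator_le_annihilator_quotSMulTop {M : Type*} [AddCommGroup M] [Module R M] (x : R) :
    Module.annihilator R M ≤ Module.annihilator R (QuotSMulTop x M) :=
  (Submodule.mkQ _).annihilator_le_of_surjective (Submodule.mkQ_surjective _)

lemma mem_annihilator_quotSMulTop {M : Type*} [AddCommGroup M] [Module R M] (x : R) :
    x ∈ Module.annihilator R (QuotSMulTop x M) := by
  refine Module.mem_annihilator.2 fun m ↦ ?_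
  obtain ⟨m, rfl⟩ := Submodule.Quotient.mk_surjective _ m
  rw [← Submodule.Quotient.mk_smul, Submodule.Quotient.mk_eq_zero]
  exact Submodule.smul_mem_pointwise_smul _ _ _ trivial

lemma exists_isAssociatedPrime_ge [IsNoetherianRing R] (M : Type*) [AddCommGroup M] [Module R M]
    [Module.Finite R M] {J : Ideal R} (h : ∀ x ∈ J, ¬ IsSMulRegular M x) :
    ∃ q, IsAssociatedPrime q M ∧ J ≤ q := by
  have hsub : (J : Set R) ⊆ ⋃ q ∈ associatedPrimes R M, (q : Set R) := by
    rw [biUnion_associatedPrimes_eq_compl_regular]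
    exact h
  rwa [Ideal.subset_union_prime_finite (associatedPrimes.finite R M) ⊥ ⊥
    fun q hq _ _ ↦ hq.isPrime] at hsub

variable [IsLocalRing R]

/-- `DepthGE R M n` says that the depth of the module `M` over the local ring `R` is at least `n`,
in the form of the existence of an `M`-regular sequence of length `n` in the maximal ideal. -/
def DepthGE (R M : Type*) [CommRing R] [IsLocalRing R] [AddCommGroup M] [Module R M]
    (n : ℕ) : Prop :=
  ∃ rs : List R, rs.length = n ∧ (∀ r ∈ rs, r ∈ maximalIdeal R) ∧ IsRegular M rs

lemma maximalIdeal_smul_top_lt {M : Type*} [AddCommGroup M] [Module R M] [Module.Finite R M]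
    [Nontrivial M] : maximalIdeal R • (⊤ : Submodule R M) < ⊤ :=
  lt_top_iff_ne_top.2 (Submodule.top_ne_ideal_smul_of_le_jacobson_annihilator
    (maximalIdeal_le_jacobson _)).symm

lemma DepthGE.of_linearEquiv {M N : Type*} [AddCommGroup M] [Module R M] [AddCommGroup N]
    [Module R N] {n : ℕ} (h : DepthGE R M n) (e : M ≃ₗ[R] N) : DepthGE R N n := by
  obtain ⟨rs, hlen, hmem, hreg⟩ := h
  exact ⟨rs, hlen, hmem, (e.isRegular_congr rs).1 hreg⟩

variable [IsNoetherianRing R]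

-- Rees' theorem turns depth into vanishing of `Ext`, and the long exact sequence does the rest.
lemma DepthGE.quotSMulTop {M : Type v} [Small.{v} R] [AddCommGroup M] [Module R M]
    [Module.Finite R M] {n : ℕ} (h : DepthGE R M (n + 1)) {x : R} (hx : x ∈ maximalIdeal R)
    (hreg : IsSMulRegular M x) : DepthGE R (QuotSMulTop x M) n := by
  have : Nontrivial M := let ⟨_, _, _, hrs⟩ := h; hrs.nontrivial
  have : Nontrivial (QuotSMulTop x M) := nontrivial_quotSMulTop_of_mem_maximalIdeal _ hx
  have ext_M := ((ModuleCat.exists_isRegular_tfae (maximalIdeal R) (n + 1) (ModuleCat.of R M)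
    maximalIdeal_smul_top_lt).out 3 1).mp (by exact h)
  refine ((ModuleCat.exists_isRegular_tfae (maximalIdeal R) n
    (ModuleCat.of R (QuotSMulTop x M)) maximalIdeal_smul_top_lt).out 1 3).mp fun i hi ↦ ?_
  have zero₁ := AddCommGrpCat.isZero_of_iff_subsingleton.mpr (ext_M i (by omega))
  have zero₂ := AddCommGrpCat.isZero_of_iff_subsingleton.mpr (ext_M (i + 1) (by omega))
  exact AddCommGrpCat.subsingleton_of_isZero <| ShortComplex.Exact.isZero_of_both_zeros
    (Ext.covariant_sequence_exact₃' _
      (IsSMulRegular.smulShortComplex_shortExact (M := ModuleCat.of R M) hreg) i (i + 1) rfl)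
    (zero₁.eq_zero_of_src _) (zero₂.eq_zero_of_tgt _)

lemma DepthGE.quot_ofList_smul_top {M : Type v} [Small.{v} R] [AddCommGroup M] [Module R M]
    [Module.Finite R M] {n : ℕ} (rs : List R) (h : DepthGE R M (rs.length + n))
    (hmem : ∀ r ∈ rs, r ∈ maximalIdeal R) (hreg : IsWeaklyRegular M rs) :
    DepthGE R (M ⧸ (Ideal.ofList rs • ⊤ : Submodule R M)) n := by
  induction rs generalizing M with
  | nil =>
    exact DepthGE.of_linearEquiv (by simpa using h)
      (Submodule.quotEquivOfEqBot _ (by simp)).symm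
  | cons x rs ih =>
    rw [isWeaklyRegular_cons_iff] at hreg
    have h' : DepthGE R M (rs.length + n + 1) := by
      simpa only [List.length_cons, add_right_comm] using h
    rw [List.forall_mem_cons] at hmem
    exact (ih (h'.quotSMulTop hmem.1 hreg.1) hmem.2 hreg.2).of_linearEquiv
      (Submodule.quotOfListConsSMulTopEquivQuotSMulTopInner M x rs).symm

-- By Nakayama the elements killed by `p` do not all lie in `x M`; take a prime associated to one
-- that does not.
lemma exists_le_isAssociatedPrime_quotSMulTop {M : Type*} [AddCommGroup M]
    [Module R M] [Module.Finite R M] {x : R} (hx : x ∈ maximalIdeal R) (hreg : IsSMulRegular M x)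
    {p : Ideal R} (hp : IsAssociatedPrime p M) :
    ∃ q, IsAssociatedPrime q (QuotSMulTop x M) ∧ p ≤ q ∧ x ∈ q := by
  obtain ⟨hprime, m₀, hm₀⟩ := isAssociatedPrime_iff.mp hp
  have hm₀_mem : m₀ ∈ Submodule.torsionBySet R M p := by
    rw [Submodule.mem_torsionBySet_iff]
    rintro ⟨r, hr⟩
    simpa [hm₀, Submodule.mem_colon_singleton] using hr
  have hm₀_ne : m₀ ≠ 0 := by
    rintro rfl
    exact hprime.ne_top (by rw [hm₀, Submodule.colon_singleton_zero])
  obtain ⟨n, hn, hnx⟩ : ∃ n ∈ Submodule.torsionBySet R M p, n ∉ x • (⊤ : Submodule R M) := by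
    by_contra! hcon
    have hle : Submodule.torsionBySet R M p ≤ maximalIdeal R • Submodule.torsionBySet R M p := by
      intro n hn
      obtain ⟨m, -, rfl⟩ := (Submodule.mem_smul_pointwise_iff_exists _ _ _).1 (hcon n hn)
      refine Submodule.smul_mem_smul hx ((Submodule.mem_torsionBySet_iff _ _).2 fun r ↦ ?_)
      rw [Submodule.mem_torsionBySet_iff] at hn
      exact hreg (by simpa only [smul_zero, smul_comm x] using hn r)
    have hbot := Submodule.eq_bot_of_le_smul_of_le_jacobson_bot _ _ (IsNoetherian.noetherian _) hle
      (maximalIdeal_le_jacobson _)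
    exact hm₀_ne (by simpa [hbot] using hm₀_mem)
  have hn_ne : (Submodule.Quotient.mk n : QuotSMulTop x M) ≠ 0 :=
    fun h ↦ hnx ((Submodule.Quotient.mk_eq_zero _).1 h)
  obtain ⟨q, hq, hle⟩ := exists_le_isAssociatedPrime_of_isNoetherianRing R _ hn_ne
  have mem_q : ∀ r : R, r • n ∈ x • (⊤ : Submodule R M) → r ∈ q := fun r hr ↦ hle <| by
    rwa [Submodule.mem_colon_singleton, Submodule.mem_bot, ← Submodule.Quotient.mk_smul,
      Submodule.Quotient.mk_eq_zero]
  rw [Submodule.mem_torsionBySet_iff] at hn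
  refine ⟨q, hq, fun r hr ↦ mem_q r ?_, mem_q x (Submodule.smul_mem_pointwise_smul _ _ _ trivial)⟩
  rw [hn ⟨r, hr⟩]
  exact Submodule.zero_mem _

lemma length_le_ringKrullDim_quotient_of_isAssociatedPrime {M : Type*} [AddCommGroup M]
    [Module R M] [Module.Finite R M] (rs : List R) (hmem : ∀ r ∈ rs, r ∈ maximalIdeal R)
    (hreg : IsWeaklyRegular M rs) {p : Ideal R} (hp : IsAssociatedPrime p M) :
    (rs.length : WithBot ℕ∞) ≤ ringKrullDim (R ⧸ p) := by
  induction rs generalizing M p with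
  | nil =>
    have := hp.isPrime
    simpa using ringKrullDim_nonneg_of_nontrivial
  | cons x rs ih =>
    rw [isWeaklyRegular_cons_iff] at hreg
    rw [List.forall_mem_cons] at hmem
    have := hp.isPrime
    have hxp : x ∉ p := fun hxp ↦ by
      have : x ∈ ⋃ q ∈ associatedPrimes R M, (q : Set R) := Set.mem_biUnion hp hxp
      rw [biUnion_associatedPrimes_eq_compl_regular] at this
      exact this hreg.1
    obtain ⟨q, hq, hpq, hxq⟩ := exists_le_isAssociatedPrime_quotSMulTop hmem.1 hreg.1 hp
    calc ((x :: rs).length : WithBot ℕ∞) = rs.length + 1 := by simp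
      _ ≤ ringKrullDim (R ⧸ q) + 1 := by gcongr; exact ih hmem.2 hreg.2 hq
      _ ≤ ringKrullDim (R ⧸ p) := ringKrullDim_quotient_add_one_le hpq hxq hxp

lemma DepthGE.le_ringKrullDim_quotient {M : Type*} [AddCommGroup M] [Module R M]
    [Module.Finite R M] {n : ℕ} (h : DepthGE R M n) {p : Ideal R} (hp : IsAssociatedPrime p M) :
    (n : WithBot ℕ∞) ≤ ringKrullDim (R ⧸ p) := by
  obtain ⟨rs, rfl, hmem, hreg⟩ := h
  exact length_le_ringKrullDim_quotient_of_isAssociatedPrime rs hmem hreg.toIsWeaklyRegular hp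

lemma ringKrullDim_le_length (rs : List R) (hmem : ∀ r ∈ rs, r ∈ maximalIdeal R)
    (h : ∀ p : Ideal R, p.IsPrime → (∀ r ∈ rs, r ∈ p) → p = maximalIdeal R) :
    ringKrullDim R ≤ rs.length := by
  classical
  have hmin : maximalIdeal R ∈ (Ideal.span (rs.toFinset : Set R)).minimalPrimes := by
    refine ⟨⟨inferInstance, Ideal.span_le.2 fun r hr ↦ hmem r (by simpa using hr)⟩, ?_⟩
    rintro q ⟨hq, hle⟩ _
    rw [h q hq fun r hr ↦ hle (Ideal.subset_span (by simpa using hr))]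
  have hcard : (rs.toFinset.card : ℕ∞) ≤ rs.length := by exact_mod_cast rs.toFinset_card_le
  rw [← maximalIdeal_height_eq_ringKrullDim]
  exact_mod_cast (Ideal.height_le_card_of_mem_minimalPrimes_span_finset hmin).trans hcard

lemma ringKrullDim_quotient_le_length (p : Ideal R) [Nontrivial (R ⧸ p)] (rs : List R)
    (hmem : ∀ r ∈ rs, r ∈ maximalIdeal R)
    (h : ∀ q : Ideal R, q.IsPrime → p ≤ q → (∀ r ∈ rs, r ∈ q) → q = maximalIdeal R) :
    ringKrullDim (R ⧸ p) ≤ rs.length := by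
  have : IsLocalRing (R ⧸ p) := .of_surjective' _ Ideal.Quotient.mk_surjective
  have : IsLocalHom (Ideal.Quotient.mk p) := .of_surjective _ Ideal.Quotient.mk_surjective
  have hmax := maximalIdeal_comap (Ideal.Quotient.mk p)
  rw [← List.length_map (Ideal.Quotient.mk p)]
  refine ringKrullDim_le_length _ (List.forall_mem_map.2 fun r hr ↦ ?_) fun q hq hrs ↦ ?_
  · rw [← Ideal.mem_comap, hmax]
    exact hmem r hr
  · refine Ideal.comap_injective_of_surjective _ Ideal.Quotient.mk_surjective ?_
    rw [hmax]
    refine h _ (q.comap_isPrime _) ?_ fun r hr ↦ hrs _ (List.mem_map_of_mem hr)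
    exact Ideal.mk_ker.ge.trans (Ideal.comap_mono bot_le)

lemma isWeaklyRegular_of_depthGE_length {M : Type v} [Small.{v} R] [AddCommGroup M] [Module R M]
    [Module.Finite R M] (rs : List R) (hmem : ∀ r ∈ rs, r ∈ maximalIdeal R)
    (hdepth : DepthGE R M rs.length)
    (h : ∀ p : Ideal R, p.IsPrime → Module.annihilator R M ≤ p → (∀ r ∈ rs, r ∈ p) →
      p = maximalIdeal R) :
    IsWeaklyRegular M rs := by
  induction rs generalizing M with
  | nil => simp
  | cons x rs ih =>
    rw [List.forall_mem_cons] at hmem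
    have hx : IsSMulRegular M x := by
      by_contra hx
      obtain ⟨p, hp, hxp⟩ : ∃ p ∈ associatedPrimes R M, x ∈ p := by
        have : x ∈ ⋃ p ∈ associatedPrimes R M, (p : Set R) := by
          rwa [biUnion_associatedPrimes_eq_compl_regular]
        simpa using this
      have := hp.isPrime
      have hle := ringKrullDim_quotient_le_length p rs hmem.2 fun q hq hpq hrs ↦
        h q hq ((Submodule.annihilator_top.ge.trans hp.annihilator_le).trans hpq)
          (List.forall_mem_cons.2 ⟨hpq hxp, hrs⟩)
      have : (x :: rs).length ≤ rs.length := by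
        exact_mod_cast (hdepth.le_ringKrullDim_quotient hp).trans hle
      simp at this
    refine .cons hx (ih hmem.2 (hdepth.quotSMulTop hmem.1 hx) fun p hp hann hrs ↦ ?_)
    exact h p hp ((annihilator_le_annihilator_quotSMulTop x).trans hann)
      (List.forall_mem_cons.2 ⟨hann (mem_annihilator_quotSMulTop x), hrs⟩)

lemma DepthGE.exists_isWeaklyRegular_mem {M : Type v} [Small.{v} R] [AddCommGroup M] [Module R M]
    [Module.Finite R M] {n k : ℕ} (hdepth : DepthGE R M n) (p : Ideal R) [p.IsPrime]
    (hk : ringKrullDim (R ⧸ p) + k ≤ n) :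
    ∃ rs : List R, rs.length = k ∧ (∀ r ∈ rs, r ∈ p) ∧ IsWeaklyRegular M rs := by
  induction k generalizing M n with
  | zero => exact ⟨[], by simp⟩
  | succ k ih =>
    have hkn : k + 1 ≤ n := by
      have h0 : (0 : WithBot ℕ∞) ≤ ringKrullDim (R ⧸ p) := ringKrullDim_nonneg_of_nontrivial
      exact_mod_cast (le_add_of_nonneg_left h0).trans hk
    obtain ⟨n, rfl⟩ : ∃ n', n = n' + 1 := ⟨n - 1, by omega⟩
    obtain ⟨x, hx, hreg⟩ : ∃ x ∈ p, IsSMulRegular M x := by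
      by_contra! hcon
      obtain ⟨q, hq, hpq⟩ := exists_isAssociatedPrime_ge M hcon
      have hle : ((n + 1 : ℕ) : WithBot ℕ∞) ≤ ringKrullDim (R ⧸ p) :=
        (hdepth.le_ringKrullDim_quotient hq).trans
          (ringKrullDim_le_of_surjective _ (Ideal.Quotient.factor_surjective hpq))
      have : n + 1 + (k + 1) ≤ n + 1 := by exact_mod_cast (add_le_add_left hle _).trans hk
      omega
    obtain ⟨rs, hlen, hmem, hrs⟩ := ih (hdepth.quotSMulTop (le_maximalIdeal_of_isPrime p hx) hreg)
      (by
        rw [← ENat.WithBot.add_le_add_one_right_iff, add_assoc]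
        exact_mod_cast hk)
    exact ⟨x :: rs, by simp [hlen], by simpa [hx] using hmem, .cons hreg hrs⟩

end Depth

section CohenMacaulay

open RingTheory.Sequence IsLocalRing Polynomial

universe u

lemma IsCohenMacaulayLocalRing.of_isWeaklyRegular {R : Type*} [CommRing R] [IsLocalRing R]
    [IsNoetherianRing R] (rs : List R) (hmem : ∀ r ∈ rs, r ∈ maximalIdeal R)
    (hreg : IsWeaklyRegular R rs) (hdim : ringKrullDim R ≤ rs.length) :
    IsCohenMacaulayLocalRing R := by
  have hreg' : IsRegular R rs := .of_isWeaklyRegular_of_mem_maximalIdeal _ hmem hreg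
  refine ⟨inferInstance, inferInstance, rs, hmem, hreg', le_antisymm ?_ hdim⟩
  have : Nontrivial (R ⧸ Ideal.ofList rs) := by
    refine Ideal.Quotient.nontrivial_iff.2 fun htop ↦ hreg'.2 ?_
    simp [htop]
  rw [← ringKrullDim_add_length_eq_ringKrullDim_of_isRegular rs hreg']
  exact le_add_of_nonneg_left ringKrullDim_nonneg_of_nontrivial

lemma IsCohenMacaulayLocalRing.exists_depthGE {R : Type*} [CommRing R]
    (h : IsCohenMacaulayLocalRing R) :
    ∃ _ : IsLocalRing R, IsNoetherianRing R ∧ ∃ n : ℕ, DepthGE R R n ∧ ringKrullDim R = n := by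
  obtain ⟨hnoeth, hlocal, rs, hmem, hreg, hdim⟩ := h
  exact ⟨hlocal, hnoeth, rs.length, ⟨rs, rfl, hmem, hreg⟩, hdim.symm⟩

lemma isWeaklyRegular_map_ringEquiv_iff {R S : Type*} [CommRing R] [CommRing S] (e : R ≃+* S)
    (rs : List R) : IsWeaklyRegular S (rs.map e) ↔ IsWeaklyRegular R rs := by
  refine (AddEquiv.isWeaklyRegular_congr (e := e.toAddEquiv) ?_).symm
  exact List.forall₂_map_right_iff.2 (List.forall₂_same.2 fun r _ x ↦ map_mul e r x)

lemma IsCohenMacaulayLocalRing.of_ringEquiv {R S : Type*} [CommRing R] [CommRing S] (e : R ≃+* S)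
    (h : IsCohenMacaulayLocalRing R) : IsCohenMacaulayLocalRing S := by
  obtain ⟨_, _, rs, hmem, hreg, hdim⟩ := h
  have : Nontrivial S := e.symm.toEquiv.nontrivial
  have : IsLocalRing S := .of_surjective' (e : R →+* S) e.surjective
  have : IsNoetherianRing S := isNoetherianRing_of_ringEquiv R e
  refine .of_isWeaklyRegular (rs.map e) (List.forall_mem_map.2 fun r hr ↦ ?_)
    ((isWeaklyRegular_map_ringEquiv_iff e rs).2 hreg.1) ?_
  · simpa [mem_maximalIdeal, mem_nonunits_iff] using hmem r hr
  · rw [List.length_map, hdim, ringKrullDim_eq_of_ringEquiv e]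

section Localization

variable {R : Type u} [CommRing R]

lemma isCohenMacaulayLocalRing_localization_iff {S : Type*} [CommRing S] [Algebra R S]
    (M : Submonoid R) [IsLocalization M S] (Q : Ideal S) [Q.IsPrime] {P : Ideal R} [P.IsPrime]
    (hQ : Q.comap (algebraMap R S) = P) :
    IsCohenMacaulayLocalRing (Localization.AtPrime Q) ↔
      IsCohenMacaulayLocalRing (Localization.AtPrime P) := by
  subst hQ
  have := IsLocalization.isLocalization_isLocalization_atPrime_isLocalization M
    (Localization.AtPrime Q) Q
  let e := IsLocalization.algEquiv (Q.comap (algebraMap R S)).primeCompl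
    (Localization.AtPrime Q) (Localization.AtPrime (Q.comap (algebraMap R S)))
  exact ⟨.of_ringEquiv e.toRingEquiv, .of_ringEquiv e.symm.toRingEquiv⟩

lemma IsCohenMacaulayLocalRing.of_isWeaklyRegular_localization [IsNoetherianRing R] (p : Ideal R)
    [p.IsPrime] (S : Type*) [CommRing S] [Algebra R S] [IsLocalization.AtPrime S p]
    (rs : List R) (hmem : ∀ r ∈ rs, r ∈ p) (hreg : IsWeaklyRegular R rs)
    (hheight : (p.height : WithBot ℕ∞) ≤ rs.length) : IsCohenMacaulayLocalRing S := by
  have : IsNoetherianRing S := IsLocalization.isNoetherianRing p.primeCompl S inferInstance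
  have : IsLocalRing S := IsLocalization.AtPrime.isLocalRing S p
  refine .of_isWeaklyRegular (rs.map (algebraMap R S)) (List.forall_mem_map.2 fun r hr ↦ ?_)
    (hreg.of_isLocalization S p.primeCompl) ?_
  · exact (IsLocalization.AtPrime.to_map_mem_maximal_iff S p r).2 (hmem r hr)
  · rwa [IsLocalization.AtPrime.ringKrullDim_eq_height p S, List.length_map]

lemma IsCohenMacaulayLocalRing.of_isLocalization_atPrime (h : IsCohenMacaulayLocalRing R)
    (p : Ideal R) [p.IsPrime] (S : Type*) [CommRing S] [Algebra R S]
    [IsLocalization.AtPrime S p] : IsCohenMacaulayLocalRing S := by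
  obtain ⟨_, _, n, hdepth, hn⟩ := h.exists_depthGE
  obtain ⟨k, hk⟩ := ENat.ne_top_iff_exists.1 (Ideal.height_ne_top (Ideal.IsPrime.ne_top' (I := p)))
  obtain ⟨rs, hlen, hmem, hreg⟩ := hdepth.exists_isWeaklyRegular_mem (k := k) p (by
    have := height_add_ringKrullDim_quotient_le p
    rwa [← hk, hn, add_comm] at this)
  refine .of_isWeaklyRegular_localization p S rs hmem hreg ?_
  rw [← hk, hlen]
  rfl

lemma IsCohenMacaulayLocalRing.localization_of_le {p q : Ideal R} [p.IsPrime] [q.IsPrime]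
    (hpq : p ≤ q) (h : IsCohenMacaulayLocalRing (Localization.AtPrime q)) :
    IsCohenMacaulayLocalRing (Localization.AtPrime p) := by
  have hdisj : Disjoint (q.primeCompl : Set R) p :=
    Set.disjoint_left.2 fun x hxq hxp ↦ hxq (hpq hxp)
  have : (p.map (algebraMap R (Localization.AtPrime q))).IsPrime :=
    IsLocalization.isPrime_of_isPrime_disjoint q.primeCompl _ p ‹_› hdisj
  exact (isCohenMacaulayLocalRing_localization_iff q.primeCompl
    (p.map (algebraMap R (Localization.AtPrime q)))
    (IsLocalization.under_map_of_isPrime_disjoint q.primeCompl _ ‹_› hdisj)).1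
    (h.of_isLocalization_atPrime (p.map (algebraMap R (Localization.AtPrime q))) _)

end Localization

section Ascent

lemma isSMulRegular_quotient_map_C {B : Type*} [CommRing B] (J : Ideal B) {f : B[X]} {n : ℕ}
    (hf : IsUnit (f.coeff n)) :
    IsSMulRegular (B[X] ⧸ (J.map (C : B →+* B[X]) • ⊤ : Submodule B[X] B[X])) f := by
  have mem_map_iff (g : B[X]) : g ∈ J.map C ↔ g.map (Ideal.Quotient.mk J) = 0 := by
    rw [Ideal.mem_map_C_iff, Polynomial.ext_iff]
    simp [Ideal.Quotient.eq_zero_iff_mem]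
  have hreg : f.map (Ideal.Quotient.mk J) ∈ nonZeroDivisors (B ⧸ J)[X] := by
    refine Polynomial.mem_nonZeroDivisors_iff.2 fun a ha ↦ ?_
    have := congrArg (Polynomial.coeff · n) ha
    simp only [coeff_smul, coeff_map, coeff_zero, smul_eq_mul] at this
    exact (hf.map (Ideal.Quotient.mk J)).mul_left_eq_zero.1 this
  rw [isSMulRegular_quotient_iff_mem_of_smul_mem, smul_eq_mul, Ideal.mul_top]
  intro g hg
  rw [mem_map_iff] at hg ⊢
  rw [smul_eq_mul, Polynomial.map_mul, mul_comm] at hg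
  exact (mem_nonZeroDivisors_iff_right.1 hreg) _ hg

lemma IsCohenMacaulayLocalRing.localization_polynomial_of_comap_eq_maximalIdeal {B : Type u}
    [CommRing B] [IsLocalRing B] (h : IsCohenMacaulayLocalRing B) (Q : Ideal B[X]) [Q.IsPrime]
    (hQ : Q.comap C = maximalIdeal B) : IsCohenMacaulayLocalRing (Localization.AtPrime Q) := by
  obtain ⟨_, _, rs, hmem, hreg, hdim⟩ := h
  have hmemC : ∀ r ∈ rs.map (C : B →+* B[X]), r ∈ Q := List.forall_mem_map.2 fun r hr ↦ by
    rw [← Ideal.mem_comap, hQ]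
    exact hmem r hr
  have hregC : IsWeaklyRegular B[X] (rs.map (C : B →+* B[X])) := hreg.1.of_flat (S := B[X])
  by_cases hle : Q ≤ (maximalIdeal B).map C
  · refine .of_isWeaklyRegular_localization Q _ _ hmemC hregC ?_
    rw [le_antisymm hle (Ideal.map_le_iff_le_comap.2 hQ.ge), Polynomial.height_map_C,
      maximalIdeal_height_eq_ringKrullDim, List.length_map, hdim]
  · obtain ⟨f, hfQ, hf⟩ := SetLike.not_le_iff_exists.1 hle
    obtain ⟨n, hn⟩ : ∃ n, IsUnit (f.coeff n) := by
      simpa [Ideal.mem_map_C_iff] using hf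
    refine .of_isWeaklyRegular_localization Q _ (rs.map C ++ [f]) ?_ ?_ ?_
    · simpa only [List.forall_mem_append, List.forall_mem_singleton] using ⟨hmemC, hfQ⟩
    · rw [isWeaklyRegular_append_iff, isWeaklyRegular_singleton_iff, ← Ideal.map_ofList]
      exact ⟨hregC, isSMulRegular_quotient_map_C _ hn⟩
    · refine (Ideal.height_le_ringKrullDim_of_ne_top Ideal.IsPrime.ne_top').trans ?_
      rw [Polynomial.ringKrullDim_of_isNoetherianRing, ← hdim]
      simp

variable {R : Type u} [CommRing R]

lemma IsCohenMacaulayLocalRing.localization_polynomial (Q : Ideal R[X]) [Q.IsPrime]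
    (h : IsCohenMacaulayLocalRing (Localization.AtPrime (Q.comap C))) :
    IsCohenMacaulayLocalRing (Localization.AtPrime Q) := by
  set q := Q.comap C
  let S := (Localization.AtPrime q)[X]
  let M : Submonoid R[X] := q.primeCompl.map C
  let : Algebra R[X] S := Polynomial.algebra R (Localization.AtPrime q)
  have : IsLocalization M S := Polynomial.isLocalization _ _
  have hdisj : Disjoint (M : Set R[X]) Q := by
    refine Set.disjoint_left.2 ?_
    rintro _ ⟨a, ha, rfl⟩ haQ
    exact ha haQ
  have : (Q.map (algebraMap R[X] S)).IsPrime :=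
    IsLocalization.isPrime_of_isPrime_disjoint M _ _ ‹_› hdisj
  rw [← isCohenMacaulayLocalRing_localization_iff M (Q.map (algebraMap R[X] S))
    (IsLocalization.under_map_of_isPrime_disjoint M _ ‹_› hdisj)]
  refine h.localization_polynomial_of_comap_eq_maximalIdeal _ ?_
  refine le_antisymm (le_maximalIdeal_of_isPrime _) ?_
  rw [← Localization.AtPrime.map_eq_maximalIdeal, Ideal.map_le_iff_le_comap]
  intro a ha
  have : algebraMap R[X] S (C a) ∈ Q.map (algebraMap R[X] S) := Ideal.mem_map_of_mem _ ha
  simpa [Polynomial.algebraMap_def, S] using this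

end Ascent

section Descent

lemma isAssociatedPrime_maximalIdeal_quotient_iff {R M : Type*} [CommRing R] [IsLocalRing R]
    [AddCommGroup M] [Module R M] [IsNoetherianRing R] (N : Submodule R M) :
    IsAssociatedPrime (maximalIdeal R) (M ⧸ N) ↔ ∃ z ∉ N, ∀ r ∈ maximalIdeal R, r • z ∈ N := by
  have mem_colon_iff (r : R) (z : M) :
      r ∈ Submodule.colon ⊥ {(Submodule.Quotient.mk z : M ⧸ N)} ↔ r • z ∈ N := by
    rw [Submodule.mem_colon_singleton, ← Submodule.Quotient.mk_smul, Submodule.mem_bot,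
      Submodule.Quotient.mk_eq_zero]
  rw [isAssociatedPrime_iff]
  constructor
  · rintro ⟨-, z, hz⟩
    obtain ⟨z, rfl⟩ := Submodule.Quotient.mk_surjective _ z
    refine ⟨z, fun hzN ↦ ?_, fun r hr ↦ ?_⟩
    · rw [(Submodule.Quotient.mk_eq_zero _).2 hzN, Submodule.colon_singleton_zero] at hz
      exact Ideal.IsPrime.ne_top' hz
    · rwa [hz, mem_colon_iff] at hr
  · rintro ⟨z, hzN, hz⟩
    refine ⟨inferInstance, Submodule.Quotient.mk z,
      le_antisymm (fun r hr ↦ (mem_colon_iff r z).2 (hz r hr)) (le_maximalIdeal fun htop ↦ ?_)⟩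
    have := (Ideal.eq_top_iff_one _).1 htop
    rw [mem_colon_iff, one_smul] at this
    exact hzN this

variable {B : Type*} {E : Type u} [CommRing B] [CommRing E] [IsLocalRing B] [IsNoetherianRing B]
  [IsLocalRing E] [IsNoetherianRing E] [Algebra B E]

lemma isAssociatedPrime_maximalIdeal_quotient_map [Module.FaithfullyFlat B E]
    (hmap : (maximalIdeal B).map (algebraMap B E) = maximalIdeal E) {J : Ideal B}
    (h : IsAssociatedPrime (maximalIdeal B) (B ⧸ J)) :
    IsAssociatedPrime (maximalIdeal E) (E ⧸ J.map (algebraMap B E)) := by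
  rw [isAssociatedPrime_maximalIdeal_quotient_iff] at h ⊢
  obtain ⟨z, hzJ, hz⟩ := h
  refine ⟨algebraMap B E z, fun hmem ↦ hzJ ?_, fun e he ↦ ?_⟩
  · rwa [← Ideal.mem_comap, Ideal.comap_map_eq_self_of_faithfullyFlat] at hmem
  · have : e * algebraMap B E z ∈ (maximalIdeal B * Ideal.span {z}).map (algebraMap B E) := by
      rw [Ideal.map_mul, hmap]
      exact Ideal.mul_mem_mul he (Ideal.mem_map_of_mem _ (Ideal.mem_span_singleton_self z))
    refine Ideal.map_mono (Ideal.mul_le.2 fun r hr y hy ↦ ?_) this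
    obtain ⟨y, rfl⟩ := Ideal.mem_span_singleton'.1 hy
    rw [mul_left_comm]
    exact J.mul_mem_left _ (hz r hr)

-- If `𝔪_B` consisted of zero divisors modulo `rs`, it would be associated to `B ⧸ (rs)`, hence
-- `𝔪_E` to `E ⧸ (rs) E`, which has positive depth.
lemma exists_isSMulRegular_quotient_of_flat [Module.FaithfullyFlat B E]
    (hmap : (maximalIdeal B).map (algebraMap B E) = maximalIdeal E) {n : ℕ}
    (hdepth : DepthGE E E n) (rs : List B) (hlen : rs.length < n)
    (hmem : ∀ r ∈ rs, r ∈ maximalIdeal B) (hreg : IsWeaklyRegular B rs) :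
    ∃ x ∈ maximalIdeal B, IsSMulRegular (B ⧸ (Ideal.ofList rs • ⊤ : Submodule B B)) x := by
  by_contra! hcon
  obtain ⟨q, hq, hle⟩ := exists_isAssociatedPrime_ge _ hcon
  have := hq.isPrime
  obtain rfl := (le_maximalIdeal_of_isPrime q).antisymm hle
  rw [smul_eq_mul, Ideal.mul_top] at hq
  have hass := isAssociatedPrime_maximalIdeal_quotient_map hmap hq
  have hdepth' := DepthGE.quot_ofList_smul_top (n := n - rs.length) (rs.map (algebraMap B E))
    (by rwa [List.length_map, Nat.add_sub_cancel' hlen.le])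
    (List.forall_mem_map.2 fun r hr ↦ hmap ▸ Ideal.mem_map_of_mem _ (hmem r hr)) hreg.of_flat
  rw [smul_eq_mul, Ideal.mul_top, ← Ideal.map_ofList] at hdepth'
  have hle := hdepth'.le_ringKrullDim_quotient hass
  rw [ringKrullDim_eq_zero_of_isField
    ((Ideal.Quotient.maximal_ideal_iff_isField_quotient _).1 inferInstance)] at hle
  have : n - rs.length ≤ 0 := by exact_mod_cast hle
  omega

omit [IsNoetherianRing E] in
lemma IsCohenMacaulayLocalRing.of_flat [Module.Flat B E] (hE : IsCohenMacaulayLocalRing E)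
    (hmap : (maximalIdeal B).map (algebraMap B E) = maximalIdeal E) :
    IsCohenMacaulayLocalRing B := by
  obtain ⟨_, _, n, hdepth, hn⟩ := hE.exists_depthGE
  have : IsLocalHom (algebraMap B E) := ((local_hom_TFAE (algebraMap B E)).out 2 0).1 hmap.le
  have : Module.FaithfullyFlat B E := .of_flat_of_isLocalHom
  have hover : (maximalIdeal E).LiesOver (maximalIdeal B) :=
    ⟨(IsLocalRing.maximalIdeal_comap (algebraMap B E)).symm⟩
  have hdim : ringKrullDim B ≤ n := by
    rw [← hn, ← maximalIdeal_height_eq_ringKrullDim, ← maximalIdeal_height_eq_ringKrullDim,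
      Ideal.height_eq_height_add_of_liesOver_of_hasGoingDown (maximalIdeal B) (maximalIdeal E)]
    exact_mod_cast self_le_add_right _ _
  have exists_regular : ∀ k ≤ n, ∃ rs : List B, rs.length = k ∧ (∀ r ∈ rs, r ∈ maximalIdeal B) ∧
      IsWeaklyRegular B rs := by
    intro k
    induction k with
    | zero => exact fun _ ↦ ⟨[], by simp⟩
    | succ k ih =>
      intro hk
      obtain ⟨rs, rfl, hmem, hreg⟩ := ih (by omega)
      obtain ⟨x, hx, hxreg⟩ := exists_isSMulRegular_quotient_of_flat hmap hdepth rs hk hmem hreg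
      refine ⟨rs ++ [x], by simp, ?_, ?_⟩
      · simpa only [List.forall_mem_append, List.forall_mem_singleton] using ⟨hmem, hx⟩
      · rw [isWeaklyRegular_append_iff, isWeaklyRegular_singleton_iff]
        exact ⟨hreg, hxreg⟩
  obtain ⟨rs, hlen, hmem, hreg⟩ := exists_regular n le_rfl
  exact .of_isWeaklyRegular rs hmem hreg (hlen ▸ hdim)

lemma IsCohenMacaulayLocalRing.of_localization_map {R S : Type*} [CommRing R] [IsNoetherianRing R]
    [CommRing S] [Algebra R S] [Module.Flat R S] (P : Ideal R) [P.IsPrime]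
    [hPS : (P.map (algebraMap R S)).IsPrime] [(P.map (algebraMap R S)).LiesOver P]
    (h : IsCohenMacaulayLocalRing (Localization.AtPrime (P.map (algebraMap R S)))) :
    IsCohenMacaulayLocalRing (Localization.AtPrime P) := by
  let := Localization.AtPrime.algebraOfLiesOver P (P.map (algebraMap R S))
  have : IsNoetherianRing (Localization.AtPrime P) :=
    IsLocalization.isNoetherianRing P.primeCompl _ inferInstance
  refine .of_flat (E := Localization.AtPrime (P.map (algebraMap R S))) h ?_
  rw [← Localization.AtPrime.map_eq_maximalIdeal, ← Localization.AtPrime.map_eq_maximalIdeal,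
    Ideal.map_map, Ideal.map_map, ← IsScalarTower.algebraMap_eq, ← IsScalarTower.algebraMap_eq]

end Descent

end CohenMacaulay

section Graded

open Polynomial
open LaurentPolynomial hiding C eval₂

universe u

variable {R : Type u} [CommRing R]

/-- The coaction `f ↦ ∑ fₙ Xⁿ` of an `ℕ`-grading on `R`, where `fₙ` is the component of degree `n`
of `f`: evaluating at `X = 1` recovers `f`, and each component is homogeneous. This encodes the
grading without a family of submodules. -/
structure IsGradingCoaction (ρ : R →+* R[X]) : Prop where
  eval_one : ∀ f, (ρ f).eval 1 = f
  apply_coeff : ∀ f n, ρ ((ρ f).coeff n) = monomial n ((ρ f).coeff n)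

lemma laurentPolynomial_ringHom_ext {S : Type*} [CommRing S] {f g : R[T;T⁻¹] →+* S}
    (hC : ∀ r, f (LaurentPolynomial.C r) = g (LaurentPolynomial.C r)) (hT : f (T 1) = g (T 1)) :
    f = g :=
  IsLocalization.ringHom_ext (Submonoid.powers (X : R[X])) <| Polynomial.ringHom_ext
    (fun r ↦ by simpa [algebraMap_eq_toLaurent] using hC r)
    (by simpa [algebraMap_eq_toLaurent] using hT)

/-- The endomorphism of `R[T;T⁻¹]` fixing `T` and sending `f ∈ R` to `∑ fₙ Tᵏⁿ`, for `ρ` the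
coaction `f ↦ ∑ fₙ Xⁿ` of a grading. It is the action of the unit `Tᵏ` through the grading. -/
noncomputable def laurentTwist (ρ : R →+* R[X]) (k : ℤ) : R[T;T⁻¹] →+* R[T;T⁻¹] :=
  LaurentPolynomial.eval₂ ((eval₂RingHom LaurentPolynomial.C (T k)).comp ρ) (isUnit_T 1).unit

lemma laurentTwist_C (ρ : R →+* R[X]) (k : ℤ) (f : R) :
    laurentTwist ρ k (LaurentPolynomial.C f) = (ρ f).eval₂ LaurentPolynomial.C (T k) := by
  simp [laurentTwist]

lemma laurentTwist_T (ρ : R →+* R[X]) (k n : ℤ) : laurentTwist ρ k (T n) = T n := by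
  have unit_zpow (n : ℤ) : (((isUnit_T 1).unit ^ n : R[T;T⁻¹]ˣ) : R[T;T⁻¹]) = T n := by
    induction n with
    | zero => simp
    | succ i ih => rw [zpow_add_one, Units.val_mul, ih, IsUnit.unit_spec, T_add]
    | pred i ih => rw [zpow_sub_one, Units.val_mul, ih, Units.mul_inv_eq_iff_eq_mul,
        IsUnit.unit_spec, ← T_add, sub_add_cancel]
  rw [laurentTwist, LaurentPolynomial.eval₂_T, unit_zpow]

namespace IsGradingCoaction

variable {ρ : R →+* R[X]} (hρ : IsGradingCoaction ρ)

include hρ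

lemma laurentTwist_zero : laurentTwist ρ 0 = .id _ := by
  refine laurentPolynomial_ringHom_ext (fun f ↦ ?_) (by simp [laurentTwist_T])
  rw [laurentTwist_C, T_zero, RingHom.id_apply, eval₂_at_one, hρ.eval_one]

lemma laurentTwist_comp (k l : ℤ) :
    (laurentTwist ρ k).comp (laurentTwist ρ l) = laurentTwist ρ (k + l) := by
  refine laurentPolynomial_ringHom_ext (fun f ↦ ?_) (by simp [laurentTwist_T])
  rw [RingHom.comp_apply, laurentTwist_C, laurentTwist_C, eval₂_eq_sum_range, eval₂_eq_sum_range]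
  simp only [map_sum, map_mul, map_pow, laurentTwist_C, hρ.apply_coeff, laurentTwist_T]
  refine Finset.sum_congr rfl fun n _ ↦ ?_
  rw [eval₂_monomial, mul_assoc, ← mul_pow, ← T_add]

/-- `laurentTwist ρ 1` as an automorphism of `R[T;T⁻¹]`. -/
noncomputable def laurentTwistEquiv : R[T;T⁻¹] ≃+* R[T;T⁻¹] :=
  .ofRingHom (laurentTwist ρ 1) (laurentTwist ρ (-1))
    (by rw [hρ.laurentTwist_comp, add_neg_cancel, hρ.laurentTwist_zero])
    (by rw [hρ.laurentTwist_comp, neg_add_cancel, hρ.laurentTwist_zero])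

lemma laurentTwistEquiv_C (f : R) :
    hρ.laurentTwistEquiv (LaurentPolynomial.C f) = toLaurent (ρ f) := by
  change laurentTwist ρ 1 (LaurentPolynomial.C f) = _
  rw [laurentTwist_C, eval₂_eq_sum_range]
  conv_rhs => rw [(ρ f).as_sum_range_C_mul_X_pow]
  simp

-- `(P.map C).comap ρ` is the largest homogeneous ideal inside `P`. It is the contraction to `R` of
-- the pullback of `P R[T;T⁻¹]` under the twist, so ascent and descent along `R → R[T;T⁻¹]` apply.
theorem isCohenMacaulayLocalRing_localization [IsNoetherianRing R] (P : Ideal R) [P.IsPrime]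
    (h : IsCohenMacaulayLocalRing
      (Localization.AtPrime ((P.map (C : R →+* R[X])).comap ρ))) :
    IsCohenMacaulayLocalRing (Localization.AtPrime P) := by
  let PX := P.map (C : R →+* R[X])
  have hdisj : Disjoint (Submonoid.powers (X : R[X]) : Set R[X]) PX := by
    rw [Set.disjoint_left]
    rintro _ ⟨n, rfl⟩ hX
    have := Ideal.mem_map_C_iff.1 hX n
    simp only [coeff_X_pow_self] at this
    exact (Ideal.ne_top_iff_one P).1 Ideal.IsPrime.ne_top' this
  let PL := PX.map (algebraMap R[X] R[T;T⁻¹])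
  have : PL.IsPrime := IsLocalization.isPrime_of_isPrime_disjoint _ _ _ inferInstance hdisj
  have hPL : PL.comap (algebraMap R[X] R[T;T⁻¹]) = PX :=
    IsLocalization.under_map_of_isPrime_disjoint (.powers X) _ inferInstance hdisj
  let QL := PL.comap (hρ.laurentTwistEquiv : R[T;T⁻¹] →+* R[T;T⁻¹])
  let Q := QL.comap (algebraMap R[X] R[T;T⁻¹])
  have hQ : Q.comap C = PX.comap ρ := by
    ext f
    rw [← hPL]
    simp only [Q, QL, Ideal.mem_comap, algebraMap_eq_toLaurent, toLaurent_C, RingHom.coe_coe,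
      hρ.laurentTwistEquiv_C]
  have hCM_Q : IsCohenMacaulayLocalRing (Localization.AtPrime Q) := by
    refine .localization_polynomial Q ?_
    convert h
  have hCM_QL : IsCohenMacaulayLocalRing (Localization.AtPrime QL) :=
    (isCohenMacaulayLocalRing_localization_iff (.powers X) QL rfl).2 hCM_Q
  have hCM_PL : IsCohenMacaulayLocalRing (Localization.AtPrime PL) :=
    hCM_QL.of_ringEquiv (Localization.localRingEquiv QL PL hρ.laurentTwistEquiv rfl)
  have : PX.LiesOver P := ⟨by
    ext a
    rw [Ideal.under, Polynomial.algebraMap_eq, Ideal.mem_comap, Ideal.mem_map_C_iff]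
    exact ⟨fun ha n ↦ by rw [coeff_C]; split_ifs <;> simp [ha], fun ha ↦ by simpa using ha 0⟩⟩
  exact .of_localization_map (S := R[X]) (hPS := inferInstanceAs PX.IsPrime) P
    ((isCohenMacaulayLocalRing_localization_iff (.powers X) PL hPL).1 hCM_PL)

end IsGradingCoaction

end Graded

section MultiRees

open MvPolynomial IsLocalRing

universe u

variable {A : Type u} [CommRing A] {r : ℕ}

lemma coeff_mem_of_mem_multiReesAlgebra {I : Fin r → Ideal A} {f : MvPolynomial (Fin r) A}
    (hf : f ∈ multiReesAlgebra I) (n : Fin r →₀ ℕ) : coeff n f ∈ ∏ i, I i ^ n i := by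
  classical
  induction hf using Algebra.adjoin_induction generalizing n with
  | mem x hx =>
    obtain ⟨i, a, ha, rfl⟩ := Set.mem_iUnion.1 hx
    change coeff n (C a * X i) ∈ _
    rw [C_mul_X_eq_monomial, coeff_monomial]
    split_ifs with h
    · subst h
      rw [Finset.prod_eq_single i (fun j _ hj ↦ by simp [hj.symm]) (by simp)]
      simpa using ha
    · exact zero_mem _
  | algebraMap a =>
    rw [algebraMap_eq, coeff_C]
    split_ifs with h
    · subst h
      have : ∏ i, I i ^ (0 : Fin r →₀ ℕ) i = ⊤ := by simp [← Ideal.one_eq_top]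
      exact this ▸ Submodule.mem_top
    · exact zero_mem _
  | add x y _ _ hx hy => exact coeff_add n x y ▸ add_mem (hx n) (hy n)
  | mul x y _ _ hx hy =>
    rw [coeff_mul]
    refine Ideal.sum_mem _ fun p hp ↦ ?_
    rw [← Finset.HasAntidiagonal.mem_antidiagonal.1 hp]
    simp only [Finsupp.add_apply, pow_add, Finset.prod_mul_distrib]
    exact Ideal.mul_mem_mul (hx _) (hy _)

lemma C_mul_X_mem_multiReesAlgebra {I : Fin r → Ideal A} {i : Fin r} {a : A} (ha : a ∈ I i) :
    C a * X i ∈ multiReesAlgebra I :=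
  Algebra.subset_adjoin (Set.mem_iUnion.2 ⟨i, a, ha, rfl⟩)

lemma monomial_mem_multiReesAlgebra {I : Fin r → Ideal A} {n : Fin r →₀ ℕ} {a : A}
    (ha : a ∈ ∏ i, I i ^ n i) : monomial n a ∈ multiReesAlgebra I := by
  classical
  let N (n : Fin r →₀ ℕ) : Ideal A :=
    (Subalgebra.toSubmodule (multiReesAlgebra I)).comap (monomial n)
  have mul_le (n m) : N n * N m ≤ N (n + m) := Ideal.mul_le.2 fun a ha b hb ↦ by
    have : monomial n a * monomial m b ∈ multiReesAlgebra I := mul_mem ha hb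
    rwa [monomial_mul] at this
  have top_le : 1 ≤ N 0 := fun a _ ↦ (multiReesAlgebra I).algebraMap_mem a
  have pow_le (i k) : I i ^ k ≤ N (Finsupp.single i k) := by
    induction k with
    | zero => simpa using top_le
    | succ k ih =>
      rw [pow_succ, Finsupp.single_add]
      refine (Ideal.mul_mono ih fun a ha ↦ ?_).trans (mul_le _ _)
      change monomial _ a ∈ multiReesAlgebra I
      rw [← C_mul_X_eq_monomial]
      exact C_mul_X_mem_multiReesAlgebra ha
  have prod_le (s : Finset (Fin r)) :
      ∏ i ∈ s, I i ^ n i ≤ N (∑ i ∈ s, Finsupp.single i (n i)) := by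
    induction s using Finset.induction_on with
    | empty => simpa using top_le
    | insert i s hi ih =>
      rw [Finset.prod_insert hi, Finset.sum_insert hi]
      exact (Ideal.mul_mono (pow_le _ _) ih).trans (mul_le _ _)
  have := prod_le Finset.univ ha
  rwa [Finsupp.univ_sum_single] at this

lemma mem_multiReesAlgebra_iff {I : Fin r → Ideal A} {f : MvPolynomial (Fin r) A} :
    f ∈ multiReesAlgebra I ↔ ∀ n, coeff n f ∈ ∏ i, I i ^ n i := by
  refine ⟨coeff_mem_of_mem_multiReesAlgebra, fun h ↦ ?_⟩
  rw [f.as_sum]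
  exact sum_mem fun n _ ↦ monomial_mem_multiReesAlgebra (h n)

namespace multiReesAlgebra

variable (I : Fin r → Ideal A)

lemma fg [IsNoetherianRing A] : (multiReesAlgebra I).FG := by
  let φ (i : Fin r) : A →ₗ[A] MvPolynomial (Fin r) A :=
    LinearMap.toSpanSingleton A _ (X i)
  obtain ⟨s, hs⟩ : (⨆ i, Submodule.map (φ i) (I i)).FG :=
    Submodule.fg_iSup _ fun i ↦ (IsNoetherian.noetherian (I i)).map (φ i)
  refine ⟨s, ?_⟩
  rw [← Algebra.adjoin_span, hs, Submodule.iSup_eq_span, Algebra.adjoin_span]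
  simp [multiReesAlgebra, φ, Submodule.map_coe, LinearMap.toSpanSingleton_apply, smul_eq_C_mul]

instance [IsNoetherianRing A] : IsNoetherianRing (multiReesAlgebra I) :=
  isNoetherianRing_of_fg (fg I)

/-- The projection of the multi-Rees algebra onto its component of multidegree zero. -/
noncomputable def augmentation : multiReesAlgebra I →+* A :=
  constantCoeff.comp (multiReesAlgebra I).val.toRingHom

lemma augmentation_apply (f : multiReesAlgebra I) :
    augmentation I f = constantCoeff (f : MvPolynomial (Fin r) A) := rfl

/-- The graded maximal ideal of the multi-Rees algebra over a local ring. -/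
noncomputable def irrelevantIdeal [IsLocalRing A] : Ideal (multiReesAlgebra I) :=
  (maximalIdeal A).comap (augmentation I)

instance [IsLocalRing A] : (irrelevantIdeal I).IsPrime := by
  unfold irrelevantIdeal; infer_instance

lemma mem_irrelevantIdeal [IsLocalRing A] {f : multiReesAlgebra I} :
    f ∈ irrelevantIdeal I ↔
      constantCoeff (f : MvPolynomial (Fin r) A) ∈ maximalIdeal A := Iff.rfl

end multiReesAlgebra

/-- The homogenization `f ↦ ∑ fₙ Xⁿ`, the coaction of the grading of `A[t₁, …, t_r]` by total
degree. -/
noncomputable def mvHomogenize (r : ℕ) (A : Type u) [CommRing A] :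
    MvPolynomial (Fin r) A →ₐ[A] Polynomial (MvPolynomial (Fin r) A) :=
  aeval fun i ↦ Polynomial.C (X i) * Polynomial.X

lemma mvHomogenize_monomial (d : Fin r →₀ ℕ) (a : A) :
    mvHomogenize r A (monomial d a) = Polynomial.monomial d.degree (monomial d a) := by
  rw [mvHomogenize, aeval_monomial, Finsupp.prod]
  simp only [mul_pow, Finset.prod_mul_distrib]
  rw [Finset.prod_pow_eq_pow_sum, ← Polynomial.C_mul_X_pow_eq_monomial, monomial_eq,
    map_mul, Finsupp.prod, map_prod, ← mul_assoc]
  congr 2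
  simp

lemma coeff_mvHomogenize (f : MvPolynomial (Fin r) A) (n : ℕ) :
    (mvHomogenize r A f).coeff n = homogeneousComponent n f := by
  classical
  have coeff_monomial_eq (d : Fin r →₀ ℕ) (a : A) :
      (mvHomogenize r A (monomial d a)).coeff n = homogeneousComponent n (monomial d a) := by
    rw [mvHomogenize_monomial, Polynomial.coeff_monomial, homogeneousComponent_of_mem
      ((mem_homogeneousSubmodule _ _).2 (isHomogeneous_monomial a rfl))]
    simp only [eq_comm]
  rw [f.as_sum]
  simp only [map_sum, Polynomial.finsetSum_coeff, coeff_monomial_eq]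

lemma eval_one_mvHomogenize (f : MvPolynomial (Fin r) A) : (mvHomogenize r A f).eval 1 = f := by
  have : (Polynomial.evalRingHom 1).comp (mvHomogenize r A).toRingHom = .id _ :=
    ringHom_ext (fun a ↦ by simp [mvHomogenize]) (fun i ↦ by simp [mvHomogenize])
  exact congr($this f)

namespace multiReesAlgebra

variable (I : Fin r → Ideal A)

lemma homogeneousComponent_mem {f : MvPolynomial (Fin r) A} (hf : f ∈ multiReesAlgebra I) (n : ℕ) :
    homogeneousComponent n f ∈ multiReesAlgebra I := by
  rw [mem_multiReesAlgebra_iff] at hf ⊢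
  intro d
  rw [coeff_homogeneousComponent]
  split_ifs
  · exact hf d
  · exact zero_mem _

lemma exists_isGradingCoaction : ∃ ρ : multiReesAlgebra I →+* Polynomial (multiReesAlgebra I),
    IsGradingCoaction ρ ∧ ∀ f n, (((ρ f).coeff n : multiReesAlgebra I) : MvPolynomial (Fin r) A) =
      homogeneousComponent n (f : MvPolynomial (Fin r) A) := by
  let ι : multiReesAlgebra I →+* MvPolynomial (Fin r) A := (multiReesAlgebra I).val.toRingHom
  have hι : Function.Injective (Polynomial.mapRingHom ι) :=
    Polynomial.map_injective _ Subtype.val_injective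
  have mem_range (f : multiReesAlgebra I) :
      mvHomogenize r A f ∈ (Polynomial.mapRingHom ι).rangeS := by
    change _ ∈ Polynomial.lifts ι
    rw [Polynomial.lifts_iff_coeff_lifts]
    intro n
    rw [coeff_mvHomogenize]
    exact ⟨⟨_, homogeneousComponent_mem I f.2 n⟩, rfl⟩
  let e : Polynomial (multiReesAlgebra I) ≃+* (Polynomial.mapRingHom ι).rangeS :=
    .ofBijective (Polynomial.mapRingHom ι).rangeSRestrict
      ⟨fun x y h ↦ hι congr(($h).1), RingHom.rangeSRestrict_surjective _⟩
  let ρ := e.symm.toRingHom.comp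
    (((mvHomogenize r A).toRingHom.comp ι).codRestrict (Polynomial.mapRingHom ι).rangeS mem_range)
  have map_ρ (f : multiReesAlgebra I) : (ρ f).map ι = mvHomogenize r A f :=
    congrArg Subtype.val (e.apply_symm_apply _)
  have coeff_ρ (f : multiReesAlgebra I) (n : ℕ) : (((ρ f).coeff n : multiReesAlgebra I) :
      MvPolynomial (Fin r) A) = homogeneousComponent n (f : MvPolynomial (Fin r) A) := by
    rw [← coeff_mvHomogenize, ← map_ρ, Polynomial.coeff_map]
    rfl
  refine ⟨ρ, ⟨fun f ↦ Subtype.ext ?_, fun f n ↦ hι ?_⟩, coeff_ρ⟩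
  · rw [← eval_one_mvHomogenize (f : MvPolynomial (Fin r) A), ← map_ρ, Polynomial.eval_one_map]
    rfl
  · ext1 m
    rw [Polynomial.coe_mapRingHom, map_ρ, coeff_mvHomogenize, Polynomial.map_monomial,
      Polynomial.coeff_monomial, coeff_ρ, homogeneousComponent_of_mem
        (MvPolynomial.homogeneousComponent_mem n (f : MvPolynomial (Fin r) A))]
    change _ = if n = m then (((ρ f).coeff n : multiReesAlgebra I) : MvPolynomial (Fin r) A) else 0
    simp [coeff_ρ, eq_comm]

theorem isCohenMacaulayLocalRing_localization [IsNoetherianRing A] [IsLocalRing A]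
    (h : IsCohenMacaulayLocalRing (Localization.AtPrime (irrelevantIdeal I)))
    (P : Ideal (multiReesAlgebra I)) [P.IsPrime] :
    IsCohenMacaulayLocalRing (Localization.AtPrime P) := by
  obtain ⟨ρ, hρ, coeff_ρ⟩ := exists_isGradingCoaction I
  refine hρ.isCohenMacaulayLocalRing_localization P (h.localization_of_le fun f hf ↦ ?_)
  rw [mem_irrelevantIdeal]
  by_contra hunit
  rw [notMem_maximalIdeal] at hunit
  have hcoeff : (ρ f).coeff 0 = algebraMap A (multiReesAlgebra I)
      (constantCoeff (f : MvPolynomial (Fin r) A)) := by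
    apply Subtype.ext
    rw [coeff_ρ, homogeneousComponent_zero]
    rfl
  have hmem : (ρ f).coeff 0 ∈ P := Ideal.mem_map_C_iff.1 hf 0
  exact Ideal.IsPrime.ne_top' (Ideal.eq_top_of_isUnit_mem P hmem (hcoeff ▸ hunit.map _))

end multiReesAlgebra

end MultiRees

section Valuations

open Polynomial

variable {A K : Type*} [CommRing A] [Field K] [Algebra A K]

/-- The valuation ring `V` of `K` contains the image of `A`. -/
def IsOver (A : Type*) {K : Type*} [CommRing A] [Field K] [Algebra A K]
    (V : ValuationSubring K) : Prop :=
  ∀ a : A, algebraMap A K a ∈ V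

/-- `a ∈ I` has the largest value on `I`, so that `IV = aV`. -/
def IsDominant (V : ValuationSubring K) (I : Ideal A) (a : A) : Prop :=
  a ∈ I ∧ ∀ y ∈ I, V.valuation (algebraMap A K y) ≤ V.valuation (algebraMap A K a)

/-- `x` lies in the extension `JV`; over a valuation ring one element of `J` suffices to see it. -/
def MemExtension (V : ValuationSubring K) (J : Ideal A) (x : K) : Prop :=
  ∃ y ∈ J, V.valuation x ≤ V.valuation (algebraMap A K y)

/-- A complete ideal in the sense of Zariski: `J` is the intersection of its extensions to the
valuation rings of `K` over `A`. -/
def IsCompleteIdeal (K : Type*) [Field K] [Algebra A K] (J : Ideal A) : Prop :=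
  ∀ x : K, (∀ V : ValuationSubring K, IsOver A V → MemExtension V J x) →
    ∃ y ∈ J, algebraMap A K y = x

lemma memExtension_algebraMap (V : ValuationSubring K) {J : Ideal A} {y : A} (hy : y ∈ J) :
    MemExtension V J (algebraMap A K y) :=
  ⟨y, hy, le_rfl⟩

lemma IsOver.valuation_le_one {V : ValuationSubring K} (hV : IsOver A V) (a : A) :
    V.valuation (algebraMap A K a) ≤ 1 :=
  (V.valuation_le_one_iff _).2 (hV a)

lemma IsOver.isDominant_span {V : ValuationSubring K} (hV : IsOver A V) {s : Set A} {a : A}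
    (ha : a ∈ s) (hmax : ∀ y ∈ s, V.valuation (algebraMap A K y) ≤ V.valuation (algebraMap A K a)) :
    IsDominant V (Ideal.span s) a := by
  refine ⟨Ideal.subset_span ha, fun y hy ↦ ?_⟩
  induction hy using Submodule.span_induction with
  | mem y hy => exact hmax y hy
  | zero => simp
  | add y z _ _ hy hz =>
    rw [map_add]
    exact (V.valuation.map_add _ _).trans (max_le hy hz)
  | smul c y _ hy =>
    rw [smul_eq_mul, map_mul, map_mul]
    exact mul_le_of_le_one_of_le (hV.valuation_le_one c) hy

lemma IsOver.exists_isDominant [IsNoetherianRing A] {V : ValuationSubring K} (hV : IsOver A V)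
    (I : Ideal A) : ∃ a, IsDominant V I a := by
  classical
  obtain ⟨s, rfl⟩ := (isNoetherianRing_iff_ideal_fg A).1 inferInstance I
  obtain ⟨a, ha, hmax⟩ := (insert 0 s).exists_max_image
    (fun a ↦ V.valuation (algebraMap A K a)) ⟨0, by simp⟩
  have hspan : Ideal.span (s : Set A) = Ideal.span ((insert 0 s : Finset A) : Set A) := by simp
  rw [hspan]
  exact ⟨a, hV.isDominant_span ha hmax⟩

lemma MemExtension.le_of_isDominant {V : ValuationSubring K} {J : Ideal A} {x : K}
    (hx : MemExtension V J x) {b : A} (hb : IsDominant V J b) :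
    V.valuation x ≤ V.valuation (algebraMap A K b) := by
  obtain ⟨y, hy, hxy⟩ := hx
  exact hxy.trans (hb.2 y hy)

lemma MemExtension.div_mem {V : ValuationSubring K} {J : Ideal A} {x : K}
    (hx : MemExtension V J x) {b : A} (hb : IsDominant V J b) : x / algebraMap A K b ∈ V := by
  rw [← V.valuation_le_one_iff, map_div₀]
  exact div_le_one_of_le₀ (hx.le_of_isDominant hb) zero_le

lemma IsDominant.div_mem {V : ValuationSubring K} {J : Ideal A} {b : A} (hb : IsDominant V J b)
    {y : A} (hy : y ∈ J) : algebraMap A K y / algebraMap A K b ∈ V :=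
  (memExtension_algebraMap V hy).div_mem hb

lemma IsDominant.map_ne_zero {V : ValuationSubring K} {J : Ideal A} {b : A}
    (hb : IsDominant V J b) {y : A} (hy : y ∈ J) (hy0 : algebraMap A K y ≠ 0) :
    algebraMap A K b ≠ 0 := by
  intro h
  have hle := hb.2 y hy
  rw [h, map_zero, le_zero_iff, map_eq_zero] at hle
  exact hy0 hle

lemma IsDominant.mul {V : ValuationSubring K} {I J : Ideal A} {a b : A} (ha : IsDominant V I a)
    (hb : IsDominant V J b) : IsDominant V (I * J) (a * b) := by
  refine ⟨Ideal.mul_mem_mul ha.1 hb.1, fun y hy ↦ ?_⟩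
  induction hy using Submodule.mul_induction_on' with
  | mem_mul_mem x hx y hy =>
    simp only [map_mul]
    exact mul_le_mul' (ha.2 x hx) (hb.2 y hy)
  | add x _ y _ hx hy =>
    rw [map_add]
    exact (V.valuation.map_add _ _).trans (max_le hx hy)

lemma IsOver.isDominant_top {V : ValuationSubring K} (hV : IsOver A V) :
    IsDominant V (⊤ : Ideal A) 1 :=
  ⟨trivial, fun y _ ↦ by simpa using hV.valuation_le_one y⟩

lemma IsDominant.prod {V : ValuationSubring K} (hV : IsOver A V) {ι : Type*} (s : Finset ι)
    {I : ι → Ideal A} {a : ι → A} (ha : ∀ i ∈ s, IsDominant V (I i) (a i)) :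
    IsDominant V (∏ i ∈ s, I i) (∏ i ∈ s, a i) := by
  classical
  induction s using Finset.induction_on with
  | empty => simpa using hV.isDominant_top
  | insert i s hi ih =>
    rw [Finset.prod_insert hi, Finset.prod_insert hi]
    exact (ha i (by simp)).mul (ih fun j hj ↦ ha j (by simp [hj]))

lemma IsDominant.pow {V : ValuationSubring K} (hV : IsOver A V) {I : Ideal A} {a : A}
    (ha : IsDominant V I a) (n : ℕ) : IsDominant V (I ^ n) (a ^ n) := by
  simpa using IsDominant.prod hV (Finset.range n) fun _ _ ↦ ha

lemma isIntegral_of_forall_isOver (z : K) (h : ∀ V : ValuationSubring K, IsOver A V → z ∈ V) :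
    IsIntegral A z := by
  have hz :
      z ∈ (integralClosure (Subring.closure ((algebraMap A K).range : Set K)) K).toSubring := by
    rw [← iInf_valuationSubring_superset, Subring.mem_iInf]
    exact fun V ↦ h V.1 fun a ↦ V.2 ⟨a, rfl⟩
  rw [Subring.closure_eq] at hz
  have hz' : IsIntegral (algebraMap A K).range z := hz
  let _ : Algebra A (algebraMap A K).range := (algebraMap A K).rangeRestrict.toAlgebra
  have : IsScalarTower A (algebraMap A K).range K := .of_algebraMap_eq fun _ ↦ rfl
  have : Algebra.IsIntegral A (algebraMap A K).range :=
    Algebra.isIntegral_of_surjective (algebraMap A K).rangeRestrict_surjective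
  exact isIntegral_trans z hz'

lemma mul_mem_valuationSubring_of_isRoot (V : ValuationSubring K) {p : K[X]} (hp : p.Monic)
    {s w : K} (hs : ∀ j, s * p.coeff j ∈ V) (hw : p.IsRoot w) : s * w ∈ V := by
  have hsV : s ∈ V := by simpa [hp.coeff_natDegree] using hs p.natDegree
  have hcoeff : ((p.scaleRoots s).coeffs : Set K) ⊆ V.toSubring := by
    intro c hc
    obtain ⟨j, hj, rfl⟩ := mem_coeffs_iff.1 hc
    rw [coeff_scaleRoots]
    obtain hlt | hge := lt_or_ge j p.natDegree
    · rw [← Nat.sub_add_cancel (Nat.sub_pos_of_lt hlt), pow_succ', ← mul_assoc, mul_comm _ s]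
      exact mul_mem (hs j) (pow_mem hsV _)
    · obtain rfl : j = p.natDegree := le_antisymm (by simpa using le_natDegree_of_mem_supp j hj) hge
      simp [hp.coeff_natDegree]
  have h_int : IsIntegral V (s * w) := by
    refine ⟨(p.scaleRoots s).toSubring V.toSubring hcoeff, ?_, ?_⟩
    · rw [monic_toSubring, monic_scaleRoots_iff]
      exact hp
    · have hmap := map_toSubring (p.scaleRoots s) V.toSubring hcoeff
      rw [← eval_map]
      refine (congr_arg (eval (s * w)) hmap).trans ?_
      rw [scaleRoots_eval_mul, hw.eq_zero, mul_zero]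
  obtain ⟨v, hv⟩ := IsIntegrallyClosed.isIntegral_iff.1 h_int
  exact hv ▸ v.2

end Valuations

section BlowupChart

variable {A K : Type*} [CommRing A] [Field K] [Algebra A K]

/-- The affine chart `A[I/c]` of the blowup of `I`, as a subring of `K`: the quotients `i / cⁿ` with
`i ∈ Iⁿ`. -/
def blowupChart (K : Type*) [Field K] [Algebra A K] (I : Ideal A) (c : A) (hc : c ∈ I) :
    Subring K where
  carrier := {w | ∃ n, ∃ i ∈ I ^ n, algebraMap A K c ^ n * w = algebraMap A K i}
  zero_mem' := ⟨0, 0, by simp, by simp⟩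
  one_mem' := ⟨0, 1, by simp, by simp⟩
  mul_mem' := by
    rintro x y ⟨n, i, hi, h⟩ ⟨m, j, hj, h'⟩
    refine ⟨n + m, i * j, pow_add I n m ▸ Ideal.mul_mem_mul hi hj, ?_⟩
    rw [map_mul, ← h, ← h']
    ring
  add_mem' := by
    rintro x y ⟨n, i, hi, h⟩ ⟨m, j, hj, h'⟩
    refine ⟨n + m, i * c ^ m + c ^ n * j, ?_, ?_⟩
    · rw [pow_add]
      exact add_mem (Ideal.mul_mem_mul hi (Ideal.pow_mem_pow hc _))
        (Ideal.mul_mem_mul (Ideal.pow_mem_pow hc _) hj)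
    · simp only [map_mul, map_add, map_pow, ← h, ← h']
      ring
  neg_mem' := by
    rintro x ⟨n, i, hi, h⟩
    exact ⟨n, -i, neg_mem hi, by rw [map_neg, ← h, mul_neg]⟩

lemma algebraMap_mem_blowupChart {I : Ideal A} {c : A} {hc : c ∈ I} (a : A) :
    algebraMap A K a ∈ blowupChart K I c hc :=
  ⟨0, a, by simp, by simp⟩

lemma div_pow_mem_blowupChart {I : Ideal A} {c : A} {hc : c ∈ I} (hc0 : algebraMap A K c ≠ 0)
    {n : ℕ} {i : A} (hi : i ∈ I ^ n) :
    algebraMap A K i / algebraMap A K c ^ n ∈ blowupChart K I c hc :=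
  ⟨n, i, hi, mul_div_cancel₀ _ (pow_ne_zero n hc0)⟩

lemma blowupChart_le_of_isDominant {I : Ideal A} {c : A} {hc : c ∈ I} (hc0 : algebraMap A K c ≠ 0)
    {V : ValuationSubring K} (hV : IsOver A V) (hd : IsDominant V I c) :
    blowupChart K I c hc ≤ V.toSubring := by
  rintro w ⟨n, i, hi, hw⟩
  have hw' : w = algebraMap A K i / algebraMap A K (c ^ n) := by
    rw [← hw, map_pow, mul_div_cancel_left₀ w (pow_ne_zero n hc0)]
  rw [hw']
  exact (hd.pow hV n).div_mem hi

lemma exists_pow_mul_eq_of_le {I : Ideal A} {c : A} (hc : c ∈ I) {w : K} {n N : ℕ} (hnN : n ≤ N)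
    (h : ∃ i ∈ I ^ n, algebraMap A K c ^ n * w = algebraMap A K i) :
    ∃ i ∈ I ^ N, algebraMap A K c ^ N * w = algebraMap A K i := by
  obtain ⟨i, hi, h⟩ := h
  obtain ⟨k, rfl⟩ := Nat.exists_eq_add_of_le hnN
  refine ⟨i * c ^ k, pow_add I n k ▸ Ideal.mul_mem_mul hi (Ideal.pow_mem_pow hc _), ?_⟩
  rw [map_mul, map_pow, ← h]
  ring

lemma exists_forall_coeff_pow_mul_eq {I : Ideal A} {c : A} (hc : c ∈ I)
    (p : Polynomial (blowupChart K I c hc)) :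
    ∃ N, ∀ j, ∃ i ∈ I ^ N, algebraMap A K c ^ N * (p.coeff j : K) = algebraMap A K i := by
  have hmem : ∀ j, ∃ n, ∃ i ∈ I ^ n, algebraMap A K c ^ n * (p.coeff j : K) = algebraMap A K i :=
    fun j ↦ (p.coeff j).2
  choose n hn using hmem
  refine ⟨p.support.sup n, fun j ↦ ?_⟩
  by_cases hj : j ∈ p.support
  · exact exists_pow_mul_eq_of_le hc (Finset.le_sup hj) (hn j)
  · rw [Polynomial.notMem_support_iff.1 hj]
    exact ⟨0, zero_mem _, by simp⟩

lemma mem_blowupChart_of_isIntegral [IsNoetherianRing A] {I : Ideal A} {c : A} (hc : c ∈ I)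
    (hc0 : algebraMap A K c ≠ 0) (hI : ∀ n, IsCompleteIdeal K (I ^ n)) {w : K}
    (hw : IsIntegral (blowupChart K I c hc) w) : w ∈ blowupChart K I c hc := by
  obtain ⟨p, hp, hpw⟩ := hw
  obtain ⟨N, hN⟩ := exists_forall_coeff_pow_mul_eq hc p
  suffices h : ∀ V : ValuationSubring K, IsOver A V →
      MemExtension V (I ^ N) (algebraMap A K c ^ N * w) by
    obtain ⟨y, hy, hyw⟩ := hI N _ h
    exact ⟨N, y, hy, hyw.symm⟩
  intro V hV
  obtain ⟨x, hx⟩ := hV.exists_isDominant I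
  have hx0 : algebraMap A K (x ^ N) ≠ 0 := by
    rw [map_pow]
    exact pow_ne_zero N (hx.map_ne_zero hc hc0)
  have hmem : algebraMap A K c ^ N / algebraMap A K (x ^ N) * w ∈ V := by
    refine mul_mem_valuationSubring_of_isRoot V (hp.map (blowupChart K I c hc).subtype)
      (fun j ↦ ?_) (by rwa [Polynomial.IsRoot, Polynomial.eval_map])
    obtain ⟨i, hi, h⟩ := hN j
    rw [Polynomial.coeff_map, Subring.subtype_apply, div_mul_eq_mul_div, h]
    exact (hx.pow hV N).div_mem hi
  refine ⟨x ^ N, (hx.pow hV N).1, ?_⟩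
  rw [show algebraMap A K c ^ N * w =
    algebraMap A K (x ^ N) * (algebraMap A K c ^ N / algebraMap A K (x ^ N) * w) by field_simp,
    map_mul]
  exact mul_le_of_le_one_right' ((V.valuation_le_one_iff _).2 hmem)

lemma pow_succ_le_of_sq_le {I : Ideal A} {a c : A} (hc : c ∈ I)
    (h : I ^ 2 ≤ Ideal.span {a} * I ⊔ Ideal.span {c} * I) (n : ℕ) :
    I ^ (n + 1) ≤ Ideal.span {c ^ n} * I ⊔ Ideal.span {a} * I ^ n := by
  induction n with
  | zero => simp
  | succ n ih =>
    have hcn : Ideal.span {c ^ n} ≤ I ^ n :=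
      (Ideal.span_singleton_le_iff_mem _).2 (Ideal.pow_mem_pow hc n)
    calc I ^ (n + 1 + 1) = I ^ (n + 1) * I := pow_succ _ _
      _ ≤ (Ideal.span {c ^ n} * I ⊔ Ideal.span {a} * I ^ n) * I := Ideal.mul_mono_left ih
      _ = Ideal.span {c ^ n} * I ^ 2 ⊔ Ideal.span {a} * I ^ (n + 1) := by
        rw [Ideal.sup_mul, mul_assoc, mul_assoc, ← pow_succ, ← pow_two]
      _ ≤ Ideal.span {c ^ n} * (Ideal.span {a} * I ⊔ Ideal.span {c} * I) ⊔
          Ideal.span {a} * I ^ (n + 1) := sup_le_sup_right (Ideal.mul_mono_right h) _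
      _ = Ideal.span {a} * (Ideal.span {c ^ n} * I) ⊔ Ideal.span {c ^ (n + 1)} * I ⊔
          Ideal.span {a} * I ^ (n + 1) := by
        rw [Ideal.mul_sup, mul_left_comm, ← mul_assoc (Ideal.span {c ^ n}) (Ideal.span {c}),
          Ideal.span_singleton_mul_span_singleton, ← pow_succ]
      _ ≤ Ideal.span {c ^ (n + 1)} * I ⊔ Ideal.span {a} * I ^ (n + 1) := by
        refine sup_le (sup_le ?_ le_sup_left) le_sup_right
        exact (Ideal.mul_mono_right ((Ideal.mul_mono_left hcn).trans_eq (pow_succ I n).symm)).trans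
          le_sup_right

lemma exists_mul_eq_add_of_mem_blowupChart {I : Ideal A} {a c : A} {hc : c ∈ I}
    (hc0 : algebraMap A K c ≠ 0) (h : I ^ 2 ≤ Ideal.span {a} * I ⊔ Ideal.span {c} * I)
    {w : K} (hw : w ∈ blowupChart K I c hc) :
    ∃ d ∈ I, ∃ τ ∈ blowupChart K I c hc,
      algebraMap A K c * w = algebraMap A K d + algebraMap A K a * τ := by
  obtain ⟨n, hw⟩ := hw
  obtain ⟨i, hi, hiw⟩ := exists_pow_mul_eq_of_le hc (Nat.le_succ n) hw
  obtain ⟨u, hu, v, hv, rfl⟩ := Submodule.mem_sup.1 (pow_succ_le_of_sq_le hc h n hi)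
  obtain ⟨d, hd, rfl⟩ := Ideal.mem_span_singleton_mul.1 hu
  obtain ⟨j, hj, rfl⟩ := Ideal.mem_span_singleton_mul.1 hv
  refine ⟨d, hd, _, div_pow_mem_blowupChart hc0 hj, ?_⟩
  have hcn : algebraMap A K c ^ n ≠ 0 := pow_ne_zero _ hc0
  rw [map_add, map_mul, map_mul, map_pow, pow_succ'] at hiw
  field_simp
  linear_combination hiw

lemma exists_isIntegral_one_sub_mul {T : Subring K} {α : K} (hα : α ∈ T) {z : K}
    (h : ∀ V : ValuationSubring K, T ≤ V.toSubring → α ∈ V.nonunits → z ∈ V) :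
    ∃ q ∈ T, IsIntegral T ((1 - α * q) * z) := by
  obtain rfl | hz := eq_or_ne z 0
  · exact ⟨0, zero_mem _, by simpa using isIntegral_zero⟩
  by_cases htop : Ideal.span {(⟨α, hα⟩ : T)} = ⊤
  · obtain ⟨q, hq⟩ := isUnit_iff_exists_inv.1 (Ideal.span_singleton_eq_top.1 htop)
    have hq' : α * (q : K) = 1 := congr_arg Subtype.val hq
    exact ⟨q, q.2, by simpa [hq'] using isIntegral_zero⟩
  let _ : Invertible z⁻¹ := invertibleOfNonzero (inv_ne_zero hz)
  obtain ⟨p, hp, hpz⟩ := Algebra.exists_aeval_invOf_eq_zero_of_idealMap_adjoin_sup_span_eq_top z⁻¹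
      (Ideal.span {(⟨α, hα⟩ : T)}) htop <| by
    by_contra hne
    obtain ⟨V, hTV, hV⟩ := Ideal.image_subset_nonunits_valuationSubring
      (A := (Algebra.adjoin T {z⁻¹}).toSubring) _ hne
    have hzV : z⁻¹ ∈ V.nonunits := hV ⟨⟨z⁻¹, Algebra.subset_adjoin rfl⟩,
      Ideal.mem_sup_right (Ideal.subset_span rfl), rfl⟩
    have hαV : α ∈ V.nonunits := hV ⟨algebraMap T (Algebra.adjoin T {z⁻¹}) ⟨α, hα⟩,
      Ideal.mem_sup_left (Ideal.mem_map_of_mem _ (Ideal.subset_span rfl)), rfl⟩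
    exact (V.inv_mem_nonunits_iff.1 hzV).resolve_left hz
      (h V (fun t ht ↦ hTV ((Algebra.adjoin T {z⁻¹}).algebraMap_mem ⟨t, ht⟩)) hαV)
  obtain ⟨q, hq⟩ := Ideal.mem_span_singleton'.1 hp
  refine ⟨-q, neg_mem q.2, ?_⟩
  have hlead : (p.leadingCoeff : K) = 1 - α * (-q : K) := by
    have hq' : (q : K) * α = p.leadingCoeff - 1 := congr_arg Subtype.val hq
    linear_combination -hq'
  rw [invOf_eq_inv, inv_inv] at hpz
  rw [← hlead]
  exact isIntegral_leadingCoeff_smul p z hpz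

/-- On the locus where `a` fails to generate `I`, the quotient `f / (c b)` is regular, so it lies in
`A[I/c]` up to a factor `1 - (a/c) q`; clearing denominators leaves an error divisible by `a`. -/
theorem exists_eq_mul_add_mul_of_memExtension_mul [IsNoetherianRing A] {I J : Ideal A} {a c b : A}
    (ha : a ∈ I) (hc : c ∈ I) (ha0 : algebraMap A K a ≠ 0) (hc0 : algebraMap A K c ≠ 0)
    (hb : b ∈ J) (hb0 : algebraMap A K b ≠ 0)
    (hI2 : I ^ 2 ≤ Ideal.span {a} * I ⊔ Ideal.span {c} * I)
    (hI : ∀ n, IsCompleteIdeal K (I ^ n)) (hJ : IsCompleteIdeal K J)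
    (hcov : ∀ V : ValuationSubring K, IsOver A V →
      IsDominant V I a ∨ IsDominant V I c ∧ IsDominant V J b)
    {f : K} (hf : ∀ V : ValuationSubring K, IsOver A V → MemExtension V (I * J) f) :
    ∃ x ∈ J, ∃ d ∈ I, f = algebraMap A K (a * x + d * b) := by
  set ι := algebraMap A K
  set T := blowupChart K I c hc
  set z : K := f / ι (c * b) with hz
  have hzV : ∀ V : ValuationSubring K, IsOver A V → IsDominant V I c → IsDominant V J b → z ∈ V :=
    fun V hV hVc hVb ↦ (hf V hV).div_mem (hVc.mul hVb)
  obtain ⟨q, hq, hqz⟩ : ∃ q ∈ T, IsIntegral T ((1 - ι a / ι c * q) * z) := by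
    refine exists_isIntegral_one_sub_mul
      (by simpa using div_pow_mem_blowupChart (n := 1) hc0 (by simpa using ha))
      fun V hTV hαV ↦ ?_
    have hV : IsOver A V := fun x ↦ hTV (algebraMap_mem_blowupChart x)
    obtain hVa | ⟨hVc, hVb⟩ := hcov V hV
    · rw [V.mem_nonunits_iff, map_div₀, div_lt_one₀ (by simpa [zero_lt_iff] using hc0)] at hαV
      exact absurd (hVa.2 c hc) hαV.not_ge
    · exact hzV V hV hVc hVb
  obtain ⟨d, hd, τ, hτ, hdτ⟩ := exists_mul_eq_add_of_mem_blowupChart hc0 hI2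
    (mem_blowupChart_of_isIntegral hc hc0 hI hqz)
  have hkey : f - ι d * ι b = ι a * (ι b * (τ + q * z)) := by
    have hfz : f = z * (ι c * ι b) := by
      rw [hz, map_mul, div_mul_cancel₀ f (mul_ne_zero hc0 hb0)]
    have hqz' : ι c * ((1 - ι a / ι c * q) * z) = ι c * z - ι a * q * z := by field_simp
    linear_combination hfz + ι b * hdτ - ι b * hqz'
  suffices h : ∀ V : ValuationSubring K, IsOver A V → MemExtension V J (ι b * (τ + q * z)) by
    obtain ⟨x, hx, hxe⟩ := hJ _ h
    refine ⟨x, hx, d, hd, ?_⟩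
    rw [map_add, map_mul, map_mul]
    linear_combination hkey - ι a * hxe
  intro V hV
  obtain hVa | ⟨hVc, hVb⟩ := hcov V hV
  · obtain ⟨y, hy⟩ := hV.exists_isDominant J
    refine ⟨y, hy.1, ?_⟩
    have hdiff : V.valuation (f - ι d * ι b) ≤ V.valuation (ι (a * y)) := by
      refine (V.valuation.map_sub _ _).trans (max_le ((hf V hV).le_of_isDominant (hVa.mul hy)) ?_)
      rw [← map_mul ι]
      exact (hVa.mul hy).2 _ (Ideal.mul_mem_mul hd hb)
    rw [hkey, map_mul ι, map_mul, map_mul] at hdiff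
    exact (mul_le_mul_iff_right₀ (by simpa [zero_lt_iff] using ha0)).1 hdiff
  · refine ⟨b, hb, ?_⟩
    have hTV := blowupChart_le_of_isDominant (hc := hc) hc0 hV hVc
    rw [map_mul]
    exact mul_le_of_le_one_right' <| (V.valuation_le_one_iff _).2 <|
      add_mem (hTV hτ) (mul_mem (hTV hq) (hzV V hV hVc hVb))

end BlowupChart

section ReductionPair

variable {A K : Type*} [CommRing A] [Field K] [Algebra A K]

/-- A joint reduction pair for a family of ideals `I i` with complete powers: elements
`a i, b i ∈ I i` with `(I i)² = (a i, b i) I i` such that over every valuation ring of `K` over `A`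
either all the `a i` generate their ideals or all the `b i` do. -/
structure IsReductionPair (K : Type*) [Field K] [Algebra A K] {ι : Type*} (I : ι → Ideal A)
    (a b : ι → A) : Prop where
  left_mem : ∀ i, a i ∈ I i
  right_mem : ∀ i, b i ∈ I i
  left_ne_zero : ∀ i, algebraMap A K (a i) ≠ 0
  right_ne_zero : ∀ i, algebraMap A K (b i) ≠ 0
  sq_le : ∀ i, I i ^ 2 ≤ Ideal.span {a i} * I i ⊔ Ideal.span {b i} * I i
  isCompleteIdeal_top : IsCompleteIdeal K (⊤ : Ideal A)
  isCompleteIdeal_pow : ∀ i n, IsCompleteIdeal K (I i ^ n)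
  isDominant : ∀ V : ValuationSubring K, IsOver A V →
    (∀ i, IsDominant V (I i) (a i)) ∨ ∀ i, IsDominant V (I i) (b i)

variable {ι κ : Type*} {I : ι → Ideal A} {a b : ι → A}

lemma IsReductionPair.symm (h : IsReductionPair K I a b) : IsReductionPair K I b a :=
  ⟨h.right_mem, h.left_mem, h.right_ne_zero, h.left_ne_zero,
    fun i ↦ (h.sq_le i).trans_eq (sup_comm _ _), h.isCompleteIdeal_top, h.isCompleteIdeal_pow,
    fun V hV ↦ (h.isDominant V hV).symm⟩

lemma IsReductionPair.comp (h : IsReductionPair K I a b) (g : κ → ι) :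
    IsReductionPair K (I ∘ g) (a ∘ g) (b ∘ g) :=
  ⟨fun _ ↦ h.left_mem _, fun _ ↦ h.right_mem _, fun _ ↦ h.left_ne_zero _,
    fun _ ↦ h.right_ne_zero _, fun _ ↦ h.sq_le _, h.isCompleteIdeal_top,
    fun _ ↦ h.isCompleteIdeal_pow _,
    fun V hV ↦ (h.isDominant V hV).imp (fun h _ ↦ h _) fun h _ ↦ h _⟩

theorem IsReductionPair.isCompleteIdeal_prod [IsNoetherianRing A] (h : IsReductionPair K I a b)
    (s : Finset ι) (n : ι → ℕ) : IsCompleteIdeal K (∏ i ∈ s, I i ^ n i) := by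
  classical
  induction s using Finset.induction_on with
  | empty => simpa using h.isCompleteIdeal_top
  | insert i s hi ih =>
    rw [Finset.prod_insert hi]
    generalize n i = m
    induction m with
    | zero => simpa using ih
    | succ m ihm =>
      rw [pow_succ', mul_assoc]
      intro f hf
      have hb : b i ^ m * ∏ j ∈ s, b j ^ n j ∈ I i ^ m * ∏ j ∈ s, I j ^ n j :=
        Ideal.mul_mem_mul (Ideal.pow_mem_pow (h.right_mem i) _)
          (Ideal.prod_mem_prod fun j _ ↦ Ideal.pow_mem_pow (h.right_mem j) _)
      have hb0 : algebraMap A K (b i ^ m * ∏ j ∈ s, b j ^ n j) ≠ 0 := by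
        simp only [map_mul, map_pow, map_prod]
        exact mul_ne_zero (pow_ne_zero _ (h.right_ne_zero i))
          (Finset.prod_ne_zero_iff.2 fun j _ ↦ pow_ne_zero _ (h.right_ne_zero j))
      obtain ⟨x, hx, d, hd, rfl⟩ := exists_eq_mul_add_mul_of_memExtension_mul (h.left_mem i)
        (h.right_mem i) (h.left_ne_zero i) (h.right_ne_zero i) hb hb0 (h.sq_le i)
        (h.isCompleteIdeal_pow i) ihm
        (fun V hV ↦ (h.isDominant V hV).imp (fun hV' ↦ hV' i) fun hV' ↦ ⟨hV' i,
          ((hV' i).pow hV m).mul (IsDominant.prod hV s fun j _ ↦ (hV' j).pow hV _)⟩) hf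
      exact ⟨_, add_mem (Ideal.mul_mem_mul (h.left_mem i) hx) (Ideal.mul_mem_mul hd hb), rfl⟩

end ReductionPair

section SerreConditions

open IsLocalRing RingTheory.Sequence

lemma IsCohenMacaulayLocalRing.isWeaklyRegular {R : Type*} [CommRing R] [IsLocalRing R]
    (hR : IsCohenMacaulayLocalRing R) (rs : List R) (hmem : ∀ r ∈ rs, r ∈ maximalIdeal R)
    (h : ∀ p : Ideal R, p.IsPrime → (∀ r ∈ rs, r ∈ p) → p = maximalIdeal R)
    (hlen : (rs.length : WithBot ℕ∞) ≤ ringKrullDim R) : IsWeaklyRegular R rs := by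
  obtain ⟨_, _, n, hdepth, hn⟩ := hR.exists_depthGE
  have hle := ringKrullDim_le_length rs hmem h
  have hn' : n = rs.length := by
    rw [hn] at hle hlen
    exact le_antisymm (by exact_mod_cast hle) (by exact_mod_cast hlen)
  subst hn'
  exact isWeaklyRegular_of_depthGE_length rs hmem hdepth fun p hp _ ↦ h p hp

variable {A : Type*} [CommRing A] [IsDomain A] [IsNoetherianRing A] [IsLocalRing A]

lemma ringKrullDim_le_one_of_mul_eq_mul_unit {b w x u : A} (hb : b ≠ 0)
    (hw : ∀ y ∈ maximalIdeal A, b ∣ y * w) (hx : x ∈ maximalIdeal A) (hu : IsUnit u)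
    (hxw : x * w = b * u) : ringKrullDim A ≤ 1 := by
  have hle := ringKrullDim_le_length [x] (by simpa using hx) fun p hp hxp ↦ by
    refine le_antisymm (le_maximalIdeal hp.ne_top) fun y hy ↦ ?_
    obtain ⟨z, hz⟩ := hw y hy
    have huy : u * y = x * z :=
      mul_left_cancel₀ hb (by linear_combination x * hz - y * hxw)
    have hmem : u * y ∈ p := huy ▸ p.mul_mem_right _ (hxp x (by simp))
    exact (p.unit_mul_mem_iff_mem hu).1 hmem
  simpa using hle

lemma ringKrullDim_le_one_of_maximalIdeal_mul_dvd [IsIntegrallyClosed A] {b w : A} (hb : b ≠ 0)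
    (hbw : ¬ b ∣ w) (hw : ∀ y ∈ maximalIdeal A, b ∣ y * w) : ringKrullDim A ≤ 1 := by
  by_cases hunit : ∃ x ∈ maximalIdeal A, ∃ u, IsUnit u ∧ x * w = b * u
  · obtain ⟨x, hx, u, hu, hxw⟩ := hunit
    exact ringKrullDim_le_one_of_mul_eq_mul_unit hb hw hx hu hxw
  push Not at hunit
  by_cases hfield : maximalIdeal A = ⊥
  · rw [ringKrullDim_eq_zero_of_isField (isField_iff_maximalIdeal_eq.2 hfield)]
    exact zero_le_one
  have hbK : algebraMap A (FractionRing A) b ≠ 0 := by simpa using hb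
  -- Otherwise multiplication by `w / b` maps the maximal ideal into itself.
  have h_int :
      IsIntegral A (algebraMap A (FractionRing A) w / algebraMap A (FractionRing A) b) := by
    refine isIntegral_of_smul_mem_submodule
      (Submodule.map (Algebra.linearMap A (FractionRing A)) (maximalIdeal A)) ?_
      (Submodule.FG.map _ (IsNoetherian.noetherian _)) _ ?_
    · rwa [Ne, ← Submodule.map_bot (Algebra.linearMap A (FractionRing A)),
        (Submodule.map_injective_of_injective (IsFractionRing.injective A _)).eq_iff]
    · rintro _ ⟨x, hx, rfl⟩
      obtain ⟨z, hz⟩ := hw x hx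
      refine ⟨z, by_contra fun hzm ↦ hunit x hx z (by simpa using hzm) hz, ?_⟩
      have hzK := congrArg (algebraMap A (FractionRing A)) hz
      rw [map_mul, map_mul] at hzK
      rw [Algebra.linearMap_apply, Algebra.linearMap_apply, smul_eq_mul]
      field_simp
      linear_combination -hzK
  obtain ⟨y, hy⟩ := IsIntegrallyClosed.algebraMap_eq_of_integral h_int
  refine (hbw ⟨y, IsFractionRing.injective A (FractionRing A) ?_⟩).elim
  rw [map_mul, hy, mul_div_cancel₀ _ hbK]

lemma dvd_of_mul_eq_mul_of_one_lt_ringKrullDim [IsIntegrallyClosed A] (hdim : 1 < ringKrullDim A)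
    {a b : A} (hb : b ≠ 0)
    (hab : ∀ p : Ideal A, p.IsPrime → a ∈ p → b ∈ p → p = maximalIdeal A)
    {p q : A} (h : a * p = b * q) : b ∣ p := by
  by_contra hbp
  have hp : Ideal.Quotient.mk (Ideal.span {b}) p ≠ 0 := by
    rwa [Ne, Ideal.Quotient.eq_zero_iff_mem, Ideal.mem_span_singleton]
  obtain ⟨P, hP, hle⟩ := exists_le_isAssociatedPrime_of_isNoetherianRing A _ hp
  obtain ⟨hPprime, w, hw⟩ := isAssociatedPrime_iff.1 hP
  obtain ⟨w, rfl⟩ := Ideal.Quotient.mk_surjective w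
  have hcolon (x y : A) :
      x ∈ (⊥ : Submodule A (A ⧸ Ideal.span {b})).colon {Ideal.Quotient.mk _ y} ↔ b ∣ x * y := by
    rw [Submodule.mem_colon_singleton, Submodule.mem_bot, ← Ideal.mem_span_singleton,
      ← Ideal.Quotient.eq_zero_iff_mem, map_mul, Algebra.smul_def]
    rfl
  have hPmax : P = maximalIdeal A :=
    hab P hPprime (hle ((hcolon _ _).2 ⟨q, h⟩)) (hle ((hcolon _ _).2 ⟨p, rfl⟩))
  refine hdim.not_ge (ringKrullDim_le_one_of_maximalIdeal_mul_dvd hb (w := w) (fun hbw ↦ ?_) ?_)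
  · refine hPprime.ne_top ((Ideal.eq_top_iff_one _).2 ?_)
    rwa [hw, hcolon, one_mul]
  · intro y hy
    rwa [← hcolon, ← hw, hPmax]

end SerreConditions

section ReesAlgebra

open Polynomial

section Monomial

variable {A : Type*} [CommRing A] {I : Ideal A}

/-- The element `y tⁿ` of the Rees algebra `A[It]`, for `y ∈ Iⁿ`. -/
noncomputable def reesMonomial {n : ℕ} {y : A} (hy : y ∈ I ^ n) : reesAlgebra I :=
  ⟨monomial n y, reesAlgebra.monomial_mem.2 hy⟩

/-- The element `a t` of the Rees algebra `A[It]`, for `a ∈ I`. -/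
noncomputable def reesGenerator {a : A} (ha : a ∈ I) : reesAlgebra I :=
  reesMonomial (n := 1) (by simpa using ha)

lemma coe_reesMonomial {n : ℕ} {y : A} (hy : y ∈ I ^ n) :
    (reesMonomial hy : A[X]) = C y * X ^ n :=
  (C_mul_X_pow_eq_monomial ..).symm

lemma coe_reesGenerator {a : A} (ha : a ∈ I) : (reesGenerator ha : A[X]) = C a * X := by
  rw [reesGenerator, coe_reesMonomial, pow_one]

lemma reesGenerator_ne_zero {a : A} (ha : a ∈ I) (ha0 : a ≠ 0) : reesGenerator ha ≠ 0 :=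
  fun h ↦ ha0 ((monomial_eq_zero_iff a 1).1 congr(Subtype.val $h))

lemma coe_algebraMap_reesAlgebra (a : A) : (algebraMap A (reesAlgebra I) a : A[X]) = C a := rfl

lemma algebraMap_reesAlgebra_injective : Function.Injective (algebraMap A (reesAlgebra I)) :=
  fun _ _ h ↦ C_injective (congrArg Subtype.val h)

lemma coeff_mem_pow_of_mem_reesAlgebra (f : reesAlgebra I) (n : ℕ) :
    (f : A[X]).coeff n ∈ I ^ n :=
  (mem_reesAlgebra_iff I _).1 f.2 n

lemma algebraMap_pow_mul_reesMonomial {c : A} (hc : c ∈ I) {n : ℕ} {y : A} (hy : y ∈ I ^ n) :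
    algebraMap A (reesAlgebra I) c ^ n * reesMonomial hy =
      algebraMap A (reesAlgebra I) y * reesGenerator hc ^ n := by
  apply Subtype.ext
  simp only [Subalgebra.coe_mul, Subalgebra.coe_pow, coe_reesMonomial, coe_reesGenerator,
    coe_algebraMap_reesAlgebra]
  ring

lemma reesAlgebra_eq_sum (f : reesAlgebra I) :
    f = algebraMap A _ ((f : A[X]).coeff 0) + ∑ i ∈ Finset.range (f : A[X]).natDegree,
      reesMonomial (coeff_mem_pow_of_mem_reesAlgebra f (i + 1)) := by
  apply Subtype.ext
  conv_lhs => rw [(f : A[X]).as_sum_range, Finset.sum_range_succ', add_comm]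
  rw [Subalgebra.coe_add, AddSubmonoidClass.coe_finsetSum]
  rfl

variable {K : Type*} [Field K] [Algebra A K]

lemma map_reesMonomial_eq {F : Type*} [Field F]
    {ψ : reesAlgebra I →+* F} {j : K →+* F}
    (hj : j.comp (algebraMap A K) = ψ.comp (algebraMap A (reesAlgebra I)))
    {c : A} (hc : c ∈ I) (hc0 : algebraMap A K c ≠ 0) {n : ℕ} {y : A} (hy : y ∈ I ^ n) :
    ψ (reesMonomial hy) =
      j (algebraMap A K y / algebraMap A K c ^ n) * ψ (reesGenerator hc) ^ n := by
  have hjc (x : A) : j (algebraMap A K x) = ψ (algebraMap A _ x) := congr($hj x)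
  have hc' : j (algebraMap A K c) ≠ 0 := by simpa using hc0
  have h := congrArg ψ (algebraMap_pow_mul_reesMonomial hc hy)
  simp only [map_mul, map_pow, ← hjc] at h
  rw [map_div₀, map_pow, div_mul_eq_mul_div, eq_div_iff (pow_ne_zero n hc'), ← h, mul_comm]

lemma exists_ringHom_comp_algebraMap_eq [IsFractionRing A K] (I : Ideal A) {F : Type*} [Field F]
    {ψ : reesAlgebra I →+* F} (hψ : Function.Injective ψ) :
    ∃ j : K →+* F, j.comp (algebraMap A K) = ψ.comp (algebraMap A (reesAlgebra I)) := by
  have hinj : Function.Injective (ψ.comp (algebraMap A (reesAlgebra I))) :=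
    hψ.comp algebraMap_reesAlgebra_injective
  refine ⟨IsFractionRing.lift hinj, RingHom.ext fun a ↦ ?_⟩
  rw [RingHom.comp_apply, IsFractionRing.lift_algebraMap]

lemma isIntegral_reesAlgebra_of_memExtension {F : Type*} [Field F]
    [Algebra (reesAlgebra I) F] {j : K →+* F}
    (hj : j.comp (algebraMap A K) = (algebraMap (reesAlgebra I) F).comp (algebraMap A _))
    {c : A} (hc : c ∈ I) (hc0 : algebraMap A K c ≠ 0) {n : ℕ} {x : K}
    (hx : ∀ V : ValuationSubring K, IsOver A V → MemExtension V (I ^ n) x) :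
    IsIntegral (reesAlgebra I)
      (j (x / algebraMap A K c ^ n) * algebraMap _ F (reesGenerator hc) ^ n) := by
  refine isIntegral_of_forall_isOver _ fun V hV ↦ ?_
  obtain ⟨y, hy, hxy⟩ := hx (V.comap j) fun a ↦ by
    rw [ValuationSubring.mem_comap, show j (algebraMap A K a) = _ from congr($hj a)]
    exact hV _
  obtain ⟨⟨w, hw⟩, rfl⟩ := (ValuationSubring.valuation_le_iff _ _ _).1 hxy
  rw [mul_div_assoc, map_mul, mul_assoc, ← map_reesMonomial_eq hj hc hc0 hy]
  exact V.mul_mem _ _ hw (hV _)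

end Monomial

variable {A K : Type*} [CommRing A] [IsDomain A] [Field K] [Algebra A K] [IsFractionRing A K]

theorem isCompleteIdeal_pow_of_isIntegrallyClosed_reesAlgebra {I : Ideal A} (hI : I ≠ ⊥)
    [IsIntegrallyClosed (reesAlgebra I)] (n : ℕ) : IsCompleteIdeal K (I ^ n) := by
  intro x hx
  obtain ⟨c, hc, hc0⟩ := Submodule.exists_mem_ne_zero_of_ne_bot hI
  have hcK : algebraMap A K c ≠ 0 := by simpa using hc0
  let ψ : reesAlgebra I →+* FractionRing (reesAlgebra I) := algebraMap _ _
  have hψ : Function.Injective ψ := IsFractionRing.injective _ _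
  obtain ⟨j, hj⟩ := exists_ringHom_comp_algebraMap_eq (K := K) I hψ
  have hjc (a : A) : j (algebraMap A K a) = ψ (algebraMap A (reesAlgebra I) a) :=
    congr($hj a)
  obtain ⟨f, (hf : ψ f = j (x / algebraMap A K c ^ n) * ψ (reesGenerator hc) ^ n)⟩ :=
    IsIntegrallyClosed.algebraMap_eq_of_integral
      (isIntegral_reesAlgebra_of_memExtension hj hc hcK hx)
  obtain ⟨p, q, hq, rfl⟩ := IsFractionRing.div_surjective (A := A) x
  have hqK : algebraMap A K q ≠ 0 := by simpa using nonZeroDivisors.ne_zero hq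
  have hqF : ψ (algebraMap A (reesAlgebra I) q) ≠ 0 := by rw [← hjc]; simpa using hqK
  have hcF : ψ (algebraMap A (reesAlgebra I) c) ≠ 0 := by rw [← hjc]; simpa using hcK
  have hmul : algebraMap A (reesAlgebra I) (q * c ^ n) * f =
      algebraMap A _ p * reesGenerator hc ^ n := by
    apply hψ
    simp only [map_mul, map_pow, hf, map_div₀, hjc]
    field_simp
  have hcoeff := congrArg (fun g : reesAlgebra I ↦ (g : A[X]).coeff n) hmul
  simp only [Subalgebra.coe_mul, Subalgebra.coe_pow, coe_reesGenerator, coe_algebraMap_reesAlgebra,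
    mul_pow, ← C_pow, coeff_C_mul, coeff_X_pow_self, mul_one] at hcoeff
  refine ⟨(f : A[X]).coeff n, coeff_mem_pow_of_mem_reesAlgebra f n, ?_⟩
  rw [eq_div_iff hqK, ← map_mul]
  congr 1
  exact mul_right_cancel₀ (pow_ne_zero n hc0) (by linear_combination hcoeff)

end ReesAlgebra

section ReductionNumber

open IsLocalRing Polynomial RingTheory.Sequence

lemma exists_isOver_forall_mem_iff_valuation_lt_one {R F : Type*} [CommRing R]
    [Field F] [Algebra R F] (hinj : Function.Injective (algebraMap R F)) (Q : Ideal R)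
    [Q.IsPrime] : ∃ V : ValuationSubring F, IsOver R V ∧
      ∀ x, x ∈ Q ↔ V.valuation (algebraMap R F x) < 1 := by
  have hunit (y : Q.primeCompl) : IsUnit (algebraMap R F y) := by
    rw [isUnit_iff_ne_zero, Ne, map_eq_zero_iff _ hinj]
    exact fun h ↦ y.2 (h ▸ zero_mem Q)
  let g : Localization.AtPrime Q →+* F := IsLocalization.lift hunit
  have hg (x : R) : g (algebraMap R _ x) = algebraMap R F x := IsLocalization.lift_eq hunit x
  obtain ⟨V, hgV, hlocal⟩ := exists_factor_valuationRing g
  let f : Localization.AtPrime Q →+* V := g.codRestrict V.toSubring hgV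
  have : IsLocalHom f := hlocal
  refine ⟨V, fun x ↦ hg x ▸ hgV _, fun x ↦ ?_⟩
  rw [← IsLocalization.AtPrime.to_map_mem_maximal_iff (Localization.AtPrime Q) Q,
    ← maximalIdeal_comap f, Ideal.mem_comap, ← hg]
  exact V.valuation_lt_one_iff (f (algebraMap R _ x))

lemma isWeaklyRegular_append_singleton_iff {R : Type*} [CommRing R] (rs : List R) (z : R) :
    IsWeaklyRegular R (rs ++ [z]) ↔
      IsWeaklyRegular R rs ∧ ∀ w, z * w ∈ Ideal.ofList rs → w ∈ Ideal.ofList rs := by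
  simp only [isWeaklyRegular_append_iff, isWeaklyRegular_singleton_iff,
    isSMulRegular_quotient_iff_mem_of_smul_mem, smul_eq_mul, Ideal.mul_top]

lemma ringKrullDim_add_one_le_localization_comap_maximalIdeal {R A : Type*} [CommRing R]
    [IsDomain R] [CommRing A] [IsLocalRing A] (ε : R →+* A) (hε : Function.Surjective ε) {x : R}
    (hx : x ≠ 0) (hεx : ε x = 0) :
    ringKrullDim A + 1 ≤ ringKrullDim (Localization.AtPrime ((maximalIdeal A).comap ε)) := by
  have hle := Ideal.primeCompl_le_nonZeroDivisors ((maximalIdeal A).comap ε)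
  have : IsDomain (Localization.AtPrime ((maximalIdeal A).comap ε)) :=
    IsLocalization.isDomain_localization hle
  have hunit (y : ((maximalIdeal A).comap ε).primeCompl) : IsUnit (ε y) :=
    notMem_maximalIdeal.1 y.2
  let φ : Localization.AtPrime ((maximalIdeal A).comap ε) →+* A := IsLocalization.lift hunit
  have hφ (f : R) : φ (algebraMap _ _ f) = ε f := IsLocalization.lift_eq hunit f
  have hsurj : Function.Surjective φ := fun y ↦
    (hε y).imp' (algebraMap _ _) fun f hf ↦ (hφ f).trans hf
  refine ringKrullDim_succ_le_of_surjective φ hsurj (r := algebraMap _ _ x)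
    (mem_nonZeroDivisors_of_ne_zero ?_) ((hφ x).trans hεx)
  exact (map_ne_zero_iff _ (IsLocalization.injective _ hle)).2 hx

section Augmentation

variable {A : Type*} [CommRing A] {I : Ideal A}

/-- The evaluation `t ↦ 0` from the Rees algebra `A[It]` to `A`. -/
noncomputable def reesAugmentation (I : Ideal A) : reesAlgebra I →+* A :=
  constantCoeff.comp (reesAlgebra I).val.toRingHom

lemma reesAugmentation_apply (f : reesAlgebra I) :
    reesAugmentation I f = (f : A[X]).coeff 0 := rfl

lemma reesAugmentation_algebraMap (a : A) : reesAugmentation I (algebraMap A _ a) = a :=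
  coeff_C_zero

lemma reesAugmentation_reesGenerator {a : A} (ha : a ∈ I) :
    reesAugmentation I (reesGenerator ha) = 0 := by
  rw [reesAugmentation_apply, coe_reesGenerator, coeff_C_mul, coeff_X_zero, mul_zero]

variable [IsLocalRing A]

/-- The graded maximal ideal of the Rees algebra over a local ring. -/
noncomputable def reesIrrelevantIdeal (I : Ideal A) : Ideal (reesAlgebra I) :=
  (maximalIdeal A).comap (reesAugmentation I)

instance : (reesIrrelevantIdeal I).IsPrime := by
  unfold reesIrrelevantIdeal; infer_instance

lemma mem_reesIrrelevantIdeal {f : reesAlgebra I} :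
    f ∈ reesIrrelevantIdeal I ↔ reesAugmentation I f ∈ maximalIdeal A := Iff.rfl

end Augmentation

section Domain

variable {A K : Type*} [CommRing A] [IsDomain A] [Field K] [Algebra A K] [IsFractionRing A K]
  {I : Ideal A}

lemma reesMonomial_mem_of_isPrime {a b : A} (ha : a ∈ I) (hb : b ∈ I) (ha0 : a ≠ 0) (hb0 : b ≠ 0)
    (hdom : ∀ V : ValuationSubring K, IsOver A V → IsDominant V I a ∨ IsDominant V I b)
    {Q : Ideal (reesAlgebra I)} [Q.IsPrime] (haQ : reesGenerator ha ∈ Q)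
    (hbQ : reesGenerator hb ∈ Q) {n : ℕ} (hn : n ≠ 0) {y : A} (hy : y ∈ I ^ n) :
    reesMonomial hy ∈ Q := by
  have hinj := IsFractionRing.injective (reesAlgebra I) (FractionRing (reesAlgebra I))
  obtain ⟨V, hV, hQ⟩ := exists_isOver_forall_mem_iff_valuation_lt_one hinj Q
  obtain ⟨j, hj⟩ := exists_ringHom_comp_algebraMap_eq (K := K) I hinj
  have hVK : IsOver A (V.comap j) := fun x ↦ by
    rw [ValuationSubring.mem_comap, show j (algebraMap A K x) = _ from congr($hj x)]
    exact hV _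
  have key {c : A} (hc : c ∈ I) (hc0 : c ≠ 0) (hcQ : reesGenerator hc ∈ Q)
      (hcdom : IsDominant (V.comap j) I c) : reesMonomial hy ∈ Q := by
    rw [hQ] at hcQ ⊢
    have hquot := (hcdom.pow hVK n).div_mem hy
    rw [map_pow, ValuationSubring.mem_comap, ← V.valuation_le_one_iff] at hquot
    rw [map_reesMonomial_eq hj hc (by simpa using hc0), map_mul, map_pow]
    exact (mul_le_of_le_one_left' hquot).trans_lt (pow_lt_one₀ zero_le hcQ hn)
  exact (hdom _ hVK).elim (key ha ha0 haQ) (key hb hb0 hbQ)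

end Domain

variable {A K : Type*} [CommRing A] [IsDomain A] [IsLocalRing A] [Field K] [Algebra A K]
  [IsFractionRing A K] {I : Ideal A}

lemma reesIrrelevantIdeal_le_of_isPrime {a b : A} (ha : a ∈ I) (hb : b ∈ I) (ha0 : a ≠ 0)
    (hb0 : b ≠ 0)
    (hdom : ∀ V : ValuationSubring K, IsOver A V → IsDominant V I a ∨ IsDominant V I b)
    (hab : ∀ p : Ideal A, p.IsPrime → a ∈ p → b ∈ p → p = maximalIdeal A)
    {Q : Ideal (reesAlgebra I)} [hQ : Q.IsPrime] (hbt : reesGenerator hb ∈ Q)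
    (haQ : algebraMap A _ a ∈ Q) (hsub : reesGenerator ha - algebraMap A _ b ∈ Q) :
    reesIrrelevantIdeal I ≤ Q := by
  have hat : reesGenerator ha ∈ Q := by
    refine hQ.mem_of_pow_mem 2 ?_
    have heq : reesGenerator ha ^ 2 = reesGenerator ha * (reesGenerator ha - algebraMap A _ b) +
        algebraMap A _ a * reesGenerator hb := by
      apply Subtype.ext
      simp only [Subalgebra.coe_add, Subalgebra.coe_sub, Subalgebra.coe_mul, Subalgebra.coe_pow,
        coe_reesGenerator, coe_algebraMap_reesAlgebra]
      ring
    rw [heq]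
    exact Q.add_mem (Q.mul_mem_left _ hsub) (Q.mul_mem_right _ haQ)
  have hbQ : algebraMap A (reesAlgebra I) b ∈ Q := by simpa using Q.sub_mem hat hsub
  have hcomap := hab (Q.comap (algebraMap A (reesAlgebra I))) inferInstance haQ hbQ
  intro f hf
  rw [mem_reesIrrelevantIdeal, reesAugmentation_apply, ← hcomap, Ideal.mem_comap] at hf
  rw [reesAlgebra_eq_sum f]
  exact Q.add_mem hf (Q.sum_mem fun i _ ↦
    reesMonomial_mem_of_isPrime ha hb ha0 hb0 hdom hat hbt i.succ_ne_zero _)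

lemma ringKrullDim_add_one_le_localization_reesIrrelevantIdeal (hI : I ≠ ⊥) :
    ringKrullDim A + 1 ≤ ringKrullDim (Localization.AtPrime (reesIrrelevantIdeal I)) := by
  obtain ⟨b, hb, hb0⟩ := Submodule.exists_mem_ne_zero_of_ne_bot hI
  exact ringKrullDim_add_one_le_localization_comap_maximalIdeal (reesAugmentation I)
    (fun a ↦ ⟨_, reesAugmentation_algebraMap a⟩) (reesGenerator_ne_zero hb hb0)
    (reesAugmentation_reesGenerator hb)

lemma isWeaklyRegular_localization_reesIrrelevantIdeal (hdim : 2 ≤ ringKrullDim A)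
    (hIm : I ≤ maximalIdeal A) {a b : A} (ha : a ∈ I) (hb : b ∈ I) (ha0 : a ≠ 0) (hb0 : b ≠ 0)
    (hdom : ∀ V : ValuationSubring K, IsOver A V → IsDominant V I a ∨ IsDominant V I b)
    (hab : ∀ p : Ideal A, p.IsPrime → a ∈ p → b ∈ p → p = maximalIdeal A)
    (hR : IsCohenMacaulayRing (reesAlgebra I)) :
    IsWeaklyRegular (Localization.AtPrime (reesIrrelevantIdeal I))
      ([reesGenerator hb, algebraMap A _ a, reesGenerator ha - algebraMap A _ b].map
        (algebraMap (reesAlgebra I) (Localization.AtPrime (reesIrrelevantIdeal I)))) := by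
  have hmax (f : reesAlgebra I) :
      algebraMap _ _ f ∈ maximalIdeal (Localization.AtPrime (reesIrrelevantIdeal I)) ↔
        reesAugmentation I f ∈ maximalIdeal A :=
    IsLocalization.AtPrime.to_map_mem_maximal_iff _ (reesIrrelevantIdeal I) f
  refine IsCohenMacaulayLocalRing.isWeaklyRegular (hR.2 _ inferInstance) _ ?_ ?_ ?_
  · simp only [List.map_cons, List.map_nil, List.forall_mem_cons, hmax]
    simp only [map_sub, reesAugmentation_reesGenerator, reesAugmentation_algebraMap, zero_sub,
      neg_mem_iff]
    exact ⟨zero_mem _, hIm ha, hIm hb, by simp⟩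
  · intro p hp hmem
    simp only [List.map_cons, List.map_nil, List.forall_mem_cons] at hmem
    have hle : reesIrrelevantIdeal I ≤ p.comap (algebraMap _ _) :=
      reesIrrelevantIdeal_le_of_isPrime ha hb ha0 hb0 hdom hab hmem.1 hmem.2.1 hmem.2.2.1
    refine le_antisymm (le_maximalIdeal hp.ne_top) ?_
    rwa [← Localization.AtPrime.map_eq_maximalIdeal, Ideal.map_le_iff_le_comap]
  · refine le_trans ?_ (ringKrullDim_add_one_le_localization_reesIrrelevantIdeal
      (Submodule.ne_bot_iff _ |>.2 ⟨a, ha, ha0⟩))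
    exact add_le_add_left hdim 1

theorem exists_eq_mul_add_mul_of_mem_sq (hdim : 2 ≤ ringKrullDim A) (hIm : I ≤ maximalIdeal A)
    {a b : A} (ha : a ∈ I) (hb : b ∈ I) (ha0 : a ≠ 0) (hb0 : b ≠ 0)
    (hdom : ∀ V : ValuationSubring K, IsOver A V → IsDominant V I a ∨ IsDominant V I b)
    (hab : ∀ p : Ideal A, p.IsPrime → a ∈ p → b ∈ p → p = maximalIdeal A)
    (hR : IsCohenMacaulayRing (reesAlgebra I)) {x : A} (hx : x ∈ I ^ 2) :
    ∃ g, ∃ h ∈ I, x = b * g + a * h := by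
  have hx1 : x ∈ I := Ideal.pow_le_self two_ne_zero hx
  have hreg := isWeaklyRegular_localization_reesIrrelevantIdeal hdim hIm ha hb ha0 hb0 hdom hab hR
  set S := Localization.AtPrime (reesIrrelevantIdeal I)
  have hlast : ∀ w : S, algebraMap _ S (reesGenerator ha - algebraMap A _ b) * w ∈
      (Ideal.span {reesGenerator hb, algebraMap A _ a}).map (algebraMap (reesAlgebra I) S) →
      w ∈ (Ideal.span {reesGenerator hb, algebraMap A _ a}).map (algebraMap (reesAlgebra I) S) := by
    have hsnoc := ((isWeaklyRegular_append_singleton_iff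
      ([reesGenerator hb, algebraMap A _ a].map (algebraMap _ S)) _).1 hreg).2
    rwa [← Ideal.map_ofList, Ideal.ofList_cons, Ideal.ofList_singleton,
      ← Ideal.span_insert] at hsnoc
  -- `x t (a t - b) = x a t² - x b t` lies in `(b t, a)`.
  have hmem : algebraMap _ S (reesGenerator hx1) ∈
      (Ideal.span {reesGenerator hb, algebraMap A _ a}).map (algebraMap (reesAlgebra I) S) := by
    refine hlast _ ?_
    rw [← map_mul]
    refine Ideal.mem_map_of_mem _ (Ideal.mem_span_pair.2
      ⟨-algebraMap A _ x, reesMonomial hx, Subtype.ext ?_⟩)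
    simp only [Subalgebra.coe_add, Subalgebra.coe_sub, Subalgebra.coe_mul, Subalgebra.coe_neg,
      coe_reesGenerator, coe_reesMonomial, coe_algebraMap_reesAlgebra]
    ring
  rw [IsLocalization.algebraMap_mem_map_algebraMap_iff (reesIrrelevantIdeal I).primeCompl] at hmem
  obtain ⟨s, hs, hsx⟩ := hmem
  obtain ⟨g, h, hgh⟩ := Ideal.mem_span_pair.1 hsx
  have hcoeff := congrArg (fun f : reesAlgebra I ↦ (f : A[X]).coeff 1) hgh
  simp only [Subalgebra.coe_add, Subalgebra.coe_mul, coe_reesGenerator, coe_algebraMap_reesAlgebra,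
    coeff_add, ← mul_assoc, coeff_mul_X, coeff_mul_C] at hcoeff
  obtain ⟨v, hv⟩ := isUnit_iff_exists_inv.1 (notMem_maximalIdeal.1 hs)
  rw [reesAugmentation_apply] at hv
  refine ⟨v * (g : A[X]).coeff 0, v * (h : A[X]).coeff 1, Ideal.mul_mem_left _ _ ?_, ?_⟩
  · simpa using coeff_mem_pow_of_mem_reesAlgebra h 1
  · linear_combination (-x) * hv - v * hcoeff

theorem sq_le_span_mul_sup_span_mul [IsNoetherianRing A] [IsIntegrallyClosed A]
    (hdim : 2 ≤ ringKrullDim A) (hIm : I ≤ maximalIdeal A)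
    {a b : A} (ha : a ∈ I) (hb : b ∈ I) (ha0 : a ≠ 0) (hb0 : b ≠ 0)
    (hdom : ∀ V : ValuationSubring K, IsOver A V → IsDominant V I a ∨ IsDominant V I b)
    (hab : ∀ p : Ideal A, p.IsPrime → a ∈ p → b ∈ p → p = maximalIdeal A)
    (hR : IsCohenMacaulayRing (reesAlgebra I)) :
    I ^ 2 ≤ Ideal.span {a} * I ⊔ Ideal.span {b} * I := by
  intro x hx
  obtain ⟨g, h, hh, hgh⟩ := exists_eq_mul_add_mul_of_mem_sq hdim hIm ha hb ha0 hb0 hdom hab hR hx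
  obtain ⟨g', h', hh', hgh'⟩ := exists_eq_mul_add_mul_of_mem_sq hdim hIm hb ha hb0 ha0
    (fun V hV ↦ (hdom V hV).symm) (fun p hp hb ha ↦ hab p hp ha hb) hR hx
  -- Comparing the two expressions, `b` divides `h - g'` because `b, a` is a regular sequence.
  obtain ⟨c, hc⟩ := dvd_of_mul_eq_mul_of_one_lt_ringKrullDim
    (lt_of_lt_of_le (by norm_num) hdim) hb0 hab (p := h - g') (q := h' - g)
    (by linear_combination hgh' - hgh)
  have hx : x = a * (h - b * c) + b * h' := by linear_combination hgh' - a * hc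
  rw [hx]
  refine add_mem (Ideal.mem_sup_left ?_) (Ideal.mem_sup_right ?_)
  · exact Ideal.mul_mem_mul (Ideal.mem_span_singleton_self _) (sub_mem hh (I.mul_mem_right _ hb))
  · exact Ideal.mul_mem_mul (Ideal.mem_span_singleton_self _) hh'

end ReductionNumber

section Normality

open MvPolynomial

lemma exists_ringHom_comp_algebraMap_eq_of_injective {R S F L : Type*} [CommRing R] [CommRing S]
    [Field F] [Algebra R F] [IsFractionRing R F] [Field L] [Algebra S L] [IsFractionRing S L]
    {θ : R →+* S} (hθ : Function.Injective θ) :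
    ∃ φ : F →+* L, φ.comp (algebraMap R F) = (algebraMap S L).comp θ := by
  have hcomp : Function.Injective ((algebraMap S L).comp θ) := by
    rw [RingHom.coe_comp]
    exact (IsFractionRing.injective S L).comp hθ
  exact ⟨IsFractionRing.lift hcomp, RingHom.ext (IsFractionRing.lift_algebraMap hcomp)⟩

lemma isIntegrallyClosed_of_injective {R S : Type*} [CommRing R] [IsDomain R] [CommRing S]
    [IsDomain S] [IsIntegrallyClosed S] {θ : R →+* S} (hθ : Function.Injective θ)
    (h_int : ∀ s, θ.IsIntegralElem s → ∃ x, θ x = s) : IsIntegrallyClosed R := by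
  have hinj := IsFractionRing.injective S (FractionRing S)
  obtain ⟨φ, hφ⟩ := exists_ringHom_comp_algebraMap_eq_of_injective (F := FractionRing R)
    (L := FractionRing S) hθ
  rw [isIntegrallyClosed_iff (FractionRing R)]
  rintro z ⟨p, hp, hz⟩
  have hroot : Polynomial.eval₂ ((algebraMap S _).comp θ) (φ z) p = 0 := by
    rw [← hφ, ← Polynomial.hom_eval₂, hz, map_zero]
  have hzS : IsIntegral S (φ z) := ⟨p.map θ, hp.map _, by rw [Polynomial.eval₂_map, hroot]⟩
  obtain ⟨s, hs⟩ := IsIntegrallyClosed.isIntegral_iff.1 hzS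
  have hsR : θ.IsIntegralElem s := by
    refine ⟨p, hp, hinj ?_⟩
    rw [Polynomial.hom_eval₂, hs, hroot, map_zero]
  obtain ⟨x, rfl⟩ := h_int s hsR
  exact ⟨x, φ.injective (congr($hφ x).trans hs)⟩

section Coefficients

variable {ι R K : Type*} [CommRing R] [Field K]

lemma coeff_aeval_C_mul_X [Fintype ι] (u : ι → K) (f : MvPolynomial ι K) (n : ι →₀ ℕ) :
    coeff n (aeval (fun i ↦ C (u i) * X i) f) = (∏ i, u i ^ n i) * coeff n f := by
  classical
  induction f using MvPolynomial.induction_on' with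
  | monomial m a =>
    have heq : aeval (fun i ↦ C (u i) * X i) (monomial m a) =
        monomial m ((∏ i, u i ^ m i) * a) := by
      rw [aeval_monomial, monomial_eq, algebraMap_eq, Finsupp.prod_fintype _ _ (by simp),
        Finsupp.prod_fintype _ _ (by simp)]
      simp only [mul_pow, Finset.prod_mul_distrib, map_mul, map_prod, map_pow]
      ring
    rw [heq, coeff_monomial, coeff_monomial]
    split_ifs with h
    · rw [h]
    · rw [mul_zero]
  | add p q hp hq => rw [map_add, coeff_add, coeff_add, hp, hq, mul_add]

lemma coeff_mem_of_isIntegralElem (V : ValuationSubring K) {θ : R →+* MvPolynomial ι K}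
    (hθ : ∀ f n, coeff n (θ f) ∈ V) {s : MvPolynomial ι K} (hs : θ.IsIntegralElem s)
    (n : ι →₀ ℕ) : coeff n s ∈ V := by
  let _ : Algebra (MvPolynomial ι V) (MvPolynomial ι K) := algebraMvPolynomial
  obtain ⟨p, hp, hps⟩ := hs
  have hlifts : p.map θ ∈ Polynomial.lifts (algebraMap (MvPolynomial ι V) (MvPolynomial ι K)) := by
    rw [Polynomial.lifts_iff_coeff_lifts]
    intro j
    rw [Polynomial.coeff_map]
    refine mem_range_map_iff_coeffs_subset.2 fun y hy ↦ ?_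
    obtain ⟨m, -, rfl⟩ := mem_coeffs_iff.1 hy
    exact ⟨⟨_, hθ _ m⟩, rfl⟩
  obtain ⟨q, hqp, -, hq⟩ := Polynomial.lifts_and_natDegree_eq_and_monic hlifts (hp.map _)
  have h_int : IsIntegral (MvPolynomial ι V) s :=
    ⟨q, hq, by rw [← Polynomial.eval_map, hqp, Polynomial.eval_map, hps]⟩
  obtain ⟨v, hv⟩ := IsIntegrallyClosed.isIntegral_iff.1 (isIntegral_iff_isIntegral_coeff.1 h_int n)
  exact hv ▸ v.2

lemma prod_pow_mul_coeff_mem_of_isIntegralElem [Fintype ι] (V : ValuationSubring K) (u : ι → K)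
    {θ : R →+* MvPolynomial ι K} (hθ : ∀ f n, (∏ i, u i ^ n i) * coeff n (θ f) ∈ V)
    {s : MvPolynomial ι K} (hs : θ.IsIntegralElem s) (n : ι →₀ ℕ) :
    (∏ i, u i ^ n i) * coeff n s ∈ V := by
  let σ : MvPolynomial ι K →+* MvPolynomial ι K :=
    (aeval fun i ↦ C (u i) * X i : MvPolynomial ι K →ₐ[K] MvPolynomial ι K).toRingHom
  have hσ (f n) : coeff n (σ f) = (∏ i, u i ^ n i) * coeff n f := coeff_aeval_C_mul_X u f n
  obtain ⟨p, hp, hps⟩ := hs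
  have hσs : (σ.comp θ).IsIntegralElem (σ s) :=
    ⟨p, hp, by rw [← Polynomial.hom_eval₂, hps, map_zero]⟩
  rw [← hσ]
  exact coeff_mem_of_isIntegralElem V (fun f m ↦ (hσ (θ f) m).symm ▸ hθ f m) hσs n

end Coefficients

variable {A K : Type*} [CommRing A] [Field K] [Algebra A K] [IsFractionRing A K]

lemma memExtension_coeff_of_isIntegralElem [IsNoetherianRing A] {r : ℕ}
    {I : Fin r → Ideal A} (hI : ∀ i, I i ≠ ⊥)
    {s : MvPolynomial (Fin r) K}
    (hs : ((map (algebraMap A K)).comp (multiReesAlgebra I).val.toRingHom).IsIntegralElem s)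
    {V : ValuationSubring K} (hV : IsOver A V) (n : Fin r →₀ ℕ) :
    MemExtension V (∏ i, I i ^ n i) (coeff n s) := by
  choose x hx using fun i ↦ hV.exists_isDominant (I i)
  have hdom (m : Fin r → ℕ) : IsDominant V (∏ i, I i ^ m i) (∏ i, x i ^ m i) :=
    IsDominant.prod hV _ fun i _ ↦ (hx i).pow hV _
  have hinv (m : Fin r →₀ ℕ) (y : K) : (∏ i, (algebraMap A K (x i))⁻¹ ^ m i) * y =
      y / algebraMap A K (∏ i, x i ^ m i) := by
    simp only [inv_pow, Finset.prod_inv_distrib, map_prod, map_pow, div_eq_inv_mul]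
  have hmem : (∏ i, (algebraMap A K (x i))⁻¹ ^ n i) * coeff n s ∈ V := by
    refine prod_pow_mul_coeff_mem_of_isIntegralElem V _ (fun f m ↦ ?_) hs n
    rw [hinv, RingHom.comp_apply]
    exact (coeff_map (algebraMap A K) f.1 m).symm ▸
      (hdom m).div_mem (mem_multiReesAlgebra_iff.1 f.2 m)
  have hx0 (i) : algebraMap A K (x i) ≠ 0 := by
    obtain ⟨c, hc, hc0⟩ := Submodule.exists_mem_ne_zero_of_ne_bot (hI i)
    exact (hx i).map_ne_zero hc ((map_ne_zero_iff _ (IsFractionRing.injective A K)).2 hc0)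
  have hne : V.valuation (algebraMap A K (∏ i, x i ^ n i)) ≠ 0 := by
    simp only [map_prod, map_pow, ne_eq]
    exact Finset.prod_ne_zero_iff.2 fun i _ ↦ pow_ne_zero _ (mt (map_eq_zero _).1 (hx0 i))
  rw [hinv, ← V.valuation_le_one_iff, map_div₀] at hmem
  exact ⟨_, (hdom n).1, (div_le_one₀ (zero_lt_iff.2 hne)).1 hmem⟩

lemma exists_mem_multiReesAlgebra_map_eq {A K : Type*} [CommRing A] [Field K] [Algebra A K]
    [FaithfulSMul A K] {r : ℕ} {I : Fin r → Ideal A}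
    (hcomplete : ∀ n : Fin r → ℕ, IsCompleteIdeal K (∏ i, I i ^ n i))
    {g : MvPolynomial (Fin r) K}
    (hg : ∀ V : ValuationSubring K, IsOver A V → ∀ n, MemExtension V (∏ i, I i ^ n i) (coeff n g)) :
    ∃ f ∈ multiReesAlgebra I, map (algebraMap A K) f = g := by
  choose y hy hyg using fun n : Fin r →₀ ℕ ↦ hcomplete n (coeff n g) fun V hV ↦ hg V hV n
  obtain ⟨f, rfl⟩ : g ∈ Set.range (map (algebraMap A K)) := by
    refine mem_range_map_iff_coeffs_subset.2 fun z hz ↦ ?_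
    obtain ⟨m, -, rfl⟩ := mem_coeffs_iff.1 hz
    exact ⟨y m, hyg m⟩
  refine ⟨f, mem_multiReesAlgebra_iff.2 fun n ↦ ?_, rfl⟩
  have hcoeff : coeff n f = y n :=
    FaithfulSMul.algebraMap_injective A K (by rw [hyg, coeff_map])
  exact hcoeff ▸ hy n

theorem isIntegrallyClosed_multiReesAlgebra [IsDomain A] [IsNoetherianRing A] {r : ℕ}
    {I : Fin r → Ideal A} (hI : ∀ i, I i ≠ ⊥)
    (hcomplete : ∀ n : Fin r → ℕ, IsCompleteIdeal K (∏ i, I i ^ n i)) :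
    IsIntegrallyClosed (multiReesAlgebra I) := by
  have hinj := IsFractionRing.injective A K
  have : FaithfulSMul A K := (faithfulSMul_iff_algebraMap_injective A K).2 hinj
  refine isIntegrallyClosed_of_injective
    (θ := (map (algebraMap A K)).comp (multiReesAlgebra I).val.toRingHom)
    ((map_injective _ hinj).comp Subtype.val_injective) fun s hs ↦ ?_
  obtain ⟨f, hf, rfl⟩ := exists_mem_multiReesAlgebra_map_eq hcomplete fun V hV n ↦
    memExtension_coeff_of_isIntegralElem hI hs hV n
  exact ⟨⟨f, hf⟩, rfl⟩

end Normality

section GeneralElements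

variable {A K : Type*} [CommRing A] [Field K] [Algebra A K]

open Polynomial in
lemma ringKrullDim_range_aeval_le {R S : Type*} [CommRing R] [IsDomain R] [IsNoetherianRing R]
    [CommRing S] [Algebra R S] {y : S} {p q : R} (hq : q ≠ 0)
    (h : algebraMap R S q * y = algebraMap R S p) :
    ringKrullDim (aeval (R := R) y).range ≤ ringKrullDim R := by
  have hr : C q * X - C p ≠ 0 := fun h0 ↦ hq (by simpa using congr(($h0).coeff 1))
  have hle := ringKrullDim_succ_le_of_surjective (aeval (R := R) y).rangeRestrict.toRingHom
    (aeval (R := R) y).rangeRestrict_surjective (mem_nonZeroDivisors_of_ne_zero hr)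
    (Subtype.ext (by simp [h]))
  rw [ringKrullDim_of_isNoetherianRing] at hle
  exact ENat.WithBot.add_le_add_one_right_iff.1 hle

lemma ringKrullDim_adjoin_le {R S : Type*} [CommRing R] [IsNoetherianRing R] [CommRing S]
    [IsDomain S] [Algebra R S] {s : Set S} (hs : s.Finite)
    (hfrac : ∀ y ∈ s, ∃ p q : R, algebraMap R S q ≠ 0 ∧ algebraMap R S q * y = algebraMap R S p) :
    ringKrullDim (Algebra.adjoin R s) ≤ ringKrullDim R := by
  induction s, hs using Set.Finite.induction_on with
  | empty =>
    rw [Algebra.adjoin_empty]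
    refine ringKrullDim_le_of_surjective (algebraMap R (⊥ : Subalgebra R S)) ?_
    rintro ⟨_, c, rfl⟩
    exact ⟨c, rfl⟩
  | @insert y s _ hs ih =>
    refine le_trans ?_ (ih fun z hz ↦ hfrac z (Set.mem_insert_of_mem y hz))
    obtain ⟨p, q, hq, h⟩ := hfrac y (Set.mem_insert y s)
    have : IsNoetherianRing (Algebra.adjoin R s) :=
      isNoetherianRing_of_fg (Subalgebra.fg_def.2 ⟨s, hs, rfl⟩)
    rw [Set.insert_eq, Set.union_comm, Algebra.adjoin_union_eq_adjoin_adjoin,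
      Algebra.adjoin_singleton_eq_range_aeval]
    exact ringKrullDim_range_aeval_le (R := Algebra.adjoin R s)
      (p := algebraMap R _ p) (q := algebraMap R _ q) (fun h0 ↦ hq congr(($h0 : S))) h

lemma exists_mem_forall_notMem (k : Type*) [Field k] [Infinite k] [Algebra k A] {I : Ideal A}
    {S : Set (Ideal A)} (hS : S.Finite) (h : ∀ W ∈ S, ¬ I ≤ W) : ∃ a ∈ I, ∀ W ∈ S, a ∉ W := by
  by_contra! hcon
  have : Finite S := hS
  obtain ⟨W, hW⟩ := Subspace.exists_eq_top_of_iUnion_eq_univ (k := k) (E := I.restrictScalars k)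
    (p := fun W : S ↦ (W.1.restrictScalars k).comap (I.restrictScalars k).subtype) (by
      refine Set.eq_univ_of_forall fun a ↦ Set.mem_iUnion.2 ?_
      obtain ⟨W, hW, haW⟩ := hcon a.1 a.2
      exact ⟨⟨W, hW⟩, haW⟩)
  exact h W.1 W.2 fun a ha ↦ (hW.symm ▸ Submodule.mem_top : (⟨a, ha⟩ : I.restrictScalars k) ∈ _)

lemma exists_prod_notMem (k : Type*) [Field k] [Infinite k] [Algebra k A] {ι : Type*}
    {I : ι → Ideal A} (s : Finset ι) {S : Set (Ideal A)} (hS : S.Finite)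
    (h : ∀ W ∈ S, ¬ ∏ i ∈ s, I i ≤ W) :
    ∃ a : ι → A, (∀ i ∈ s, a i ∈ I i) ∧ ∀ W ∈ S, ∏ i ∈ s, a i ∉ W := by
  classical
  induction s using Finset.induction_on generalizing S with
  | empty =>
    refine ⟨0, by simp, fun W hW h1 ↦ h W hW ?_⟩
    rw [Finset.prod_empty] at h1
    exact (Ideal.eq_top_iff_one W).2 h1 ▸ le_top
  | insert i s hi ih =>
    obtain ⟨x, hx, hxW⟩ := exists_mem_forall_notMem k (I := I i)
      (hS.image fun W ↦ W.colon ((∏ i ∈ s, I i : Ideal A) : Set A)) (by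
        rintro _ ⟨W, hW, rfl⟩ hle
        apply h W hW
        rw [Finset.prod_insert hi, Ideal.mul_le]
        exact fun r hr t ht ↦ Submodule.mem_colon.1 (hle hr) t ht)
    obtain ⟨a, ha, haW⟩ := ih (hS.image fun W ↦ W.colon {x}) (by
      rintro _ ⟨W, hW, rfl⟩ hle
      refine hxW _ ⟨W, hW, rfl⟩ (Submodule.mem_colon.2 fun t ht ↦ ?_)
      rw [smul_eq_mul, mul_comm, ← smul_eq_mul]
      exact Submodule.mem_colon_singleton.1 (hle ht))
    have hupdate (j) (hj : j ∈ s) : Function.update a i x j = a j :=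
      Function.update_of_ne (ne_of_mem_of_not_mem hj hi) _ _
    refine ⟨Function.update a i x, ?_, fun W hW hcon ↦ haW _ ⟨W, hW, rfl⟩ ?_⟩
    · simp only [Finset.mem_insert, forall_eq_or_imp, Function.update_self]
      exact ⟨hx, fun j hj ↦ hupdate j hj ▸ ha j hj⟩
    · rw [Finset.prod_insert hi, Function.update_self, Finset.prod_congr rfl hupdate] at hcon
      rwa [Submodule.mem_colon_singleton, smul_eq_mul, mul_comm]

lemma height_add_one_le_height_sup_span {R : Type*} [CommRing R] {M : Ideal R} {α : R}
    (hα : ∀ P ∈ M.minimalPrimes, α ∉ P) : M.height + 1 ≤ (M ⊔ Ideal.span {α}).height := by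
  rw [Ideal.height_eq_inf_minimalPrimes (M ⊔ Ideal.span {α})]
  refine le_iInf₂ fun Q hQ ↦ ?_
  have := hQ.1.1
  obtain ⟨P, hP, hPQ⟩ := Ideal.exists_minimalPrimes_le (le_sup_left.trans hQ.1.2)
  have := hP.1.1
  have hαQ : α ∈ Q := hQ.1.2 (Ideal.mem_sup_right (Ideal.mem_span_singleton_self α))
  have hlt : P < Q := lt_of_le_of_ne hPQ fun h ↦ hα P hP (h ▸ hαQ)
  exact (add_le_add_left (Ideal.height_mono hP.1.2) 1).trans
    (Ideal.height_add_one_le_of_lt_of_isPrime hlt)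

lemma one_le_height_of_ne_bot {R : Type*} [CommRing R] [IsDomain R] {M : Ideal R} (hM : M ≠ ⊥) :
    1 ≤ M.height := by
  obtain ⟨x, hx, hx0⟩ := Submodule.exists_mem_ne_zero_of_ne_bot hM
  have hle := height_add_one_le_height_sup_span (M := (⊥ : Ideal R)) (α := x)
    (by simpa [IsDomain.minimalPrimes_eq_singleton_bot] using hx0)
  rw [Ideal.height_bot, zero_add, bot_sup_eq] at hle
  exact hle.trans (Ideal.height_mono ((Ideal.span_singleton_le_iff_mem M).2 hx))

/-- The center on `A` of a valuation ring `V` over `A`: the elements of positive value. -/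
def IsOver.center {V : ValuationSubring K} (hV : IsOver A V) : Ideal A :=
  (IsLocalRing.maximalIdeal V).comap ((algebraMap A K).codRestrict V.toSubring hV)

instance {V : ValuationSubring K} (hV : IsOver A V) : hV.center.IsPrime :=
  Ideal.IsPrime.comap _

lemma IsOver.mem_center {V : ValuationSubring K} (hV : IsOver A V) {x : A} :
    x ∈ hV.center ↔ V.valuation (algebraMap A K x) < 1 :=
  ValuationSubring.valuation_lt_one_iff V _

lemma IsDominant.of_prod {ι : Type*} [Fintype ι] {V : ValuationSubring K} {I : ι → Ideal A}
    {a : ι → A} (ha : ∀ i, a i ∈ I i) (ha0 : algebraMap A K (∏ i, a i) ≠ 0)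
    (h : IsDominant V (∏ i, I i) (∏ i, a i)) (i : ι) : IsDominant V (I i) (a i) := by
  classical
  refine ⟨ha i, fun y hy ↦ ?_⟩
  have hmem : y * ∏ j ∈ Finset.univ.erase i, a j ∈ ∏ i, I i := by
    rw [← Finset.mul_prod_erase Finset.univ I (Finset.mem_univ i)]
    exact Ideal.mul_mem_mul hy (Ideal.prod_mem_prod fun j _ ↦ ha j)
  have hle := h.2 _ hmem
  rw [← Finset.mul_prod_erase Finset.univ a (Finset.mem_univ i), map_mul] at ha0 hle
  rw [map_mul, map_mul, map_mul] at hle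
  refine (mul_le_mul_iff_left₀ (zero_lt_iff.2 ?_)).1 hle
  rw [ne_eq, map_eq_zero]
  exact right_ne_zero_of_mul ha0

lemma exists_pow_le_prod {ι : Type*} {m : Ideal A} {I : ι → Ideal A} (s : Finset ι)
    (h : ∀ i ∈ s, ∃ n, m ^ n ≤ I i) : ∃ n, m ^ n ≤ ∏ i ∈ s, I i := by
  choose! n hn using h
  exact ⟨∑ i ∈ s, n i, by rw [← Finset.prod_pow_eq_pow_sum]; exact Finset.prod_le_prod' hn⟩

end GeneralElements

section ChartCovering

variable {A K : Type*} [CommRing A] [Field K] [Algebra A K] {I : Ideal A} {c : A} {hc : c ∈ I}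

lemma blowupChart_eq_adjoin {G : Set A} {hc : c ∈ Ideal.span G} (hc0 : algebraMap A K c ≠ 0) :
    blowupChart K (Ideal.span G) c hc =
      (Algebra.adjoin A ((fun g ↦ algebraMap A K g / algebraMap A K c) '' G)).toSubring := by
  set B := Algebra.adjoin A ((fun g ↦ algebraMap A K g / algebraMap A K c) '' G)
  have hdiv (i : A) (hi : i ∈ Ideal.span G) : algebraMap A K i / algebraMap A K c ∈ B := by
    induction hi using Submodule.span_induction with
    | mem g hg => exact Algebra.subset_adjoin ⟨g, hg, rfl⟩
    | zero => simp
    | add x y _ _ hx hy => rw [map_add, add_div]; exact add_mem hx hy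
    | smul r x _ hx =>
      rw [smul_eq_mul, map_mul, mul_div_assoc]
      exact mul_mem (B.algebraMap_mem r) hx
  apply le_antisymm
  · rintro w ⟨n, i, hi, hw⟩
    rw [eq_div_of_mul_eq (pow_ne_zero n hc0) ((mul_comm _ _).trans hw)]
    clear hw
    induction hi using Submodule.pow_induction_on_left' with
    | algebraMap r => simp
    | add x y n _ _ hx hy => rw [map_add, add_div]; exact add_mem hx hy
    | mem_mul x hx n y _ hy =>
      rw [map_mul, pow_succ', mul_div_mul_comm]
      exact mul_mem (hdiv x hx) hy
  · let chart : Subalgebra A K :=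
      { blowupChart K (Ideal.span G) c hc with algebraMap_mem' := algebraMap_mem_blowupChart }
    refine Algebra.adjoin_le (S := chart) ?_
    rintro _ ⟨g, hg, rfl⟩
    have hmem := div_pow_mem_blowupChart (hc := hc) hc0 (n := 1)
      ((pow_one (Ideal.span G)).symm ▸ Ideal.subset_span hg)
    rwa [pow_one] at hmem

lemma isNoetherianRing_blowupChart [IsNoetherianRing A] (hc0 : algebraMap A K c ≠ 0) :
    IsNoetherianRing (blowupChart K I c hc) := by
  obtain ⟨G, rfl⟩ := (isNoetherianRing_iff_ideal_fg A).1 inferInstance I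
  rw [blowupChart_eq_adjoin hc0]
  exact isNoetherianRing_of_fg (Subalgebra.fg_def.2 ⟨_, G.finite_toSet.image _, rfl⟩)

lemma ringKrullDim_blowupChart_le [IsNoetherianRing A] (hc0 : algebraMap A K c ≠ 0) :
    ringKrullDim (blowupChart K I c hc) ≤ ringKrullDim A := by
  obtain ⟨G, rfl⟩ := (isNoetherianRing_iff_ideal_fg A).1 inferInstance I
  rw [blowupChart_eq_adjoin hc0]
  refine ringKrullDim_adjoin_le (G.finite_toSet.image _) ?_
  rintro _ ⟨g, _, rfl⟩
  exact ⟨g, c, hc0, mul_div_cancel₀ _ hc0⟩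

/-- The structure map from `A` to a chart of a blowup. -/
def toBlowupChart (K : Type*) [Field K] [Algebra A K] (hc : c ∈ I) :
    A →+* blowupChart K I c hc :=
  (algebraMap A K).codRestrict _ algebraMap_mem_blowupChart

/-- The element `a / c` of the chart `A[I/c]`. -/
def blowupChartQuotient (hc : c ∈ I) (hc0 : algebraMap A K c ≠ 0) {a : A} (ha : a ∈ I) :
    blowupChart K I c hc :=
  ⟨algebraMap A K a / algebraMap A K c, by
    simpa using div_pow_mem_blowupChart (hc := hc) hc0 (n := 1) (by simpa using ha)⟩

/-- The elements `a` of `A` with `a / c` in the ideal `P` of the chart `A[I/c]`. For prime `P` it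
does not contain `c`, so a general element of `I` avoids it. -/
def dividedContraction (P : Ideal (blowupChart K I c hc)) : Ideal A where
  carrier := {a | ∃ w ∈ P, algebraMap A K a = algebraMap A K c * w}
  zero_mem' := ⟨0, P.zero_mem, by simp⟩
  add_mem' := by
    rintro y z ⟨w, hw, h⟩ ⟨w', hw', h'⟩
    exact ⟨w + w', P.add_mem hw hw', by rw [map_add, h, h']; push_cast; ring⟩
  smul_mem' := by
    rintro t y ⟨w, hw, h⟩
    refine ⟨toBlowupChart K hc t * w, P.mul_mem_left _ hw, ?_⟩
    rw [smul_eq_mul, map_mul, h]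
    exact mul_left_comm _ _ _

lemma notMem_dividedContraction (hc0 : algebraMap A K c ≠ 0) (P : Ideal (blowupChart K I c hc))
    [hP : P.IsPrime] : c ∉ dividedContraction P := by
  rintro ⟨w, hw, h⟩
  obtain rfl : w = 1 := Subtype.ext ((mul_eq_left₀ hc0).1 h.symm)
  exact hP.ne_top ((Ideal.eq_top_iff_one P).2 hw)

lemma mem_dividedContraction_of_blowupChartQuotient_mem {hc0 : algebraMap A K c ≠ 0} {a : A}
    {ha : a ∈ I} {P : Ideal (blowupChart K I c hc)} (h : blowupChartQuotient hc hc0 ha ∈ P) :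
    a ∈ dividedContraction P :=
  ⟨_, h, (mul_div_cancel₀ _ hc0).symm⟩

lemma map_toBlowupChart_ne_bot [FaithfulSMul A K] {M : Ideal A} (hM : M ≠ ⊥) :
    M.map (toBlowupChart K hc) ≠ ⊥ := by
  intro h
  obtain ⟨x, hx, hx0⟩ := Submodule.exists_mem_ne_zero_of_ne_bot hM
  have hmem := Ideal.mem_map_of_mem (toBlowupChart K hc) hx
  rw [h, Ideal.mem_bot] at hmem
  exact hx0 ((FaithfulSMul.algebraMap_eq_zero_iff A K).1 congr(($hmem : K)))

-- The center of `V` on the chart would contain `M`, `a / c` and `b / c`, which have height `3`.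
lemma isDominant_or_isDominant_of_forall_minimalPrimes (hc0 : algebraMap A K c ≠ 0)
    (hdim : ringKrullDim (blowupChart K I c hc) ≤ 2) {a b : A} (ha : a ∈ I) (hb : b ∈ I)
    {M : Ideal A} (hM : M.map (toBlowupChart K hc) ≠ ⊥)
    (haP : ∀ P ∈ (M.map (toBlowupChart K hc)).minimalPrimes, a ∉ dividedContraction P)
    (hbP : ∀ P ∈ (M.map (toBlowupChart K hc) ⊔
      Ideal.span {blowupChartQuotient hc hc0 ha}).minimalPrimes, b ∉ dividedContraction P)
    {V : ValuationSubring K} (hV : IsOver A V) (hd : IsDominant V I c)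
    (hMV : ∀ x ∈ M, V.valuation (algebraMap A K x) < 1) :
    IsDominant V I a ∨ IsDominant V I b := by
  have hVc : IsOver (blowupChart K I c hc) V := fun w ↦ blowupChart_le_of_isDominant hc0 hV hd w.2
  have hcenter {x : A} (hx : x ∈ I) (hnd : ¬ IsDominant V I x) :
      blowupChartQuotient hc hc0 hx ∈ hVc.center := by
    refine hVc.mem_center.2 (lt_of_not_ge fun hge ↦ hnd ⟨hx, fun y hy ↦ (hd.2 y hy).trans ?_⟩)
    have hge' : 1 ≤ V.valuation (algebraMap A K x / algebraMap A K c) := hge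
    rwa [map_div₀, one_le_div₀ (zero_lt_iff.2 ((map_ne_zero _).2 hc0))] at hge'
  by_contra! hcon
  have hMcenter : M.map (toBlowupChart K hc) ≤ hVc.center :=
    Ideal.map_le_iff_le_comap.2 fun x hx ↦ hVc.mem_center.2 (hMV x hx)
  have hle := sup_le (sup_le hMcenter
    ((Ideal.span_singleton_le_iff_mem _).2 (hcenter ha hcon.1)))
    ((Ideal.span_singleton_le_iff_mem _).2 (hcenter hb hcon.2))
  have hheight : (3 : ℕ∞) ≤ hVc.center.height := calc
    (3 : ℕ∞) = 1 + 1 + 1 := by norm_num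
    _ ≤ (M.map (toBlowupChart K hc)).height + 1 + 1 := by
      gcongr
      exact one_le_height_of_ne_bot hM
    _ ≤ (M.map (toBlowupChart K hc) ⊔ Ideal.span {blowupChartQuotient hc hc0 ha}).height + 1 := by
      gcongr
      exact height_add_one_le_height_sup_span fun P hP h ↦
        haP P hP (mem_dividedContraction_of_blowupChartQuotient_mem h)
    _ ≤ _ := height_add_one_le_height_sup_span fun P hP h ↦
      hbP P hP (mem_dividedContraction_of_blowupChartQuotient_mem h)
    _ ≤ hVc.center.height := Ideal.height_mono hle
  have hheight' := (WithBot.coe_le_coe.2 hheight).trans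
    ((Ideal.height_le_ringKrullDim_of_isPrime).trans hdim)
  exact absurd (WithBot.coe_le_coe.1 hheight') (by decide)

lemma exists_prod_notMem_dividedContraction (k : Type*) [Field k] [Infinite k] [Algebra k A]
    [IsNoetherianRing A] {ι κ : Type*} [Fintype ι] [Finite κ] {I : ι → Ideal A} {c : κ → A}
    (hc : ∀ j, c j ∈ ∏ i, I i) (hc0 : ∀ j, algebraMap A K (c j) ≠ 0)
    (N : ∀ j, Ideal (blowupChart K (∏ i, I i) (c j) (hc j))) {T : Set (Ideal A)} (hT : T.Finite)
    (hIT : ∀ W ∈ T, ¬ ∏ i, I i ≤ W) :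
    ∃ a : ι → A, (∀ i, a i ∈ I i) ∧ (∀ W ∈ T, ∏ i, a i ∉ W) ∧
      ∀ j, ∀ P ∈ (N j).minimalPrimes, ∏ i, a i ∉ dividedContraction P := by
  have hN (j) : (N j).minimalPrimes.Finite :=
    have := isNoetherianRing_blowupChart (hc := hc j) (hc0 j)
    Ideal.finite_minimalPrimes_of_isNoetherianRing _ _
  obtain ⟨a, ha, haW⟩ := exists_prod_notMem k (I := I) Finset.univ
    (hT.union (Set.finite_iUnion fun j ↦ (hN j).image dividedContraction)) (by
      rintro W (hW | hW) hle
      · exact hIT W hW hle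
      · obtain ⟨j, P, hP, rfl⟩ := Set.mem_iUnion.1 hW
        have := hP.1.1
        exact notMem_dividedContraction (hc0 j) P (hle (hc j)))
  exact ⟨a, fun i ↦ ha i (Finset.mem_univ i), fun W hW ↦ haW W (.inl hW),
    fun j P hP ↦ haW _ (.inr (Set.mem_iUnion.2 ⟨j, P, hP, rfl⟩))⟩

end ChartCovering

section ExistsReductionPair

open IsLocalRing

variable {A K : Type*} [CommRing A] [Field K] [Algebra A K]

lemma IsOver.exists_mem_isDominant_span [FaithfulSMul A K] {V : ValuationSubring K}
    (hV : IsOver A V) {s : Finset A} (hs : Ideal.span (s : Set A) ≠ ⊥) :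
    ∃ c ∈ s, c ≠ 0 ∧ IsDominant V (Ideal.span (s : Set A)) c := by
  obtain ⟨x, hx, hx0⟩ := Submodule.exists_mem_ne_zero_of_ne_bot hs
  have hne : s.Nonempty := Finset.nonempty_iff_ne_empty.2 fun h ↦ hs (by simp [h])
  obtain ⟨c, hc, hmax⟩ := s.exists_max_image (fun a ↦ V.valuation (algebraMap A K a)) hne
  have hd := hV.isDominant_span hc hmax
  refine ⟨c, hc, ?_, hd⟩
  rintro rfl
  exact hd.map_ne_zero hx (by simpa using hx0) (map_zero _)

lemma not_pow_maximalIdeal_le_of_mem_minimalPrimes_span_singleton [IsLocalRing A]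
    [IsNoetherianRing A] (hdim : 1 < ringKrullDim A) {x : A} {p : Ideal A}
    (hp : p ∈ (Ideal.span {x}).minimalPrimes) (n : ℕ) : ¬ maximalIdeal A ^ n ≤ p := by
  intro hle
  have := hp.1.1
  have hheight := (Ideal.height_mono (Ideal.IsPrime.le_of_pow_le hle)).trans
    (Ideal.height_le_one_of_isPrincipal_of_mem_minimalPrimes _ p hp)
  rw [← maximalIdeal_height_eq_ringKrullDim] at hdim
  exact hheight.not_gt (WithBot.coe_lt_coe.1 hdim)

lemma eq_maximalIdeal_of_forall_minimalPrimes_span_singleton [IsDomain A] [IsLocalRing A]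
    (hdim : ringKrullDim A ≤ 2) {x y : A} (hx : x ≠ 0)
    (hy : ∀ P ∈ (Ideal.span {x}).minimalPrimes, y ∉ P) {p : Ideal A} [hp : p.IsPrime]
    (hxp : x ∈ p) (hyp : y ∈ p) : p = maximalIdeal A := by
  have htwo : (2 : ℕ∞) ≤ p.height := calc
    (2 : ℕ∞) = 1 + 1 := by norm_num
    _ ≤ (Ideal.span {x}).height + 1 := by
      gcongr
      exact one_le_height_of_ne_bot (by simpa using hx)
    _ ≤ (Ideal.span {x} ⊔ Ideal.span {y}).height := height_add_one_le_height_sup_span hy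
    _ ≤ p.height := Ideal.height_mono (sup_le ((Ideal.span_singleton_le_iff_mem p).2 hxp)
        ((Ideal.span_singleton_le_iff_mem p).2 hyp))
  rw [← maximalIdeal_height_eq_ringKrullDim] at hdim
  have hm : (maximalIdeal A).height ≤ 2 := WithBot.coe_le_coe.1 hdim
  have : p.FiniteHeight := (Ideal.finiteHeight_iff p).2 <| .inr
    (((Ideal.height_mono (le_maximalIdeal hp.ne_top)).trans hm).trans_lt (by decide)).ne
  exact Ideal.eq_of_le_of_height_le p (le_maximalIdeal hp.ne_top) (hm.trans htwo)

lemma IsOver.isDominant_of_notMem_center {V : ValuationSubring K} (hV : IsOver A V) {I : Ideal A}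
    {a : A} (ha : a ∈ I) (hac : a ∉ hV.center) : IsDominant V I a :=
  ⟨ha, fun y _ ↦ (hV.valuation_le_one y).trans (not_lt.1 (mt hV.mem_center.2 hac))⟩

-- The `a i` avoid the components of the exceptional fibre on finitely many charts of the blowup of
-- `∏ i, I i`, and the `b i` then avoid the components of its intersection with the divisor of
-- `∏ i, a i`.
theorem exists_general_elements (k : Type*) [Field k] [Infinite k] [IsDomain A] [IsNoetherianRing A]
    [IsLocalRing A] [Algebra k A] [FaithfulSMul A K] (hdim : ringKrullDim A = 2)
    {ι : Type*} [Fintype ι] {I : ι → Ideal A} (hprim : ∀ i, ∃ n, maximalIdeal A ^ n ≤ I i) :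
    ∃ a b : ι → A, (∀ i, a i ∈ I i) ∧ (∀ i, b i ∈ I i) ∧ ∏ i, a i ≠ 0 ∧ ∏ i, b i ≠ 0 ∧
      (∀ V : ValuationSubring K, IsOver A V →
        IsDominant V (∏ i, I i) (∏ i, a i) ∨ IsDominant V (∏ i, I i) (∏ i, b i)) ∧
      ∀ p : Ideal A, p.IsPrime → ∏ i, a i ∈ p → ∏ i, b i ∈ p → p = maximalIdeal A := by
  have hm : maximalIdeal A ≠ ⊥ := fun h ↦ by
    have := ringKrullDim_eq_zero_of_isField (isField_iff_maximalIdeal_eq.2 h)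
    exact absurd (hdim.symm.trans this) (by decide)
  obtain ⟨N, hN⟩ := exists_pow_le_prod (I := I) Finset.univ fun i _ ↦ hprim i
  have hI : ∏ i, I i ≠ ⊥ := fun h ↦ pow_ne_zero N hm (le_bot_iff.1 (h ▸ hN))
  obtain ⟨G, hG⟩ := (isNoetherianRing_iff_ideal_fg A).1 inferInstance (∏ i, I i)
  let c : {g : A // g ∈ G ∧ g ≠ 0} → A := Subtype.val
  have : Finite {g : A // g ∈ G ∧ g ≠ 0} := (G.finite_toSet.subset fun _ hg ↦ hg.1).to_subtype
  have hc (j) : c j ∈ ∏ i, I i := hG ▸ Ideal.subset_span j.2.1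
  have hc0 (j) : algebraMap A K (c j) ≠ 0 := by simpa using j.2.2
  obtain ⟨a, ha, ha0, haP⟩ := exists_prod_notMem_dividedContraction k hc hc0
    (fun j ↦ (maximalIdeal A).map (toBlowupChart K (hc j))) (Set.finite_singleton ⊥)
    (by simpa using hI)
  have haI : ∏ i, a i ∈ ∏ i, I i := Ideal.prod_mem_prod fun i _ ↦ ha i
  obtain ⟨b, hb, hbW, hbP⟩ := exists_prod_notMem_dividedContraction k hc hc0
    (fun j ↦ (maximalIdeal A).map (toBlowupChart K (hc j)) ⊔
      Ideal.span {blowupChartQuotient (hc j) (hc0 j) haI})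
    ((Ideal.finite_minimalPrimes_of_isNoetherianRing A (Ideal.span {∏ i, a i})).insert ⊥) (by
      rintro W (rfl | hW) hle
      · exact hI (le_bot_iff.1 hle)
      · exact not_pow_maximalIdeal_le_of_mem_minimalPrimes_span_singleton
          (hdim ▸ by decide) hW N (hN.trans hle))
  have hbI : ∏ i, b i ∈ ∏ i, I i := Ideal.prod_mem_prod fun i _ ↦ hb i
  have ha0' : ∏ i, a i ≠ 0 := by simpa using ha0 ⊥ rfl
  have hp (p : Ideal A) (_ : p.IsPrime) (hap : ∏ i, a i ∈ p) (hbp : ∏ i, b i ∈ p) :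
      p = maximalIdeal A :=
    eq_maximalIdeal_of_forall_minimalPrimes_span_singleton hdim.le ha0'
      (fun P hP ↦ hbW P (.inr hP)) hap hbp
  refine ⟨a, b, ha, hb, ha0', by simpa using hbW ⊥ (.inl rfl), fun V hV ↦ ?_, hp⟩
  by_cases hcenter : hV.center = maximalIdeal A
  · obtain ⟨g, hgG, hg0, hd⟩ := hV.exists_mem_isDominant_span (hG.symm ▸ hI)
    exact isDominant_or_isDominant_of_forall_minimalPrimes (hc0 ⟨g, hgG, hg0⟩)
      ((ringKrullDim_blowupChart_le (hc0 _)).trans hdim.le) haI hbI (map_toBlowupChart_ne_bot hm)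
      (haP _) (hbP _) hV (hG ▸ hd) fun x hx ↦ hV.mem_center.1 (hcenter ▸ hx)
  · by_cases hac : ∏ i, a i ∈ hV.center
    · exact .inr (hV.isDominant_of_notMem_center hbI fun hbc ↦ hcenter (hp _ inferInstance hac hbc))
    · exact .inl (hV.isDominant_of_notMem_center haI hac)

lemma isCompleteIdeal_top_of_isIntegrallyClosed [IsIntegrallyClosed A] [IsFractionRing A K] :
    IsCompleteIdeal K (⊤ : Ideal A) := by
  intro z hz
  have h_int : IsIntegral A z := isIntegral_of_forall_isOver z fun V hV ↦ by
    simpa using (hz V hV).div_mem hV.isDominant_top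
  obtain ⟨y, hy⟩ := IsIntegrallyClosed.isIntegral_iff.1 h_int
  exact ⟨y, trivial, hy⟩

lemma isUnit_or_isUnit_of_isDominant_top [IsLocalRing A] [FaithfulSMul A K] {a b : A}
    (hdom : ∀ V : ValuationSubring K, IsOver A V →
      IsDominant V (⊤ : Ideal A) a ∨ IsDominant V (⊤ : Ideal A) b) :
    IsUnit a ∨ IsUnit b := by
  obtain ⟨V, hV, hVm⟩ := exists_isOver_forall_mem_iff_valuation_lt_one
    (FaithfulSMul.algebraMap_injective A K) (maximalIdeal A)
  have hunit {c : A} (hc : IsDominant V ⊤ c) : IsUnit c := by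
    refine of_not_not fun hcu ↦ ((hVm c).1 ((mem_maximalIdeal c).2 hcu)).not_ge ?_
    simpa using hc.2 1 trivial
  exact (hdom V hV).imp hunit hunit

theorem exists_isReductionPair (k : Type*) [Field k] [Infinite k] [IsDomain A] [IsNoetherianRing A]
    [IsLocalRing A] [Algebra k A] [IsIntegrallyClosed A] [IsFractionRing A K]
    (hdim : ringKrullDim A = 2) {ι : Type*} [Fintype ι] {I : ι → Ideal A}
    (hprim : ∀ i, ∃ n, maximalIdeal A ^ n ≤ I i) (hI : ∀ i, I i ≠ ⊥)
    (hrees : ∀ i, IsCMNormalDomain (reesAlgebra (I i))) :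
    ∃ a b : ι → A, IsReductionPair K I a b ∧
      ∀ p : Ideal A, p.IsPrime → ∏ i, a i ∈ p → ∏ i, b i ∈ p → p = maximalIdeal A := by
  obtain ⟨a, b, ha, hb, ha0, hb0, hdom, hp⟩ := exists_general_elements (K := K) k hdim hprim
  have ha0' (i) : a i ≠ 0 := Finset.prod_ne_zero_iff.1 ha0 i (Finset.mem_univ i)
  have hb0' (i) : b i ≠ 0 := Finset.prod_ne_zero_iff.1 hb0 i (Finset.mem_univ i)
  have hzero {x : A} : algebraMap A K x = 0 → x = 0 := (FaithfulSMul.algebraMap_eq_zero_iff A K).1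
  have hdom' (V : ValuationSubring K) (hV : IsOver A V) :
      (∀ i, IsDominant V (I i) (a i)) ∨ ∀ i, IsDominant V (I i) (b i) :=
    (hdom V hV).imp (IsDominant.of_prod ha (mt hzero ha0))
      (IsDominant.of_prod hb (mt hzero hb0))
  have hdom'' (i) (V : ValuationSubring K) (hV : IsOver A V) :
      IsDominant V (I i) (a i) ∨ IsDominant V (I i) (b i) :=
    (hdom' V hV).imp (fun h ↦ h i) fun h ↦ h i
  have hpow (i) (n : ℕ) : IsCompleteIdeal K (I i ^ n) :=
    have := (hrees i).2.2
    isCompleteIdeal_pow_of_isIntegrallyClosed_reesAlgebra (hI i) n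
  refine ⟨a, b, ⟨ha, hb, by simpa using ha0', by simpa using hb0', fun i ↦ ?_,
    isCompleteIdeal_top_of_isIntegrallyClosed, hpow, hdom'⟩, hp⟩
  by_cases htop : I i = ⊤
  · obtain h | h := isUnit_or_isUnit_of_isDominant_top (htop ▸ hdom'' i)
    · simp [htop, Ideal.span_singleton_eq_top.2 h]
    · simp [htop, Ideal.span_singleton_eq_top.2 h]
  · exact sq_le_span_mul_sup_span_mul hdim.ge (le_maximalIdeal htop) (ha i) (hb i) (ha0' i)
      (hb0' i) (hdom'' i) (fun p hpp hap hbp ↦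
        hp p hpp (p.mem_of_dvd (Finset.dvd_prod_of_mem a (Finset.mem_univ i)) hap)
          (p.mem_of_dvd (Finset.dvd_prod_of_mem b (Finset.mem_univ i)) hbp)) (hrees i).1

end ExistsReductionPair

section Merge

open MvPolynomial IsLocalRing RingTheory.Sequence

section Grade

variable {R S : Type*} [CommRing R] [CommRing S]

lemma isWeaklyRegular_cons_of_ker_eq_span {f : R →+* S} (hf : Function.Surjective f) {x : R}
    (hx : ∀ w, x * w = 0 → w = 0) (hker : RingHom.ker f = Ideal.span {x}) {rs : List R}
    (h : IsWeaklyRegular S (rs.map f)) : IsWeaklyRegular R (x :: rs) := by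
  have mem_map_iff (rs : List R) (w : R) :
      f w ∈ Ideal.ofList (rs.map f) ↔ w ∈ Ideal.ofList (x :: rs) := by
    rw [← Ideal.map_ofList, ← Ideal.mem_comap, Ideal.comap_map_of_surjective' f hf, hker,
      Ideal.ofList_cons, sup_comm]
  induction rs using List.reverseRecOn with
  | nil =>
    refine (isWeaklyRegular_append_singleton_iff [] x).2 ⟨.nil _ _, fun w hw ↦ ?_⟩
    simpa using hx w (by simpa using hw)
  | append_singleton rs z ih =>
    rw [List.map_append, List.map_singleton, isWeaklyRegular_append_singleton_iff] at h
    refine (isWeaklyRegular_append_singleton_iff (x :: rs) z).2 ⟨ih h.1, fun w hw ↦ ?_⟩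
    rw [← mem_map_iff, map_mul] at hw
    exact (mem_map_iff rs w).1 (h.2 _ hw)

/-- `I` has grade at least `n`, that is, it contains a weakly regular sequence of length `n`. For
weakly regular sequences `⊤` has infinite grade, as usual. -/
def GradeGE (I : Ideal R) (n : ℕ) : Prop :=
  ∃ rs : List R, rs.length = n ∧ (∀ r ∈ rs, r ∈ I) ∧ IsWeaklyRegular R rs

lemma GradeGE.comap_succ_of_ker_eq_span {J : Ideal S} {n : ℕ} (hJ : GradeGE J n) {f : R →+* S}
    (hf : Function.Surjective f) {x : R} (hx : ∀ w, x * w = 0 → w = 0)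
    (hker : RingHom.ker f = Ideal.span {x}) : GradeGE (J.comap f) (n + 1) := by
  obtain ⟨rs, rfl, hmem, hreg⟩ := hJ
  obtain ⟨ts, rfl⟩ := List.map_surjective_iff.2 hf rs
  have hxker : f x = 0 := by
    rw [← RingHom.mem_ker, hker]
    exact Ideal.mem_span_singleton_self x
  refine ⟨x :: ts, by simp, ?_, isWeaklyRegular_cons_of_ker_eq_span hf hx hker hreg⟩
  refine List.forall_mem_cons.2 ⟨?_, fun t ht ↦ hmem _ (List.mem_map_of_mem ht)⟩
  rw [Ideal.mem_comap, hxker]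
  exact zero_mem J

end Grade

section MulFirstTwo

variable {M : Type*} {r : ℕ}

/-- The tuple `(f 0 * f 1, f 2, …, f (r + 1))`, which reduces statements about `r + 2` ideals to
`r + 1` ideals. -/
def mulFirstTwo [Mul M] (f : Fin (r + 2) → M) : Fin (r + 1) → M :=
  Fin.cons (f 0 * f 1) fun i ↦ f i.succ.succ

@[simp]
lemma mulFirstTwo_zero [Mul M] (f : Fin (r + 2) → M) : mulFirstTwo f 0 = f 0 * f 1 := rfl

@[simp]
lemma mulFirstTwo_succ [Mul M] (f : Fin (r + 2) → M) (i : Fin r) :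
    mulFirstTwo f i.succ = f i.succ.succ := rfl

lemma prod_mulFirstTwo [CommMonoid M] (f : Fin (r + 2) → M) :
    ∏ i, mulFirstTwo f i = ∏ i, f i := by
  simp [Fin.prod_univ_succ, mul_assoc]

end MulFirstTwo

namespace IsReductionPair

variable {A K : Type*} [CommRing A] [IsNoetherianRing A] [Field K] [Algebra A K]

lemma exists_eq_mul_add_mul_prod [FaithfulSMul A K] {ι : Type*} {I : ι → Ideal A} {a b : ι → A}
    (h : IsReductionPair K I a b) (i : ι) (s : Finset ι) (n : ι → ℕ) {y : A}
    (hy : y ∈ I i * ∏ j ∈ s, I j ^ n j) :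
    ∃ x ∈ ∏ j ∈ s, I j ^ n j, ∃ d ∈ I i, y = a i * x + d * ∏ j ∈ s, b j ^ n j := by
  have hb0 : algebraMap A K (∏ j ∈ s, b j ^ n j) ≠ 0 := by
    simp only [map_prod, map_pow]
    exact Finset.prod_ne_zero_iff.2 fun j _ ↦ pow_ne_zero _ (h.right_ne_zero j)
  obtain ⟨x, hx, d, hd, hyxd⟩ := exists_eq_mul_add_mul_of_memExtension_mul (h.left_mem i)
    (h.right_mem i) (h.left_ne_zero i) (h.right_ne_zero i)
    (Ideal.prod_mem_prod fun j _ ↦ Ideal.pow_mem_pow (h.right_mem j) _) hb0 (h.sq_le i)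
    (h.isCompleteIdeal_pow i) (h.isCompleteIdeal_prod s n)
    (fun V hV ↦ (h.isDominant V hV).imp (fun hV' ↦ hV' i) fun hV' ↦
      ⟨hV' i, IsDominant.prod hV s fun j _ ↦ (hV' j).pow hV _⟩)
    fun V _ ↦ memExtension_algebraMap V hy
  exact ⟨x, hx, d, hd, FaithfulSMul.algebraMap_injective A K hyxd⟩

lemma sq_mul_le [FaithfulSMul A K] {I : Fin 2 → Ideal A} {a b : Fin 2 → A}
    (h : IsReductionPair K I a b) :
    (I 0 * I 1) ^ 2 ≤
      Ideal.span {a 0 * a 1} * (I 0 * I 1) ⊔ Ideal.span {b 0 * b 1} * (I 0 * I 1) := by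
  intro y hy
  obtain ⟨x, hx, d, hd, rfl⟩ := h.exists_eq_mul_add_mul_prod 0 .univ ![1, 2] (y := y) <| by
    simpa [mul_pow, ← mul_assoc, ← sq] using hy
  obtain ⟨x', hx', d', hd', rfl⟩ := h.exists_eq_mul_add_mul_prod 1 .univ ![1, 1] (y := x) <| by
    simpa [mul_left_comm, ← sq] using hx
  simp only [Fin.prod_univ_two, Matrix.cons_val_zero, Matrix.cons_val_one, pow_one] at hx' ⊢
  have hy' : a 0 * (a 1 * x' + d' * (b 0 * b 1)) + d * (b 0 * b 1 ^ 2) =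
      a 0 * a 1 * x' + b 0 * b 1 * (a 0 * d' + d * b 1) := by ring
  rw [hy']
  exact Submodule.add_mem_sup (Ideal.mul_mem_mul (Ideal.mem_span_singleton_self _) hx')
    (Ideal.mul_mem_mul (Ideal.mem_span_singleton_self _) (add_mem
      (Ideal.mul_mem_mul (h.left_mem 0) hd') (Ideal.mul_mem_mul hd (h.right_mem 1))))

theorem mulFirstTwo [FaithfulSMul A K] {r : ℕ} {I : Fin (r + 2) → Ideal A}
    {a b : Fin (r + 2) → A} (h : IsReductionPair K I a b) :
    IsReductionPair K (mulFirstTwo I) (mulFirstTwo a) (mulFirstTwo b) where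
  left_mem := Fin.cases (Ideal.mul_mem_mul (h.left_mem 0) (h.left_mem 1)) fun i ↦ h.left_mem _
  right_mem := Fin.cases (Ideal.mul_mem_mul (h.right_mem 0) (h.right_mem 1)) fun i ↦ h.right_mem _
  left_ne_zero := Fin.cases (by simp [h.left_ne_zero]) fun i ↦ h.left_ne_zero _
  right_ne_zero := Fin.cases (by simp [h.right_ne_zero]) fun i ↦ h.right_ne_zero _
  sq_le := Fin.cases (h.comp ![0, 1]).sq_mul_le fun i ↦ h.sq_le _
  isCompleteIdeal_top := h.isCompleteIdeal_top
  isCompleteIdeal_pow := Fin.cases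
    (fun n ↦ by simpa [mul_pow] using (h.comp ![0, 1]).isCompleteIdeal_prod .univ fun _ ↦ n)
    fun i ↦ h.isCompleteIdeal_pow _
  isDominant V hV := (h.isDominant V hV).imp
    (fun hV' ↦ Fin.cases ((hV' 0).mul (hV' 1)) fun i ↦ hV' _)
    fun hV' ↦ Fin.cases ((hV' 0).mul (hV' 1)) fun i ↦ hV' _

end IsReductionPair

lemma prod_pow_add_single {M : Type*} [CommMonoid M] {ι : Type*} [Fintype ι] (u : ι → M)
    (n : ι →₀ ℕ) (i : ι) :
    ∏ l, u l ^ (n + Finsupp.single i 1 : ι →₀ ℕ) l = u i * ∏ l, u l ^ n l := by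
  classical
  simp only [Finsupp.add_apply, pow_add, Finset.prod_mul_distrib, Finsupp.single_apply, pow_ite,
    pow_one, pow_zero, Finset.prod_ite_eq, Finset.mem_univ, if_true, mul_comm]

-- After rescaling the variables by `u`, this is division by a linear form with unit coefficient.
lemma valuation_coeff_le_of_eq_mul {K Γ₀ ι : Type*} [Field K] [LinearOrderedCommGroupWithZero Γ₀]
    [Fintype ι] (v : Valuation K Γ₀) {u : ι → K} {i j : ι} (hij : i ≠ j) (hui : u i ≠ 0) {d : K}
    (hd : v d ≤ v (u j)) {f g : MvPolynomial ι K} (hfg : f = (C (u i) * X i - C d * X j) * g)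
    (hf : ∀ n : ι →₀ ℕ, v (coeff n f) ≤ v (∏ l, u l ^ n l)) (n : ι →₀ ℕ) :
    v (coeff n g) ≤ v (∏ l, u l ^ n l) := by
  classical
  have hcoeff (n : ι →₀ ℕ) : u i * coeff n g =
      coeff (n + Finsupp.single i 1) f + d * coeff (n + Finsupp.single i 1) (X j * g) := by
    simp only [hfg, sub_mul, mul_assoc, coeff_sub, coeff_C_mul, add_comm n, coeff_X_mul,
      sub_add_cancel]
  have hstep (n : ι →₀ ℕ) (hn : v (d * coeff (n + Finsupp.single i 1) (X j * g)) ≤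
      v (∏ l, u l ^ (n + Finsupp.single i 1 : ι →₀ ℕ) l)) : v (coeff n g) ≤ v (∏ l, u l ^ n l) := by
    have h := (v.map_add _ _).trans (max_le (hf _) hn)
    rw [← hcoeff, prod_pow_add_single, map_mul, map_mul] at h
    exact le_of_mul_le_mul_left h (zero_lt_iff.2 ((v.ne_zero_iff).2 hui))
  induction hN : n j generalizing n with
  | zero =>
    refine hstep n ?_
    rw [coeff_X_mul', if_neg (by simp [hN, hij.symm]), mul_zero, map_zero]
    exact zero_le
  | succ N ih =>
    obtain ⟨m, rfl⟩ : ∃ m, n = m + Finsupp.single j 1 :=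
      ⟨n - Finsupp.single j 1, (tsub_add_cancel_of_le (by simp [hN])).symm⟩
    refine hstep _ ?_
    have hm : (m + Finsupp.single i 1 : ι →₀ ℕ) j = N := by simpa [hij.symm] using hN
    rw [add_right_comm, add_comm _ (Finsupp.single j 1), coeff_X_mul, add_comm _ (_ + _),
      prod_pow_add_single, map_mul, map_mul]
    exact mul_le_mul' hd (ih _ hm)

section MergeVars

variable {R : Type*} [CommRing R] {r : ℕ}

/-- The substitution `X₀ ↦ b X₀`, `X₁ ↦ a X₀`, `Xᵢ ↦ Xᵢ₋₁` for `i ≥ 2`. For general `a ∈ I₀` and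
`b ∈ I₁` it maps `𝓡(I₀, I₁, I₂, …)` onto `𝓡(I₀ I₁, I₂, …)`. -/
noncomputable def mergeVars (r : ℕ) (a b : R) :
    MvPolynomial (Fin (r + 2)) R →ₐ[R] MvPolynomial (Fin (r + 1)) R :=
  aeval (Fin.cons (C b * X 0) (Fin.cons (C a * X 0) fun i ↦ X i.succ))

@[simp]
lemma mergeVars_X_zero (a b : R) : mergeVars r a b (X 0) = C b * X 0 :=
  aeval_X _ _

@[simp]
lemma mergeVars_X_one (a b : R) : mergeVars r a b (X 1) = C a * X 0 :=
  aeval_X _ _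

@[simp]
lemma mergeVars_X_succ_succ (a b : R) (i : Fin r) :
    mergeVars r a b (X i.succ.succ) = X i.succ :=
  aeval_X _ _

@[simp]
lemma mergeVars_C (a b c : R) : mergeVars r a b (C c) = C c :=
  aeval_C _ _

lemma constantCoeff_mergeVars (a b : R) (f : MvPolynomial (Fin (r + 2)) R) :
    constantCoeff (mergeVars r a b f) = constantCoeff f := by
  have h : constantCoeff.comp (mergeVars r a b).toRingHom = constantCoeff := by
    refine ringHom_ext (by simp) (Fin.cases ?_ (Fin.cases ?_ fun i ↦ ?_)) <;> simp
  exact congr($h f)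

lemma map_mergeVars {S : Type*} [CommRing S] (φ : R →+* S) (a b : R)
    (f : MvPolynomial (Fin (r + 2)) R) :
    map φ (mergeVars r a b f) = mergeVars r (φ a) (φ b) (map φ f) := by
  have h : (map φ).comp (mergeVars r a b).toRingHom =
      (mergeVars r (φ a) (φ b)).toRingHom.comp (map φ) := by
    refine ringHom_ext (by simp) (Fin.cases ?_ (Fin.cases ?_ fun i ↦ ?_)) <;> simp
  exact congr($h f)

lemma mergeVars_sub_eq_zero (a b : R) : mergeVars r a b (C a * X 0 - C b * X 1) = 0 := by
  simp only [map_sub, map_mul, mergeVars_C, mergeVars_X_zero, mergeVars_X_one]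
  ring

lemma C_mul_X_sub_C_mul_X_ne_zero {ι : Type*} {i j : ι} (hij : i ≠ j) {a : R} (ha : a ≠ 0) (b : R) :
    (C a * X i - C b * X j : MvPolynomial ι R) ≠ 0 := by
  classical
  intro h
  have hcoeff := congr(coeff (Finsupp.single i 1) $h)
  simp [coeff_C_mul, coeff_X, Finsupp.single_left_inj, hij.symm, ha] at hcoeff

lemma dvd_of_mergeVars_eq_zero {K : Type*} [Field K] {a b : K} (ha : a ≠ 0)
    {f : MvPolynomial (Fin (r + 2)) K} (hf : mergeVars r a b f = 0) :
    C a * X 0 - C b * X 1 ∣ f := by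
  set x : MvPolynomial (Fin (r + 2)) K := C a * X 0 - C b * X 1
  let ψ : MvPolynomial (Fin (r + 1)) K →ₐ[K] MvPolynomial (Fin (r + 2)) K :=
    aeval (Fin.cons (C a⁻¹ * X 1) fun i ↦ X i.succ.succ)
  have hψ0 : ψ (X 0) = C a⁻¹ * X 1 := aeval_X _ _
  have hψ (i : Fin r) : ψ (X i.succ) = X i.succ.succ := aeval_X _ _
  have hψC (c : K) : ψ (C c) = C c := aeval_C _ _
  have hinv : (C a : MvPolynomial (Fin (r + 2)) K) * C a⁻¹ = 1 := by
    rw [← map_mul, mul_inv_cancel₀ ha, map_one]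
  let q := Ideal.Quotient.mkₐ K (Ideal.span {x})
  have hq : q = q.comp (ψ.comp (mergeVars r a b)) := by
    have eq_of_dvd {u v} (h : x ∣ u - v) : q u = q v :=
      Ideal.Quotient.eq.2 (Ideal.mem_span_singleton.2 h)
    refine algHom_ext (Fin.cases (eq_of_dvd ?_) (Fin.cases (eq_of_dvd ?_) fun i ↦ ?_))
    · refine ⟨C a⁻¹, ?_⟩
      simp only [RingHom.coe_coe, AlgHom.comp_apply, mergeVars_X_zero, map_mul, hψ0, hψC]
      linear_combination (-X 0) * hinv
    · simp [hψ0, hψC, ← mul_assoc, hinv]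
    · simp [hψ]
  have hqf : q f = 0 := by rw [hq, AlgHom.comp_apply, AlgHom.comp_apply, hf, map_zero, map_zero]
  exact Ideal.mem_span_singleton.1 (Ideal.Quotient.eq_zero_iff_mem.1 hqf)

end MergeVars

section MultiRees

variable {A K : Type*} [CommRing A] [IsNoetherianRing A] [Field K] [Algebra A K] [FaithfulSMul A K]
  {r : ℕ} {I : Fin (r + 2) → Ideal A} {a b : Fin (r + 2) → A}

lemma map_mergeVars_multiReesAlgebra (h : IsReductionPair K I a b) :
    (multiReesAlgebra I).map (mergeVars r (a 0) (b 1)) = multiReesAlgebra (mulFirstTwo I) := by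
  apply le_antisymm
  · rw [Subalgebra.map_le]
    refine Algebra.adjoin_le fun z hz ↦ ?_
    obtain ⟨i, y, hy, rfl⟩ := Set.mem_iUnion.1 hz
    change mergeVars r (a 0) (b 1) (C y * X i) ∈ multiReesAlgebra (mulFirstTwo I)
    cases i using Fin.cases with
    | zero =>
      rw [map_mul, mergeVars_C, mergeVars_X_zero, ← mul_assoc, ← map_mul]
      exact C_mul_X_mem_multiReesAlgebra (Ideal.mul_mem_mul hy (h.right_mem 1))
    | succ i =>
      cases i using Fin.cases with
      | zero =>
        rw [Fin.succ_zero_eq_one, map_mul, mergeVars_C, mergeVars_X_one, ← mul_assoc,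
          ← map_mul, mul_comm y]
        exact C_mul_X_mem_multiReesAlgebra (Ideal.mul_mem_mul (h.left_mem 0) hy)
      | succ i =>
        rw [map_mul, mergeVars_C, mergeVars_X_succ_succ]
        exact C_mul_X_mem_multiReesAlgebra hy
  · refine Algebra.adjoin_le fun z hz ↦ ?_
    obtain ⟨i, y, hy, rfl⟩ := Set.mem_iUnion.1 hz
    cases i using Fin.cases with
    | zero =>
      obtain ⟨x, hx, d, hd, rfl⟩ := h.exists_eq_mul_add_mul_prod 0 {1} (fun _ ↦ 1) (y := y)
        (by simpa using hy)
      refine ⟨C x * X 1 + C d * X 0, add_mem (C_mul_X_mem_multiReesAlgebra (by simpa using hx))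
        (C_mul_X_mem_multiReesAlgebra hd), ?_⟩
      simp
      ring
    | succ i => exact ⟨_, C_mul_X_mem_multiReesAlgebra (i := i.succ.succ) hy, by simp⟩

lemma exists_mem_multiReesAlgebra_eq_mul (h : IsReductionPair K I a b)
    {f : MvPolynomial (Fin (r + 2)) A} (hf : f ∈ multiReesAlgebra I)
    (hf0 : mergeVars r (a 0) (b 1) f = 0) :
    ∃ g ∈ multiReesAlgebra I, f = (C (a 0) * X 0 - C (b 1) * X 1) * g := by
  have hmap := map_mergeVars (algebraMap A K) (a 0) (b 1) f
  rw [hf0, map_zero] at hmap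
  obtain ⟨g, hg⟩ := dvd_of_mergeVars_eq_zero (h.left_ne_zero 0) hmap.symm
  obtain ⟨g, hgI, rfl⟩ := exists_mem_multiReesAlgebra_map_eq (h.isCompleteIdeal_prod .univ)
      fun V hV n ↦ by
    have hdom {u : Fin (r + 2) → A} (hu : ∀ i, IsDominant V (I i) (u i)) (n : Fin (r + 2) →₀ ℕ) :
        IsDominant V (∏ l, I l ^ n l) (∏ l, u l ^ n l) :=
      IsDominant.prod hV .univ fun l _ ↦ (hu l).pow hV (n l)
    have hle {u : Fin (r + 2) → A} (hu : ∀ i, IsDominant V (I i) (u i)) (n : Fin (r + 2) →₀ ℕ) :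
        V.valuation (coeff n (map (algebraMap A K) f)) ≤
          V.valuation (∏ l, algebraMap A K (u l) ^ n l) := by
      simpa only [map_prod, map_pow, coeff_map] using
        (hdom hu n).2 _ (mem_multiReesAlgebra_iff.1 hf n)
    have hext {u : Fin (r + 2) → A} (hu : ∀ i, IsDominant V (I i) (u i))
        (hle : V.valuation (coeff n g) ≤ V.valuation (∏ l, algebraMap A K (u l) ^ n l)) :
        MemExtension V (∏ l, I l ^ n l) (coeff n g) :=
      ⟨_, (hdom hu n).1, by simpa only [map_prod, map_pow] using hle⟩
    rcases h.isDominant V hV with hV' | hV'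
    · exact hext hV' (valuation_coeff_le_of_eq_mul V.valuation (u := fun l ↦ algebraMap A K (a l))
        zero_ne_one (h.left_ne_zero 0) ((hV' 1).2 _ (h.right_mem 1)) hg (hle hV') n)
    · refine hext hV' (valuation_coeff_le_of_eq_mul V.valuation (u := fun l ↦ algebraMap A K (b l))
        zero_ne_one.symm (h.right_ne_zero 1) ((hV' 0).2 _ (h.left_mem 0))
        (f := -map (algebraMap A K) f) (by rw [hg]; ring) (fun m ↦ ?_) n)
      simpa only [coeff_neg, Valuation.map_neg] using hle hV' m
  refine ⟨g, hgI, map_injective _ (FaithfulSMul.algebraMap_injective A K) ?_⟩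
  rw [hg]
  simp

theorem GradeGE.succ_of_mulFirstTwo [IsDomain A] [IsLocalRing A]
    (h : IsReductionPair K I a b) {n : ℕ}
    (hn : GradeGE (multiReesAlgebra.irrelevantIdeal (mulFirstTwo I)) n) :
    GradeGE (multiReesAlgebra.irrelevantIdeal I) (n + 1) := by
  obtain ⟨φ, hφ⟩ : ∃ φ : multiReesAlgebra I →+* multiReesAlgebra (mulFirstTwo I),
      ∀ z, (φ z : MvPolynomial (Fin (r + 1)) A) = mergeVars r (a 0) (b 1) z :=
    ⟨(((mergeVars r (a 0) (b 1)).comp (multiReesAlgebra I).val).codRestrict _ fun z ↦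
      map_mergeVars_multiReesAlgebra h ▸ ⟨z, z.2, rfl⟩).toRingHom, fun _ ↦ rfl⟩
  have hsurj : Function.Surjective φ := by
    rintro ⟨z, hz⟩
    obtain ⟨y, hy, hyz⟩ : z ∈ (multiReesAlgebra I).map (mergeVars r (a 0) (b 1)) := by
      rwa [map_mergeVars_multiReesAlgebra h]
    exact ⟨⟨y, hy⟩, Subtype.ext ((hφ _).trans hyz)⟩
  have hcomap : (multiReesAlgebra.irrelevantIdeal (mulFirstTwo I)).comap φ =
      multiReesAlgebra.irrelevantIdeal I := by
    ext z
    rw [Ideal.mem_comap, multiReesAlgebra.mem_irrelevantIdeal, hφ, constantCoeff_mergeVars,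
      multiReesAlgebra.mem_irrelevantIdeal]
  obtain ⟨x, hx⟩ : ∃ x : multiReesAlgebra I, (x : MvPolynomial (Fin (r + 2)) A) =
      C (a 0) * X 0 - C (b 1) * X 1 :=
    ⟨⟨_, sub_mem (C_mul_X_mem_multiReesAlgebra (h.left_mem 0))
      (C_mul_X_mem_multiReesAlgebra (h.right_mem 1))⟩, rfl⟩
  have ha0 : a 0 ≠ 0 := fun ha0 ↦ h.left_ne_zero 0 (by rw [ha0, map_zero])
  have hx0 : x ≠ 0 := fun hx0 ↦
    C_mul_X_sub_C_mul_X_ne_zero zero_ne_one ha0 (b 1) (by rw [← hx, hx0]; rfl)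
  have hker : RingHom.ker φ = Ideal.span {x} := by
    refine le_antisymm (fun z hz ↦ ?_) ((Ideal.span_singleton_le_iff_mem _).2 (Subtype.ext ?_))
    · obtain ⟨g, hg, hzg⟩ := exists_mem_multiReesAlgebra_eq_mul h z.2
        ((hφ z).symm.trans congr(Subtype.val $hz))
      exact Ideal.mem_span_singleton.2 ⟨⟨g, hg⟩, Subtype.ext (by rw [hzg, ← hx]; rfl)⟩
    · rw [hφ, hx, mergeVars_sub_eq_zero]
      rfl
  rw [← hcomap]
  exact hn.comap_succ_of_ker_eq_span hsurj (fun w hw ↦ (mul_eq_zero.1 hw).resolve_left hx0) hker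

end MultiRees

end Merge

section SingleIdeal

open IsLocalRing Polynomial RingTheory.Sequence

section Coeff

variable {A : Type*} [CommRing A] {I : Ideal A}

lemma coeff_zero_reesGenerator_mul {b : A} (hb : b ∈ I) (f : reesAlgebra I) :
    ((reesGenerator hb * f : reesAlgebra I) : A[X]).coeff 0 = 0 := by
  rw [Subalgebra.coe_mul, coe_reesGenerator, mul_right_comm, coeff_mul_X_zero]

lemma coeff_succ_reesGenerator_mul {b : A} (hb : b ∈ I) (f : reesAlgebra I) (n : ℕ) :
    ((reesGenerator hb * f : reesAlgebra I) : A[X]).coeff (n + 1) = b * (f : A[X]).coeff n := by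
  rw [Subalgebra.coe_mul, coe_reesGenerator, mul_right_comm, coeff_mul_X, coeff_C_mul]

lemma coeff_algebraMap_mul_reesAlgebra (a : A) (f : reesAlgebra I) (n : ℕ) :
    ((algebraMap A _ a * f : reesAlgebra I) : A[X]).coeff n = a * (f : A[X]).coeff n :=
  coeff_C_mul _

lemma reesMonomial_eq_add {n : ℕ} {a b w y z : A} (hb : b ∈ I) (hw : w ∈ I ^ (n + 1))
    (hy : y ∈ I ^ (n + 1)) (hz : z ∈ I ^ n) (h : w = a * y + b * z) :
    reesMonomial hw = algebraMap A _ a * reesMonomial hy + reesGenerator hb * reesMonomial hz := by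
  apply Subtype.ext
  simp only [Subalgebra.coe_add, Subalgebra.coe_mul, coe_reesMonomial, coe_reesGenerator,
    coe_algebraMap_reesAlgebra, h, C_add, C_mul]
  ring

lemma pow_add_two_le_of_sq_le {a b : A} (hsq : I ^ 2 ≤ Ideal.span {a} * I ⊔ Ideal.span {b} * I)
    (n : ℕ) : I ^ (n + 2) ≤ Ideal.span {a} * I ^ (n + 1) ⊔ Ideal.span {b} * I ^ (n + 1) :=
  calc
    I ^ (n + 2) = I ^ 2 * I ^ n := by ring
    _ ≤ (Ideal.span {a} * I ⊔ Ideal.span {b} * I) * I ^ n := Ideal.mul_mono_left hsq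
    _ = Ideal.span {a} * I ^ (n + 1) ⊔ Ideal.span {b} * I ^ (n + 1) := by
      rw [Ideal.sup_mul, pow_succ', mul_assoc, mul_assoc]

lemma gradeGE_reesIrrelevantIdeal_top [IsLocalRing A] {n : ℕ} (h : GradeGE (maximalIdeal A) n) :
    GradeGE (reesIrrelevantIdeal (⊤ : Ideal A)) (n + 1) := by
  refine h.comap_succ_of_ker_eq_span (fun a ↦ ⟨_, reesAugmentation_algebraMap a⟩)
    (x := reesGenerator (Submodule.mem_top (x := 1))) (fun w hw ↦ Subtype.ext ?_)
    (le_antisymm (fun f hf ↦ ?_) ?_)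
  · ext n
    rw [← one_mul (coeff _ n), ← coeff_succ_reesGenerator_mul Submodule.mem_top w, hw]
    rfl
  · rw [RingHom.mem_ker, reesAugmentation_apply] at hf
    rw [reesAlgebra_eq_sum f, hf, map_zero, zero_add]
    refine Ideal.sum_mem _ fun i _ ↦ ?_
    rw [reesMonomial_eq_add (a := 0) (b := 1) (z := (f : A[X]).coeff (i + 1)) Submodule.mem_top _
      (zero_mem _) (by simp [Ideal.top_pow]) (by ring), map_zero, zero_mul, zero_add]
    exact Ideal.mul_mem_right _ _ (Ideal.mem_span_singleton_self _)
  · rw [Ideal.span_singleton_le_iff_mem, RingHom.mem_ker, reesAugmentation_reesGenerator]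

end Coeff

variable {A : Type*} [CommRing A] [IsDomain A] {I : Ideal A} {a b : A}

lemma mem_pow_of_mul_mem_pow_succ (ha : a ∈ I) (hb0 : b ≠ 0)
    (hab : ∀ p q, a * p = b * q → b ∣ p)
    (hsq : I ^ 2 ≤ Ideal.span {a} * I ⊔ Ideal.span {b} * I) {n : ℕ} {c : A}
    (hc : b * c ∈ I ^ (n + 1)) : c ∈ I ^ n := by
  induction n generalizing c with
  | zero => simp
  | succ n ih =>
    obtain ⟨u, hu, v, hv, huv⟩ := Submodule.mem_sup.1 (pow_add_two_le_of_sq_le hsq n hc)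
    obtain ⟨y, hy, rfl⟩ := Ideal.mem_span_singleton_mul.1 hu
    obtain ⟨z, hz, rfl⟩ := Ideal.mem_span_singleton_mul.1 hv
    obtain ⟨y, rfl⟩ := hab y (c - z) (by linear_combination huv)
    have hcyz : c = a * y + z := mul_left_cancel₀ hb0 (by linear_combination -huv)
    rw [hcyz]
    exact add_mem (pow_succ' I n ▸ Ideal.mul_mem_mul ha (ih hy)) hz

lemma mem_span_reesGenerator_of_algebraMap_mul_mem (ha : a ∈ I) (hb : b ∈ I) (ha0 : a ≠ 0)
    (hb0 : b ≠ 0) (hab : ∀ p q, a * p = b * q → b ∣ p)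
    (hsq : I ^ 2 ≤ Ideal.span {a} * I ⊔ Ideal.span {b} * I) {w : reesAlgebra I}
    (hw : algebraMap A _ a * w ∈ Ideal.span {reesGenerator hb}) :
    w ∈ Ideal.span {reesGenerator hb} := by
  obtain ⟨u, hu⟩ := Ideal.mem_span_singleton.1 hw
  have hcoeff (n : ℕ) :
      a * (w : A[X]).coeff n = ((reesGenerator hb * u : reesAlgebra I) : A[X]).coeff n := by
    rw [← hu, coeff_algebraMap_mul_reesAlgebra]
  have hzero : (w : A[X]).coeff 0 = 0 := by
    simpa only [coeff_zero_reesGenerator_mul, mul_eq_zero, ha0, false_or] using hcoeff 0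
  rw [reesAlgebra_eq_sum w, hzero, map_zero, zero_add]
  refine Ideal.sum_mem _ fun i _ ↦ ?_
  have hmem := coeff_mem_pow_of_mem_reesAlgebra w (i + 1)
  obtain ⟨c, hc⟩ := hab _ _ ((hcoeff (i + 1)).trans (coeff_succ_reesGenerator_mul ..))
  have hcI : c ∈ I ^ i := mem_pow_of_mul_mem_pow_succ ha hb0 hab hsq (hc ▸ hmem)
  refine Ideal.mem_span_singleton.2 ⟨reesMonomial hcI, ?_⟩
  rw [reesMonomial_eq_add (a := 0) hb hmem (zero_mem _) hcI (by rw [hc]; ring), map_zero, zero_mul,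
    zero_add]

lemma reesMonomial_mem_span_pair_of_mul_mem (ha : a ∈ I) (hb : b ∈ I) (hb0 : b ≠ 0)
    (hab : ∀ p q, a * p = b * q → b ∣ p)
    (hsq : I ^ 2 ≤ Ideal.span {a} * I ⊔ Ideal.span {b} * I) {w : reesAlgebra I} {N : ℕ}
    (hwN : (w : A[X]).natDegree ≤ N + 1) (hw : (reesGenerator ha - algebraMap A _ b) * w ∈
      Ideal.span {reesGenerator hb, algebraMap A (reesAlgebra I) a}) :
    reesMonomial (coeff_mem_pow_of_mem_reesAlgebra w (N + 1)) ∈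
      Ideal.span {reesGenerator hb, algebraMap A (reesAlgebra I) a} := by
  obtain ⟨u, v, huv⟩ := Ideal.mem_span_pair.1 hw
  have hcoeff : (u : A[X]).coeff (N + 1) * b + (v : A[X]).coeff (N + 2) * a =
      a * (w : A[X]).coeff (N + 1) := by
    have h := congrArg (fun f : reesAlgebra I ↦ (f : A[X]).coeff (N + 2)) huv
    simp only [sub_mul, mul_comm u, mul_comm v, Subalgebra.coe_sub, Subalgebra.coe_add, coeff_sub,
      coeff_add, coeff_succ_reesGenerator_mul, coeff_algebraMap_mul_reesAlgebra,
      coeff_eq_zero_of_natDegree_lt (Nat.lt_succ_of_le hwN)] at h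
    linear_combination h
  have hwI := coeff_mem_pow_of_mem_reesAlgebra w (N + 1)
  have hvI := coeff_mem_pow_of_mem_reesAlgebra v (N + 2)
  obtain ⟨c, hc⟩ := hab ((w : A[X]).coeff (N + 1) - (v : A[X]).coeff (N + 2))
    ((u : A[X]).coeff (N + 1)) (by linear_combination -hcoeff)
  have hcI : c ∈ I ^ N := mem_pow_of_mul_mem_pow_succ ha hb0 hab hsq
    (hc ▸ sub_mem hwI (Ideal.pow_le_pow_right (Nat.le_succ _) hvI))
  obtain ⟨_, hay, _, hbz, hyz⟩ := Submodule.mem_sup.1 (pow_add_two_le_of_sq_le hsq N hvI)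
  obtain ⟨y, hy, rfl⟩ := Ideal.mem_span_singleton_mul.1 hay
  obtain ⟨z, hz, rfl⟩ := Ideal.mem_span_singleton_mul.1 hbz
  have hzc : z + c ∈ I ^ N := add_mem (Ideal.pow_le_pow_right (Nat.le_succ _) hz) hcI
  rw [reesMonomial_eq_add (a := a) hb hwI hy hzc (by linear_combination hc - hyz)]
  exact add_mem (Ideal.mul_mem_right _ _ (Ideal.subset_span (by simp)))
    (Ideal.mul_mem_right _ _ (Ideal.subset_span (by simp)))

lemma mem_span_pair_of_reesGenerator_sub_mul_mem (ha : a ∈ I) (hb : b ∈ I) (hb0 : b ≠ 0)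
    (hab : ∀ p q, a * p = b * q → b ∣ p) (hba : ∀ p q, b * p = a * q → a ∣ p)
    (hsq : I ^ 2 ≤ Ideal.span {a} * I ⊔ Ideal.span {b} * I) {w : reesAlgebra I}
    (hw : (reesGenerator ha - algebraMap A _ b) * w ∈
      Ideal.span {reesGenerator hb, algebraMap A (reesAlgebra I) a}) :
    w ∈ Ideal.span {reesGenerator hb, algebraMap A (reesAlgebra I) a} := by
  obtain ⟨N, hN⟩ : ∃ N, (w : A[X]).natDegree ≤ N := ⟨_, le_rfl⟩
  induction N generalizing w with
  | zero =>
    obtain ⟨u, v, huv⟩ := Ideal.mem_span_pair.1 hw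
    have hcoeff : (v : A[X]).coeff 0 * a = -(b * (w : A[X]).coeff 0) := by
      have h := congrArg (fun f : reesAlgebra I ↦ (f : A[X]).coeff 0) huv
      simp only [sub_mul, mul_comm u, mul_comm v, Subalgebra.coe_sub, Subalgebra.coe_add, coeff_sub,
        coeff_add, coeff_zero_reesGenerator_mul, coeff_algebraMap_mul_reesAlgebra] at h
      linear_combination h
    obtain ⟨c, hc⟩ := hba ((w : A[X]).coeff 0) (-(v : A[X]).coeff 0) (by linear_combination hcoeff)
    rw [reesAlgebra_eq_sum w, Nat.le_zero.1 hN, Finset.sum_range_zero, add_zero, hc, map_mul]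
    exact Ideal.mul_mem_right _ _ (Ideal.subset_span (by simp))
  | succ N ih =>
    have htop := reesMonomial_mem_span_pair_of_mul_mem ha hb hb0 hab hsq hN hw
    refine (Submodule.sub_mem_iff_left _ htop).1 (ih ?_ ?_)
    · rw [mul_sub]
      exact sub_mem hw (Ideal.mul_mem_left _ _ htop)
    · rw [natDegree_le_iff_coeff_eq_zero] at hN ⊢
      intro n hn
      rw [Subalgebra.coe_sub, coe_reesMonomial, coeff_sub, coeff_C_mul_X_pow]
      split_ifs with h
      · rw [h, sub_self]
      · rw [hN n (by omega), sub_zero]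

theorem isWeaklyRegular_reesAlgebra (ha : a ∈ I) (hb : b ∈ I) (ha0 : a ≠ 0)
    (hb0 : b ≠ 0) (hab : ∀ p q, a * p = b * q → b ∣ p) (hba : ∀ p q, b * p = a * q → a ∣ p)
    (hsq : I ^ 2 ≤ Ideal.span {a} * I ⊔ Ideal.span {b} * I) :
    IsWeaklyRegular (reesAlgebra I)
      [reesGenerator hb, algebraMap A _ a, reesGenerator ha - algebraMap A _ b] := by
  refine (isWeaklyRegular_append_singleton_iff [_, _] _).2
    ⟨(isWeaklyRegular_append_singleton_iff [_] _).2
      ⟨(isWeaklyRegular_singleton_iff _ _).2 ?_, fun w hw ↦ ?_⟩, fun w hw ↦ ?_⟩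
  · exact (IsRegular.of_ne_zero (reesGenerator_ne_zero hb hb0)).left.isSMulRegular
  · rw [Ideal.ofList_singleton] at hw ⊢
    exact mem_span_reesGenerator_of_algebraMap_mul_mem ha hb ha0 hb0 hab hsq hw
  · rw [Ideal.ofList_cons, Ideal.ofList_singleton, ← Ideal.span_insert] at hw ⊢
    exact mem_span_pair_of_reesGenerator_sub_mul_mem ha hb hb0 hab hba hsq hw

theorem gradeGE_reesIrrelevantIdeal [IsLocalRing A] (hI : I ≤ maximalIdeal A) (ha : a ∈ I)
    (hb : b ∈ I) (ha0 : a ≠ 0) (hb0 : b ≠ 0) (hab : ∀ p q, a * p = b * q → b ∣ p)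
    (hba : ∀ p q, b * p = a * q → a ∣ p)
    (hsq : I ^ 2 ≤ Ideal.span {a} * I ⊔ Ideal.span {b} * I) :
    GradeGE (reesIrrelevantIdeal I) 3 := by
  refine ⟨_, rfl, ?_, isWeaklyRegular_reesAlgebra ha hb ha0 hb0 hab hba hsq⟩
  simpa [mem_reesIrrelevantIdeal, reesAugmentation_reesGenerator, reesAugmentation_algebraMap]
    using ⟨hI ha, hI hb⟩

end SingleIdeal

section Main

open IsLocalRing MvPolynomial RingTheory.Sequence multiReesAlgebra

section Dimension

variable {A : Type*} [CommRing A] [IsDomain A]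

lemma exists_C_mul_eq_aeval {ι : Type*} {a : ι → A} (ha : ∀ i, a i ≠ 0) (f : MvPolynomial ι A) :
    ∃ q : A, q ≠ 0 ∧ ∃ p : MvPolynomial ι A, C q * f = aeval (fun i ↦ C (a i) * X i) p := by
  induction f using MvPolynomial.induction_on with
  | C c => exact ⟨1, one_ne_zero, C c, by simp [algebraMap_eq]⟩
  | add f g hf hg =>
    obtain ⟨q, hq, p, hp⟩ := hf
    obtain ⟨q', hq', p', hp'⟩ := hg
    refine ⟨q * q', mul_ne_zero hq hq', C q' * p + C q * p', ?_⟩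
    simp only [map_add, map_mul, ← hp, ← hp', aeval_C, algebraMap_eq]
    ring
  | mul_X f i hf =>
    obtain ⟨q, hq, p, hp⟩ := hf
    refine ⟨q * a i, mul_ne_zero hq (ha i), p * X i, ?_⟩
    simp only [map_mul, ← hp, aeval_X]
    ring

-- The subalgebra generated by one nonzero element `aᵢ tᵢ` for each `i` is a polynomial ring with
-- the same fractions as the multi-Rees algebra.
theorem ringKrullDim_multiReesAlgebra_le [IsNoetherianRing A] {r : ℕ} {I : Fin r → Ideal A}
    (hI : ∀ i, I i ≠ ⊥) : ringKrullDim (multiReesAlgebra I) ≤ ringKrullDim A + r := by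
  choose a haI ha0 using fun i ↦ Submodule.exists_mem_ne_zero_of_ne_bot (hI i)
  let φ : MvPolynomial (Fin r) A →ₐ[A] multiReesAlgebra I :=
    aeval fun i ↦ ⟨_, C_mul_X_mem_multiReesAlgebra (haI i)⟩
  have coe_φ (p : MvPolynomial (Fin r) A) :
      (φ p : MvPolynomial (Fin r) A) = aeval (fun i ↦ C (a i) * X i) p :=
    comp_aeval_apply _ (multiReesAlgebra I).val p
  let _ : Algebra (MvPolynomial (Fin r) A) (multiReesAlgebra I) := φ.toAlgebra
  have : IsScalarTower A (MvPolynomial (Fin r) A) (multiReesAlgebra I) :=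
    .of_algebraMap_eq' φ.comp_algebraMap.symm
  have : Algebra.FiniteType A (multiReesAlgebra I) :=
    (Subalgebra.fg_iff_finiteType _).1 (multiReesAlgebra.fg I)
  obtain ⟨s, hs⟩ := (Algebra.FiniteType.of_restrictScalars_finiteType A
    (MvPolynomial (Fin r) A) (multiReesAlgebra I)).out
  have hfrac (y : multiReesAlgebra I) : ∃ p q : MvPolynomial (Fin r) A,
      algebraMap _ (multiReesAlgebra I) q ≠ 0 ∧
        algebraMap _ (multiReesAlgebra I) q * y = algebraMap _ _ p := by
    obtain ⟨q, hq, p, hp⟩ := exists_C_mul_eq_aeval ha0 (y : MvPolynomial (Fin r) A)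
    have hφq : (φ (C q) : MvPolynomial (Fin r) A) = C q := by simp [algebraMap_eq]
    refine ⟨p, C q, fun h ↦ hq (C_injective (Fin r) A ?_), Subtype.ext ?_⟩
    · rw [← hφq, map_zero]
      exact congr(Subtype.val $h)
    · rw [Subalgebra.coe_mul]
      exact (congrArg (· * _) hφq).trans (hp.trans (coe_φ p).symm)
  have hle := ringKrullDim_adjoin_le s.finite_toSet fun y _ ↦ hfrac y
  rw [hs, ringKrullDim_eq_of_ringEquiv Subalgebra.topEquiv.toRingEquiv,
    MvPolynomial.ringKrullDim_of_isNoetherianRing, Nat.card_fin] at hle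
  exact hle

end Dimension

lemma GradeGE.comap_ringEquiv {R S : Type*} [CommRing R] [CommRing S] {J : Ideal S} {n : ℕ}
    (h : GradeGE J n) (e : R ≃+* S) : GradeGE (J.comap e) n := by
  obtain ⟨rs, rfl, hmem, hreg⟩ := h
  refine ⟨rs.map e.symm, List.length_map _, List.forall_mem_map.2 fun s hs ↦ ?_,
    (isWeaklyRegular_map_ringEquiv_iff e.symm rs).2 hreg⟩
  rw [Ideal.mem_comap, e.apply_symm_apply]
  exact hmem s hs

lemma GradeGE.isCohenMacaulayLocalRing_localization {R : Type*} [CommRing R] [IsNoetherianRing R]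
    {p : Ideal R} [p.IsPrime] {n : ℕ} (h : GradeGE p n) (hn : ringKrullDim R ≤ n) :
    IsCohenMacaulayLocalRing (Localization.AtPrime p) := by
  obtain ⟨rs, rfl, hmem, hreg⟩ := h
  exact .of_isWeaklyRegular_localization p _ rs hmem hreg
    ((Ideal.height_le_ringKrullDim_of_ne_top Ideal.IsPrime.ne_top').trans hn)

section Grade

variable {A : Type*} [CommRing A]

lemma exists_ringEquiv_reesAlgebra (I : Fin 1 → Ideal A) :
    ∃ e : multiReesAlgebra I ≃+* reesAlgebra (I 0),
      ∀ z, reesAugmentation (I 0) (e z) = augmentation I z := by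
  have hmap : (multiReesAlgebra I).map (uniqueAlgEquiv A (Fin 1) : MvPolynomial (Fin 1) A →ₐ[A] _) =
      reesAlgebra (I 0) := by
    rw [multiReesAlgebra, AlgHom.map_adjoin, ← adjoin_monomial_eq_reesAlgebra,
      ← Set.iSup_eq_iUnion, iSup_unique, Set.image_image, Submodule.map_coe]
    refine congrArg _ (Set.image_congr fun a _ ↦ ?_)
    simp [Polynomial.C_mul_X_eq_monomial]
  refine ⟨(((uniqueAlgEquiv A (Fin 1)).subalgebraMap (multiReesAlgebra I)).trans
    (Subalgebra.equivOfEq _ _ hmap)).toRingEquiv, fun z ↦ ?_⟩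
  refine (coeff_uniqueAlgEquiv A (z : MvPolynomial (Fin 1) A) 0).trans ?_
  rw [Finsupp.single_zero]
  rfl

variable [IsLocalRing A]

lemma gradeGE_irrelevantIdeal_of_isEmpty {n : ℕ} (h : GradeGE (maximalIdeal A) n)
    (I : Fin 0 → Ideal A) : GradeGE (irrelevantIdeal I) n := by
  have hC (f : MvPolynomial (Fin 0) A) : f = C (constantCoeff f) := f.eq_C_of_isEmpty
  refine h.comap_ringEquiv (.ofBijective (augmentation I) ⟨fun f g hfg ↦ Subtype.ext ?_, fun c ↦
    ⟨algebraMap A _ c, constantCoeff_C _ c⟩⟩)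
  rw [hC f, hC g]
  exact congrArg C hfg

lemma gradeGE_irrelevantIdeal_of_reesIrrelevantIdeal {I : Fin 1 → Ideal A} {n : ℕ}
    (h : GradeGE (reesIrrelevantIdeal (I 0)) n) : GradeGE (irrelevantIdeal I) n := by
  obtain ⟨e, he⟩ := exists_ringEquiv_reesAlgebra I
  convert h.comap_ringEquiv e using 1
  ext z
  rw [Ideal.mem_comap, mem_reesIrrelevantIdeal, mem_irrelevantIdeal, ← augmentation_apply, ← he]

variable [IsDomain A] [IsNoetherianRing A] [IsIntegrallyClosed A]

lemma gradeGE_maximalIdeal_two (k : Type*) [Field k] [Infinite k] [Algebra k A]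
    (hdim : ringKrullDim A = 2) : GradeGE (maximalIdeal A) 2 := by
  obtain ⟨a, b, ha, hb, ha0, hb0, -, hab⟩ := exists_general_elements k (K := FractionRing A) hdim
    (I := fun _ : Unit ↦ maximalIdeal A) fun _ ↦ ⟨1, (pow_one _).le⟩
  simp only [Finset.univ_unique, Finset.prod_singleton] at ha0 hb0 hab
  refine ⟨[b default, a default], rfl, 
    List.forall_mem_cons.2 ⟨hb _, List.forall_mem_singleton.2 (ha _)⟩, ?_⟩
  refine (isWeaklyRegular_append_singleton_iff [_] _).2
    ⟨(isWeaklyRegular_singleton_iff _ _).2 (IsRegular.of_ne_zero hb0).left.isSMulRegular, ?_⟩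
  simp only [Ideal.ofList_singleton, Ideal.mem_span_singleton]
  rintro w ⟨q, hq⟩
  exact dvd_of_mul_eq_mul_of_one_lt_ringKrullDim (hdim ▸ by decide) hb0 hab hq

variable {K : Type*} [Field K] [Algebra A K] [FaithfulSMul A K]

theorem IsReductionPair.gradeGE_irrelevantIdeal (hdim : 1 < ringKrullDim A)
    (hgrade : GradeGE (maximalIdeal A) 2) {r : ℕ} {I : Fin r → Ideal A} {a b : Fin r → A}
    (h : IsReductionPair K I a b)
    (hab : ∀ p : Ideal A, p.IsPrime → ∏ i, a i ∈ p → ∏ i, b i ∈ p → p = maximalIdeal A) :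
    GradeGE (irrelevantIdeal I) (r + 2) := by
  induction r using Nat.twoStepInduction with
  | zero => exact gradeGE_irrelevantIdeal_of_isEmpty hgrade I
  | one =>
    simp only [Finset.univ_unique, Finset.prod_singleton, Fin.default_eq_zero] at hab
    have ha0 : a 0 ≠ 0 := fun ha0 ↦ h.left_ne_zero 0 (by rw [ha0, map_zero])
    have hb0 : b 0 ≠ 0 := fun hb0 ↦ h.right_ne_zero 0 (by rw [hb0, map_zero])
    refine gradeGE_irrelevantIdeal_of_reesIrrelevantIdeal ?_
    by_cases htop : I 0 = ⊤
    · exact htop ▸ gradeGE_reesIrrelevantIdeal_top hgrade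
    · exact gradeGE_reesIrrelevantIdeal (le_maximalIdeal htop) (h.left_mem 0) (h.right_mem 0)
        ha0 hb0 (fun _ _ ↦ dvd_of_mul_eq_mul_of_one_lt_ringKrullDim hdim hb0 hab)
        (fun _ _ ↦ dvd_of_mul_eq_mul_of_one_lt_ringKrullDim hdim ha0 fun p hp hb ha ↦
          hab p hp ha hb) (h.sq_le 0)
  | more r _ ih =>
    refine .succ_of_mulFirstTwo h (ih h.mulFirstTwo ?_)
    simpa only [prod_mulFirstTwo] using hab

end Grade

end Main

theorem stmt9_general (k : Type*) [Field k] [Infinite k]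
    (A : Type*) [CommRing A] [IsDomain A] [IsNoetherianRing A] [IsLocalRing A]
    [Algebra k A] [IsIntegrallyClosed A]
    (hdim : ringKrullDim A = 2)
    (r : ℕ) (I : Fin r → Ideal A)
    (hprim : ∀ i, ∃ n : ℕ, IsLocalRing.maximalIdeal A ^ n ≤ I i)
    (hrees : ∀ i, IsCMNormalDomain (reesAlgebra (I i))) :
    IsCMNormalDomain (multiReesAlgebra I) := by
  have hm0 : IsLocalRing.maximalIdeal A ≠ ⊥ := fun hm0 ↦ by
    rw [ringKrullDim_eq_zero_of_isField (IsLocalRing.isField_iff_maximalIdeal_eq.2 hm0)] at hdim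
    exact absurd hdim (by decide)
  have hI (i : Fin r) : I i ≠ ⊥ := fun hIi ↦
    (hprim i).elim fun n hn ↦ pow_ne_zero n hm0 (le_bot_iff.1 (hIi ▸ hn))
  obtain ⟨a, b, hpair, hab⟩ := exists_isReductionPair (K := FractionRing A) k hdim hprim hI hrees
  have hgrade : GradeGE (multiReesAlgebra.irrelevantIdeal I) (r + 2) :=
    hpair.gradeGE_irrelevantIdeal (hdim ▸ by decide) (gradeGE_maximalIdeal_two k hdim) hab
  have hCM := hgrade.isCohenMacaulayLocalRing_localization <| by
    simpa [hdim, add_comm] using ringKrullDim_multiReesAlgebra_le hI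
  exact ⟨⟨inferInstance, fun P hP ↦ multiReesAlgebra.isCohenMacaulayLocalRing_localization I hCM P⟩,
    inferInstance, isIntegrallyClosed_multiReesAlgebra (K := FractionRing A) hI
      fun n ↦ hpair.isCompleteIdeal_prod Finset.univ n⟩

/-- If `I₁, …, I_r` are `𝔪`-primary ideals of a two-dimensional
excellent normal local domain over an algebraically closed field whose Rees algebras
are all Cohen–Macaulay normal domains, then the multi-Rees algebra
`A[I₁t₁, …, I_r t_r]` is a Cohen–Macaulay normal domain. -/
theorem stmt9 (k : Type*) [Field k] [IsAlgClosed k]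
    (A : Type*) [CommRing A] [IsDomain A] [IsNoetherianRing A] [IsLocalRing A]
    [Algebra k A] [IsIntegrallyClosed A]
    (hdim : ringKrullDim A = 2)
    (r : ℕ) (I : Fin r → Ideal A)
    (hprim : ∀ i, ∃ n : ℕ, IsLocalRing.maximalIdeal A ^ n ≤ I i)
    (hrees : ∀ i, IsCMNormalDomain (reesAlgebra (I i))) :
    IsCMNormalDomain (multiReesAlgebra I) := by
  have : Infinite k := inferInstance
  exact stmt9_general k A hdim r I hprim hrees
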